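/- arXiv:gr-qc/9709038 — 3 statements merged into one kernel-verified Lean document; each statement's English description precedes it below -/
import Mathlib

section
/- Let T₀ be a conformingly-marked tetrahedral mesh in which no tetrahedron is flagged, and for k = 0, 1, 2, …, let S_k ⊆ T_k be arbitrary and set T_{k+1} = LocalRefine(T_k, S_k). Then for each k, every tetrahedron of T_k has generation at most 3k. -/
noncomputable section
open scoped Classical

/-- Points of `ℝ³`. -/
abbrev Pt3 := EuclideanSpace ℝ (Fin 3)

/-- A marked tetrahedron: a vertex set `V` (a 4-element finset), a refinement edge `ref`
(a 2-element subset of `V`), an assignment `mark` of a marked edge to each face (3-element subset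
of `V`), a boolean flag, and a generation number. -/
structure MTet where
  V : Finset Pt3
  ref : Finset Pt3
  mark : Finset Pt3 → Finset Pt3
  flag : Bool
  gen : ℕ

/-- The closed tetrahedron itself: the convex hull of the vertices. -/
def MTet.body (τ : MTet) : Set Pt3 := convexHull ℝ (τ.V : Set Pt3)

/-- A valid marked tetrahedron: 4 affinely independent vertices, the refinement edge is an edge,
each face is assigned one of its edges as marked edge, and every face containing the refinement
edge has the refinement edge as its marked edge. -/
def MTet.Valid (τ : MTet) : Prop :=
  τ.V.card = 4 ∧ AffineIndependent ℝ (fun p : (τ.V : Set Pt3) => (p : Pt3)) ∧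
  τ.ref ⊆ τ.V ∧ τ.ref.card = 2 ∧
  ∀ F : Finset Pt3, F ⊆ τ.V → F.card = 3 →
    τ.mark F ⊆ F ∧ (τ.mark F).card = 2 ∧ (τ.ref ⊆ F → τ.mark F = τ.ref)

/-- A marked tetrahedron is planar if its four marked edges are coplanar. -/
def MTet.Planar (τ : MTet) : Prop :=
  Coplanar ℝ (⋃ F ∈ {F : Finset Pt3 | F ⊆ τ.V ∧ F.card = 3}, (τ.mark F : Set Pt3))

/-- The child of the marked tetrahedron `τ` corresponding to the endpoint `c` of the refinement
edge, produced by the algorithm `BisectTet`.  The new vertex `z` is the midpoint (centroid) of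
the refinement edge; the child's vertices are `z`, `c`, and the two vertices of `τ` not on the
refinement edge.  The child's refinement edge is the marked edge carried in `τ` by the inherited
face, which keeps its marked edge; each cut face is marked with its edge opposite `z`; the new
face is marked, in the planar-and-flagged case, with the edge joining `z` to the endpoint of the
child's refinement edge lying in the new face, and otherwise with its edge opposite `z`.  The
child is flagged iff `τ` is planar and unflagged, and its generation is one more than `τ`'s. -/
def MTet.child (τ : MTet) (c : Pt3) : MTet :=
  let z : Pt3 := τ.ref.centroid ℝ id
  let opp : Finset Pt3 := τ.V \ τ.ref
  let inh : Finset Pt3 := insert c opp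
  let newF : Finset Pt3 := insert z opp
  { V := insert z (insert c opp)
    ref := τ.mark inh
    mark := fun G =>
      if G = inh then τ.mark inh
      else if G = newF then
        if τ.Planar ∧ τ.flag = true then insert z (τ.mark inh ∩ opp) else opp
      else G.erase z
    flag := if τ.Planar ∧ τ.flag = false then true else false
    gen := τ.gen + 1 }

/-- `BisectTets T S`: replace each marked tetrahedron of `S` by its two children. -/
def bisectTets (T S : Set MTet) : Set MTet :=
  (T \ S) ∪ ⋃ τ ∈ S, {σ : MTet | ∃ c ∈ τ.ref, σ = τ.child c}

/-- `τ` has a hanging node in the mesh `T`: some vertex of a tetrahedron of `T` belongs to `τ`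
but is not a vertex of `τ`. -/
def HasHangingNode (T : Set MTet) (τ : MTet) : Prop :=
  ∃ σ ∈ T, ∃ ν ∈ σ.V, ν ∈ τ.body ∧ ν ∉ τ.V

/-- A mesh has no hanging nodes. -/
def NoHanging (T : Set MTet) : Prop := ∀ τ ∈ T, ¬ HasHangingNode T τ

/-- One round of `RefineToConformity`: bisect all tetrahedra having a hanging node.
(If there are none, the mesh is unchanged.) -/
def conformStep (T : Set MTet) : Set MTet :=
  bisectTets T {τ ∈ T | HasHangingNode T τ}

/-- `RefineToConformity`: repeatedly bisect all tetrahedra having a hanging node, recursing until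
no tetrahedron has a hanging node.  If the recursion terminates, the result is the first iterate
with no hanging nodes (equivalently, any sufficiently late iterate, since a mesh without hanging
nodes is a fixed point); if it does not terminate the value is junk (the input). -/
def refineToConformity (T : Set MTet) : Set MTet :=
  if h : ∃ N, NoHanging (conformStep^[N] T) then conformStep^[Nat.find h] T else T

/-- `LocalRefine T S = RefineToConformity (BisectTets T S)`. -/
def localRefine (T S : Set MTet) : Set MTet := refineToConformity (bisectTets T S)

/-- A (marked) mesh: a finite set of valid marked tetrahedra with pairwise disjoint interiors. -/
def IsMesh (T : Set MTet) : Prop :=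
  T.Finite ∧ (∀ τ ∈ T, τ.Valid) ∧
  ∀ τ ∈ T, ∀ σ ∈ T, τ ≠ σ → interior τ.body ∩ interior σ.body = ∅

/-- A mesh is conforming if the intersection of any two distinct tetrahedra in it is either
empty, a common vertex, a common edge, or a common face. -/
def Conforming (T : Set MTet) : Prop :=
  ∀ τ ∈ T, ∀ σ ∈ T, τ ≠ σ →
    τ.body ∩ σ.body = ∅ ∨
    (∃ v : Pt3, v ∈ τ.V ∧ v ∈ σ.V ∧ τ.body ∩ σ.body = {v}) ∨
    (∃ e : Finset Pt3, e.card = 2 ∧ e ⊆ τ.V ∧ e ⊆ σ.V ∧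
      τ.body ∩ σ.body = convexHull ℝ (e : Set Pt3)) ∨
    (∃ f : Finset Pt3, f.card = 3 ∧ f ⊆ τ.V ∧ f ⊆ σ.V ∧
      τ.body ∩ σ.body = convexHull ℝ (f : Set Pt3))

/-- A conformingly-marked mesh: a conforming marked mesh in which any face shared by two
tetrahedra is assigned the same marked edge by both. -/
def ConforminglyMarked (T : Set MTet) : Prop :=
  IsMesh T ∧ Conforming T ∧
  ∀ τ ∈ T, ∀ σ ∈ T, ∀ F : Finset Pt3, F.card = 3 → F ⊆ τ.V → F ⊆ σ.V → τ.mark F = σ.mark F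

/-!
Let `Q n` be the `n`-fold uniform bisection of the initial mesh. The point is that `Q (3k)` is again
an unflagged conformingly-marked mesh. Granting this, suppose that all tetrahedra of the current
mesh belong to some `Q n` with `n ≤ 3k`. Bisecting some of them gives tetrahedra of `Q n` with
`n ≤ 3k + 1`. During the refinement to conformity no tetrahedron of generation `3(k+1)` is ever
bisected: vertices of `Q n` remain vertices of `Q (3(k+1))`, and this mesh is conforming, so such a
tetrahedron has no hanging node (`not_hanging`). This also holds for nonterminating refinements,
whose value is the input.

Conformity of `Q (3k)` is proved by induction on `k` (`Inv.step`). An unflagged tetrahedron with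
refinement edge `ab` and marked edge `pq` on the face `acd = pqs` is bisected at the midpoints of
`ab`, then `pq`, then `ps` (or `qs`), and its great-grandchildren are unflagged (`Good.out`). On
each face these three bisections induce the same subdivision: the marked edge is bisected first,
then the two other edges; and the resulting small faces are marked in a way that depends on the
face and its marked edge only (`Out.face`). On each edge they induce one bisection (`Out.line`).
Hence subdivisions and markings of neighbouring tetrahedra match (`Out.match`).

Points are handled through barycentric weights. A collection of tetrahedra is conforming if a common
point of two of them has the same weights in both, and bisection of an edge `ab` acts on weights by
the explicit operation `bis a b`. In this language the subdivision of a face is an identity between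
compositions of three such operations, and geometry enters only through affine independence.
-/

namespace Bisection


/-! ### Weights and the subdivision of weights -/

/-- A finitely supported real weight on points of space. Nonnegative weights play the role of
(unnormalised) barycentric coordinates. -/
abbrev Wt := Pt3 →₀ ℝ

/-- The total mass and the weighted sum of points of a weight. Two nonnegative weights of total mass
one represent the same point exactly when `L` agrees on them. -/
def L : Wt →ₗ[ℝ] ℝ × Pt3 := Finsupp.linearCombination ℝ (fun p => ((1 : ℝ), p))

/-- Affine independence of a finite set of points, phrased with weights; see `ind_affine`. -/
def Ind (V : Finset Pt3) : Prop := ∀ w : Wt, (∀ p ∉ V, w p = 0) → L w = 0 → w = 0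

/-- `w` is nonnegative and supported in `V`: it represents a nonnegative multiple of a point of the
convex hull of `V`. -/
def Rep (V : Finset Pt3) (w : Wt) : Prop := (∀ p, 0 ≤ w p) ∧ ∀ p ∉ V, w p = 0

/-- The midpoint of two points; a name of its own keeps `simp` from unfolding it. -/
def mid (a b : Pt3) : Pt3 := midpoint ℝ a b

/-- Bisection of the edge `ab` at the level of weights: the mass `min (w a) (w b)` common to both
endpoints moves to the midpoint. If `w` represents a point of a tetrahedron with refinement edge
`ab`, then `bis a b w` represents the same point in the child containing it. -/
def bis (a b : Pt3) (w : Wt) : Wt :=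
  w + (Finsupp.single (mid a b) (2 * min (w a) (w b)) - Finsupp.single a (min (w a) (w b))
    - Finsupp.single b (min (w a) (w b)))

theorem mid_comm (a b : Pt3) : mid a b = mid b a := midpoint_comm a b

theorem two_smul_mid (a b : Pt3) : (2 : ℝ) • mid a b = a + b := by
  rw [mid, midpoint_eq_smul_add, smul_smul]; norm_num

theorem L_single (p : Pt3) (r : ℝ) : L (Finsupp.single p r) = (r, r • p) := by
  simp [L, Finsupp.linearCombination_single]

theorem L_exchange (a b : Pt3) (r : ℝ) :
    L (Finsupp.single (mid a b) (2 * r) - Finsupp.single a r - Finsupp.single b r) = 0 := by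
  simp only [map_sub, L_single, mul_comm 2 r, mul_smul, two_smul_mid]
  ext1
  · simp; ring
  · simp

theorem L_bis (a b : Pt3) (w : Wt) : L (bis a b w) = L w := by
  rw [bis, map_add, L_exchange, add_zero]

theorem Ind.unique {V : Finset Pt3} (h : Ind V) {w w' : Wt} (hw : ∀ p ∉ V, w p = 0)
    (hw' : ∀ p ∉ V, w' p = 0) (e : L w = L w') : w = w' := by
  refine sub_eq_zero.1 (h (w - w') (fun p hp => ?_) ?_)
  · simp [hw p hp, hw' p hp]
  · rw [map_sub, e, sub_self]

theorem mid_ne {V : Finset Pt3} (h : Ind V) {a b c : Pt3} (ha : a ∈ V) (hb : b ∈ V) (hc : c ∈ V)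
    (hab : a ≠ b) : mid a b ≠ c := by
  intro e
  have h1 : Finsupp.single a (1 : ℝ) + Finsupp.single b 1 = Finsupp.single c (2 : ℝ) := by
    apply h.unique
    · intro p hp
      have h1 : a ≠ p := fun h => hp (h ▸ ha)
      have h2 : b ≠ p := fun h => hp (h ▸ hb)
      simp [h1, h2]
    · intro p hp
      have h1 : c ≠ p := fun h => hp (h ▸ hc)
      simp [h1]
    · rw [map_add, L_single, L_single, L_single, ← e, two_smul_mid]
      ext1
      · norm_num
      · simp
  have e1 := DFunLike.congr_fun h1 a
  have e2 := DFunLike.congr_fun h1 b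
  simp only [Finsupp.add_apply, Finsupp.single_apply] at e1 e2
  by_cases h3 : c = a <;> by_cases h4 : c = b <;> simp_all

theorem mid_inj {V : Finset Pt3} (h : Ind V) {a b c d : Pt3} (ha : a ∈ V) (hb : b ∈ V)
    (hc : c ∈ V) (hd : d ∈ V) (e : mid a b = mid c d) :
    (a = c ∧ b = d) ∨ (a = d ∧ b = c) := by
  have h1 : Finsupp.single a (1 : ℝ) + Finsupp.single b 1 =
      Finsupp.single c (1 : ℝ) + Finsupp.single d 1 := by
    apply h.unique
    · intro p hp
      have h1 : a ≠ p := fun h => hp (h ▸ ha)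
      have h2 : b ≠ p := fun h => hp (h ▸ hb)
      simp [h1, h2]
    · intro p hp
      have h1 : c ≠ p := fun h => hp (h ▸ hc)
      have h2 : d ≠ p := fun h => hp (h ▸ hd)
      simp [h1, h2]
    · rw [map_add, map_add, L_single, L_single, L_single, L_single]
      have := congrArg ((2 : ℝ) • ·) e
      simp only [two_smul_mid] at this
      ext1
      · simp
      · simpa using this
  have e1 := DFunLike.congr_fun h1 a
  have e2 := DFunLike.congr_fun h1 b
  simp only [Finsupp.add_apply, Finsupp.single_apply] at e1 e2
  by_cases h3 : c = a <;> by_cases h4 : c = b <;> by_cases h5 : d = a <;> by_cases h6 : d = b <;>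
    grind

theorem bis_comm (a b : Pt3) (w : Wt) : bis a b w = bis b a w := by
  rw [bis, bis, mid_comm a b, min_comm (w a)]; abel

theorem bis_trivial {a b : Pt3} {w : Wt} (hw : ∀ p, 0 ≤ w p) (h : w a = 0 ∨ w b = 0) :
    bis a b w = w := by
  have : min (w a) (w b) = 0 := by
    rcases h with h | h <;> simp [h, hw]
  simp [bis, this]

theorem bis_apply_ne {a b p : Pt3} (w : Wt) (ha : p ≠ a) (hb : p ≠ b) (hm : p ≠ mid a b) :
    bis a b w p = w p := by
  simp [bis, ha.symm, hb.symm, hm.symm]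

theorem bis_apply_left {a b : Pt3} (w : Wt) (hab : a ≠ b) (hm : mid a b ≠ a) :
    bis a b w a = w a - min (w a) (w b) := by
  simp [bis, hab.symm, hm]; ring

theorem bis_apply_right {a b : Pt3} (w : Wt) (hab : a ≠ b) (hm : mid a b ≠ b) :
    bis a b w b = w b - min (w a) (w b) := by
  simp [bis, hab, hm]; ring

theorem bis_apply_mid {a b : Pt3} (w : Wt) (ha : mid a b ≠ a) (hm : mid a b ≠ b) :
    bis a b w (mid a b) = w (mid a b) + 2 * min (w a) (w b) := by
  simp [bis, ha.symm, hm.symm]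

theorem bis_nonneg {a b : Pt3} {w : Wt} (hab : a ≠ b) (ha : mid a b ≠ a) (hb : mid a b ≠ b)
    (hw : ∀ p, 0 ≤ w p) (p : Pt3) : 0 ≤ bis a b w p := by
  by_cases h1 : p = a
  · subst h1; rw [bis_apply_left w hab ha]; simp
  by_cases h2 : p = b
  · subst h2; rw [bis_apply_right w hab hb]; simp
  by_cases h3 : p = mid a b
  · subst h3; rw [bis_apply_mid w ha hb]
    have := le_min (hw a) (hw b)
    linarith [hw (mid a b)]
  rw [bis_apply_ne w h1 h2 h3]; exact hw p

/-- Subdivision of the weight on a triangle `pqs` with marked edge `pq`: the edge `pq` is bisected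
first, then the two remaining edges. -/
def tri (p q s : Pt3) (w : Wt) : Wt := bis q s (bis p s (bis p q w))

/-! ### Named vertices of a marked tetrahedron and of its children -/

/-- `τ` is a nondegenerate tetrahedron with vertices `a, b, c, d` and refinement edge `ab`. -/
structure Core (τ : MTet) (a b c d : Pt3) : Prop where
  ind : Ind τ.V
  V : τ.V = {a, b, c, d}
  ref : τ.ref = {a, b}
  ab : a ≠ b
  ac : a ≠ c
  ad : a ≠ d
  bc : b ≠ c
  bd : b ≠ d
  cd : c ≠ d

/-- `τ` has vertices `a, b, c, d`, refinement edge `ab`, flag `f`, and the faces `acd` and `bcd` carry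
the marked edges `m1` and `m2`. -/
structure Is (τ : MTet) (a b c d : Pt3) (m1 m2 : Finset Pt3) (f : Bool) : Prop
    extends Core τ a b c d where
  abc : τ.mark {a, b, c} = {a, b}
  abd : τ.mark {a, b, d} = {a, b}
  acd : τ.mark {a, c, d} = m1
  bcd : τ.mark {b, c, d} = m2
  flag : τ.flag = f

theorem Core.swap {τ : MTet} {a b c d : Pt3} (h : Core τ a b c d) : Core τ b a c d where
  ind := h.ind
  V := by rw [h.V, Finset.insert_comm]
  ref := by rw [h.ref, Finset.pair_comm]
  ab := h.ab.symm
  ac := h.bc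
  ad := h.bd
  bc := h.ac
  bd := h.ad
  cd := h.cd

theorem Is.swap {τ : MTet} {a b c d : Pt3} {m1 m2 : Finset Pt3} {f : Bool}
    (h : Is τ a b c d m1 m2 f) : Is τ b a c d m2 m1 f where
  toCore := h.toCore.swap
  abc := by rw [Finset.insert_comm, h.abc, Finset.pair_comm]
  abd := by rw [Finset.insert_comm, h.abd, Finset.pair_comm]
  acd := h.bcd
  bcd := h.acd
  flag := h.flag

theorem Core.zne {τ : MTet} {a b c d : Pt3} (h : Core τ a b c d) :
    mid a b ≠ a ∧ mid a b ≠ b ∧ mid a b ≠ c ∧ mid a b ≠ d := by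
  have ha : a ∈ τ.V := by simp [h.V]
  have hb : b ∈ τ.V := by simp [h.V]
  exact ⟨mid_ne h.ind ha hb ha h.ab, mid_ne h.ind ha hb hb h.ab,
    mid_ne h.ind ha hb (by simp [h.V]) h.ab, mid_ne h.ind ha hb (by simp [h.V]) h.ab⟩

theorem Core.sdiff {τ : MTet} {a b c d : Pt3} (h : Core τ a b c d) : τ.V \ τ.ref = {c, d} := by
  have := h.ac; have := h.ad; have := h.bc; have := h.bd
  rw [h.V, h.ref]; ext p
  simp only [Finset.mem_sdiff, Finset.mem_insert, Finset.mem_singleton]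
  grind

theorem centroid_pair' (a b : Pt3) : ({a, b} : Finset Pt3).centroid ℝ id = mid a b := by
  rw [Finset.centroid_pair, mid, midpoint_eq_smul_add]
  simp only [id, vsub_eq_sub, vadd_eq_add, invOf_eq_inv]
  module

theorem Core.child_V {τ : MTet} {a b c d : Pt3} (h : Core τ a b c d) :
    (τ.child a).V = {mid a b, a, c, d} := by
  simp only [MTet.child, h.sdiff]
  rw [h.ref, centroid_pair']

theorem child_gen (τ : MTet) (a : Pt3) : (τ.child a).gen = τ.gen + 1 := rfl

theorem Core.child_ref {τ : MTet} {a b c d : Pt3} (h : Core τ a b c d) :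
    (τ.child a).ref = τ.mark {a, c, d} := by
  simp only [MTet.child, h.sdiff]

theorem Core.child_inh {τ : MTet} {a b c d : Pt3} (h : Core τ a b c d) :
    (τ.child a).mark {a, c, d} = τ.mark {a, c, d} := by
  simp only [MTet.child, h.sdiff]
  simp

theorem Core.child_new {τ : MTet} {a b c d : Pt3} (h : Core τ a b c d) :
    (τ.child a).mark {mid a b, c, d} =
      if τ.Planar ∧ τ.flag = true then insert (mid a b) (τ.mark {a, c, d} ∩ {c, d})
      else {c, d} := by
  simp only [MTet.child, h.sdiff]
  rw [h.ref, centroid_pair']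
  have hz := h.zne
  rw [if_neg, if_pos rfl]
  intro e
  have : mid a b ∈ ({a, c, d} : Finset Pt3) := by rw [← e]; simp
  simp [hz] at this

theorem Core.child_cut1 {τ : MTet} {a b c d : Pt3} (h : Core τ a b c d) :
    (τ.child a).mark {mid a b, a, c} = {a, c} := by
  simp only [MTet.child, h.sdiff]
  rw [h.ref, centroid_pair']
  have hz := h.zne
  rw [if_neg, if_neg]
  · rw [Finset.erase_insert]; simp [hz]
  · intro e
    have : a ∈ ({mid a b, c, d} : Finset Pt3) := by rw [← e]; simp
    simp [hz.1.symm, h.ac, h.ad] at this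
  · intro e
    have : mid a b ∈ ({a, c, d} : Finset Pt3) := by rw [← e]; simp
    simp [hz] at this

theorem Core.swap34 {τ : MTet} {a b c d : Pt3} (h : Core τ a b c d) : Core τ a b d c where
  ind := h.ind
  V := by rw [h.V, Finset.pair_comm c]
  ref := h.ref
  ab := h.ab
  ac := h.ad
  ad := h.ac
  bc := h.bd
  bd := h.bc
  cd := h.cd.symm

theorem Core.child_cut2 {τ : MTet} {a b c d : Pt3} (h : Core τ a b c d) :
    (τ.child a).mark {mid a b, a, d} = {a, d} := h.swap34.child_cut1

theorem child_flag (τ : MTet) (a : Pt3) :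
    (τ.child a).flag = if τ.Planar ∧ τ.flag = false then true else false := by
  simp only [MTet.child]

theorem Core.child_ind {τ : MTet} {a b c d : Pt3} (h : Core τ a b c d) : Ind (τ.child a).V := by
  intro w hw hL
  obtain ⟨hza, hzb, hzc, hzd⟩ := h.zne
  rw [h.child_V] at hw
  have hab := h.ab
  set w' : Wt := w - (Finsupp.single (mid a b) (2 * (w (mid a b) / 2))
    - Finsupp.single a (w (mid a b) / 2) - Finsupp.single b (w (mid a b) / 2)) with hw'
  have e : w' = 0 := by
    apply h.ind
    · intro p hp
      rw [h.V] at hp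
      simp only [Finset.mem_insert, Finset.mem_singleton, not_or] at hp
      obtain ⟨h1, h2, h3, h4⟩ := hp
      by_cases hz : p = mid a b
      · subst hz
        simp [hw', Ne.symm h1, Ne.symm h2]; ring
      · simp [hw', Ne.symm h1, Ne.symm h2, Ne.symm hz]
        exact hw p (by simp [*])
    · rw [hw', map_sub, L_exchange, hL, sub_zero]
  have eb : w b + w (mid a b) / 2 = 0 := by
    have := DFunLike.congr_fun e b
    simpa [hw', hza, hzb, hab] using this
  rw [hw b (by simp [hab.symm, hzb.symm, h.bc, h.bd])] at eb
  have hz0 : w (mid a b) = 0 := by linarith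
  rw [hw', hz0] at e
  simpa using e

/-- A weight on a child comes from a weight on the parent, of the same point, in which the endpoint kept
by the child weighs at least as much as the other endpoint; strictly more if the given weight is
positive at all vertices of the child. -/
theorem Core.step_up {τ : MTet} {a b c d : Pt3} (h : Core τ a b c d) {w₁ : Wt}
    (hw : Rep (τ.child a).V w₁) :
    ∃ w, Rep τ.V w ∧ L w = L w₁ ∧ w b ≤ w a ∧ bis a b w = w₁ ∧
      ((∀ p ∈ (τ.child a).V, 0 < w₁ p) → (∀ p ∈ τ.V, 0 < w p) ∧ w b < w a) := by
  obtain ⟨hza, hzb, hzc, hzd⟩ := h.zne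
  rw [h.child_V] at hw ⊢
  obtain ⟨h0, hw⟩ := hw
  have hab := h.ab
  have hac := h.ac; have had := h.ad; have hbc := h.bc; have hbd := h.bd
  set r := w₁ (mid a b) / 2 with hr
  have hr0 : 0 ≤ r := by have := h0 (mid a b); positivity
  set w : Wt := w₁ - (Finsupp.single (mid a b) (2 * r)
    - Finsupp.single a r - Finsupp.single b r) with hw'
  have b0 : w₁ b = 0 := hw b (by simp [hab.symm, hzb.symm, h.bc, h.bd])
  have ea : w a = w₁ a + r := by simp [hw', hza, hab.symm]
  have eb : w b = r := by simp [hw', hzb, hab, b0]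
  have ez : w (mid a b) = 0 := by simp [hw', hza.symm, hzb.symm, hr]; ring
  have eo : ∀ p, p ≠ a → p ≠ b → p ≠ mid a b → w p = w₁ p := by
    intro p h1 h2 h3
    simp [hw', h1.symm, h2.symm, h3.symm]
  have hm : min (w a) (w b) = r := by
    rw [ea, eb]; apply min_eq_right; linarith [h0 a]
  refine ⟨w, ⟨?_, ?_⟩, ?_, ?_, ?_, ?_⟩
  · intro p
    by_cases h1 : p = a
    · subst h1; rw [ea]; linarith [h0 p]
    by_cases h2 : p = b
    · subst h2; rw [eb]; exact hr0
    by_cases h3 : p = mid a b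
    · rw [h3, ez]
    rw [eo p h1 h2 h3]; exact h0 p
  · intro p hp
    rw [h.V] at hp
    simp only [Finset.mem_insert, Finset.mem_singleton, not_or] at hp
    by_cases h3 : p = mid a b
    · rw [h3, ez]
    rw [eo p hp.1 hp.2.1 h3]; exact hw p (by simp [*])
  · rw [hw', map_sub, L_exchange, sub_zero]
  · rw [ea, eb]; linarith [h0 a]
  · rw [bis, hm, hw']; abel
  · intro hpos
    have hz := hpos (mid a b) (by simp)
    have hr1 : 0 < r := by positivity
    have ha := hpos a (by simp)
    refine ⟨?_, by rw [ea, eb]; linarith⟩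
    intro p hp
    rw [h.V] at hp
    simp only [Finset.mem_insert, Finset.mem_singleton] at hp
    rcases hp with rfl | rfl | rfl | rfl
    · linarith
    · linarith
    · rw [eo _ hac.symm hbc.symm hzc.symm]; exact hpos _ (by simp)
    · rw [eo _ had.symm hbd.symm hzd.symm]; exact hpos _ (by simp)

theorem ind_affine {V : Finset Pt3} :
    Ind V ↔ AffineIndependent ℝ (fun p : (V : Set Pt3) => (p : Pt3)) := by
  rw [affineIndependent_iff]
  constructor
  · intro h s w hs hw e he
    set u : Wt := ∑ i ∈ s, Finsupp.single (i : Pt3) (w i) with hu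
    have h0 : u = 0 := by
      apply h
      · intro p hp
        rw [hu, Finsupp.finsetSum_apply]
        refine Finset.sum_eq_zero fun i _ => ?_
        have : (i : Pt3) ≠ p := fun h => hp (h ▸ i.2)
        simp [this]
      · rw [hu, map_sum]
        simp only [L_single]
        ext1
        · simpa [Prod.fst_sum] using hs
        · simpa [Prod.snd_sum] using hw
    have h1 := DFunLike.congr_fun h0 (e : Pt3)
    rw [hu, Finsupp.finsetSum_apply, Finset.sum_eq_single e] at h1
    · simpa using h1
    · intro i _ hi
      have : (i : Pt3) ≠ e := fun h => hi (Subtype.ext h)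
      simp [this]
    · intro h; exact absurd he h
  · intro h w hw hL
    have hs : w.support ⊆ V := by
      intro p hp
      by_contra hpV
      exact (Finsupp.mem_support_iff.1 hp) (hw p hpV)
    rw [L, Finsupp.linearCombination_apply, Finsupp.sum_of_support_subset _ hs _ (by simp)] at hL
    have e1 := congrArg Prod.fst hL
    have e2 := congrArg Prod.snd hL
    simp only [Prod.fst_sum, Prod.snd_sum, Prod.smul_fst, Prod.smul_snd, smul_eq_mul, mul_one,
      Prod.fst_zero, Prod.snd_zero] at e1 e2
    ext p
    by_cases hp : p ∈ V
    · have := h Finset.univ (fun i : (V : Set Pt3) => w i) ?_ ?_ ⟨p, hp⟩ (Finset.mem_univ _)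
      · simpa using this
      · rw [← e1]; exact Finset.sum_coe_sort V (fun i => w i)
      · rw [← e2]; exact Finset.sum_coe_sort V (fun i => w i • i)
    · simpa using hw p hp

theorem not_coplanar {V : Finset Pt3} (h : Ind V) (hc : V.card = 4) : ¬ Coplanar ℝ (V : Set Pt3) := by
  intro hcop
  have hA := ind_affine.1 h
  have h1 := hA.finrank_vectorSpan (n := 3) (by simp [hc])
  rw [Subtype.range_coe] at h1
  have h2 := (coplanar_iff_finrank_le_two).1 hcop
  omega

/-- A tetrahedron is planar as soon as three points carry all of its marked edges. -/
theorem planar_sub {τ : MTet} {p q s : Pt3}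
    (h : ∀ F ⊆ τ.V, F.card = 3 → τ.mark F ⊆ {p, q, s}) : τ.Planar := by
  refine (coplanar_triple ℝ p q s).subset ?_
  intro x hx
  simp only [Set.mem_iUnion, Set.mem_ofPred_eq] at hx
  obtain ⟨F, ⟨h1, h2⟩, h3⟩ := hx
  simpa using h F h1 h2 h3

theorem face_cases {α : Type*} [DecidableEq α] {a b c d : α} {F : Finset α}
    (hV : ({a, b, c, d} : Finset α).card = 4)
    (hF : F ⊆ {a, b, c, d}) (hc : F.card = 3) :
    F = {a, b, c} ∨ F = {a, b, d} ∨ F = {a, c, d} ∨ F = {b, c, d} := by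
  have key : ∀ x y z : α, (∀ t ∈ F, t = x ∨ t = y ∨ t = z) → F = {x, y, z} := fun x y z h =>
    Finset.eq_of_subset_of_card_le (fun t ht => by simpa using h t ht)
      (by rw [hc]; exact Finset.card_le_three)
  have hF' : ∀ t ∈ F, t = a ∨ t = b ∨ t = c ∨ t = d := fun t ht => by simpa using hF ht
  by_cases h1 : d ∈ F
  · by_cases h2 : c ∈ F
    · by_cases h3 : b ∈ F
      · by_cases h4 : a ∈ F
        · have : ({a, b, c, d} : Finset α) ⊆ F := by
            intro x hx
            simp only [Finset.mem_insert, Finset.mem_singleton] at hx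
            rcases hx with rfl | rfl | rfl | rfl <;> assumption
          have := Finset.card_le_card this
          omega
        · right; right; right; exact key _ _ _ fun t ht => by have := hF' t ht; grind
      · right; right; left; exact key _ _ _ fun t ht => by have := hF' t ht; grind
    · right; left; exact key _ _ _ fun t ht => by have := hF' t ht; grind
  · left; exact key _ _ _ fun t ht => by have := hF' t ht; grind

theorem Core.card {τ : MTet} {a b c d : Pt3} (h : Core τ a b c d) :
    ({a, b, c, d} : Finset Pt3).card = 4 := by
  simp [h.ab, h.ac, h.ad, h.bc, h.bd, h.cd]

/-! ### The three successive bisections of an unflagged tetrahedron -/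

theorem edge_cases {α : Type*} [DecidableEq α] {a b c : α} {m : Finset α} (ha : a ≠ b) (hb : a ≠ c)
    (hcc : b ≠ c) (hm : m ⊆ {a, b, c}) (hc : m.card = 2) : m = {a, b} ∨ m = {a, c} ∨ m = {b, c} := by
  have key : ∀ x y : α, (∀ t ∈ m, t = x ∨ t = y) → m = {x, y} := fun x y h =>
    Finset.eq_of_subset_of_card_le (fun t ht => by simpa using h t ht)
      (by rw [hc]; exact Finset.card_le_two)
  have hm' : ∀ t ∈ m, t = a ∨ t = b ∨ t = c := fun t ht => by simpa using hm ht
  by_cases h1 : c ∈ m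
  · by_cases h2 : b ∈ m
    · by_cases h3 : a ∈ m
      · have : ({a, b, c} : Finset α) ⊆ m := by
          intro x hx
          simp only [Finset.mem_insert, Finset.mem_singleton] at hx
          rcases hx with rfl | rfl | rfl <;> assumption
        have h4 := Finset.card_le_card this
        rw [Finset.card_eq_three.2 ⟨a, b, c, ha, hb, hcc, rfl⟩] at h4
        omega
      · right; right; exact key _ _ fun t ht => by have := hm' t ht; grind
    · right; left; exact key _ _ fun t ht => by have := hm' t ht; grind
  · left; exact key _ _ fun t ht => by have := hm' t ht; grind

theorem mark_perm {τ : MTet} {F G m n : Finset Pt3} (h : τ.mark F = m)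
    (e : ∀ x, x ∈ F ↔ x ∈ G) (e' : ∀ x, x ∈ m ↔ x ∈ n) : τ.mark G = n := by
  rw [← Finset.ext e, ← Finset.ext e']; exact h

/-- Naming of the vertices of a child once its refinement edge is known. -/
theorem Core.mk_child {τ : MTet} {a b c d p q s t : Pt3} (h : Core τ a b c d)
    (e : ∀ x, (x = mid a b ∨ x = a ∨ x = c ∨ x = d) ↔ (x = p ∨ x = q ∨ x = s ∨ x = t))
    (hr : τ.mark {a, c, d} = {p, q})
    (hpq : p ≠ q) (hps : p ≠ s) (hpt : p ≠ t) (hqs : q ≠ s) (hqt : q ≠ t) (hst : s ≠ t) :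
    Core (τ.child a) p q s t where
  ind := h.child_ind
  V := by
    rw [h.child_V]; ext x
    simp only [Finset.mem_insert, Finset.mem_singleton]; exact e x
  ref := by rw [h.child_ref, hr]
  ab := hpq
  ac := hps
  ad := hpt
  bc := hqs
  bd := hqt
  cd := hst

/-- An unflagged marked tetrahedron with all marked edges lying in their faces. This is the state
that recurs after every three bisections. -/
def Good (τ : MTet) : Prop := ∃ a b c d m1 m2, Is τ a b c d m1 m2 false ∧
  (m1 ⊆ {a, c, d} ∧ m1.card = 2) ∧ m2 ⊆ {b, c, d} ∧ m2.card = 2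

theorem step1_aux {τ : MTet} {a b c d : Pt3} {m1 m2 : Finset Pt3}
    (h : Is τ a b c d m1 m2 false) :
    (τ.child a).mark {mid a b, c, d} = {c, d} ∧ (τ.child a).flag = decide τ.Planar := by
  refine ⟨?_, ?_⟩
  · rw [h.child_new, if_neg]; simp [h.flag]
  · rw [child_flag, h.flag]; by_cases hp : τ.Planar <;> simp [hp]

/-- First bisection: a child of an unflagged tetrahedron has all its marked edges in the old face
`pqs`, and is flagged exactly when the parent is planar. -/
theorem step1 {τ : MTet} {a b c d : Pt3} {m1 m2 : Finset Pt3}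
    (h : Is τ a b c d m1 m2 false) (hm : m1 ⊆ {a, c, d}) (hm2 : m1.card = 2) :
    ∃ p q s, (∀ x, (x = p ∨ x = q ∨ x = s) ↔ (x = a ∨ x = c ∨ x = d)) ∧ m1 = {p, q} ∧
      Is (τ.child a) p q (mid a b) s {p, s} {q, s} (decide τ.Planar) := by
  obtain ⟨hza, hzb, hzc, hzd⟩ := h.zne
  obtain ⟨h1, hf⟩ := step1_aux h
  have h2 := h.child_inh
  rw [h.acd] at h2
  rcases edge_cases h.ac h.ad h.cd hm hm2 with rfl | rfl | rfl
  · refine ⟨a, c, d, fun x => Iff.rfl, rfl, ?_⟩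
    refine { toCore := h.mk_child (fun x => by simp only [or_comm, or_left_comm]) h.acd h.ac hza.symm h.ad hzc.symm h.cd hzd
             abc := mark_perm h.child_cut1 ?_ ?_
             abd := mark_perm h2 ?_ ?_
             acd := mark_perm h.child_cut2 ?_ ?_
             bcd := mark_perm h1 ?_ ?_
             flag := hf } <;>
    · intro x; simp only [Finset.mem_insert, Finset.mem_singleton, or_comm, or_left_comm]
  · refine ⟨a, d, c, fun x => by simp only [or_comm, or_left_comm], rfl, ?_⟩
    refine { toCore := h.mk_child (fun x => by simp only [or_comm, or_left_comm]) h.acd h.ad hza.symm h.ac hzd.symm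
              h.cd.symm hzc
             abc := mark_perm h.child_cut2 ?_ ?_
             abd := mark_perm h2 ?_ ?_
             acd := mark_perm h.child_cut1 ?_ ?_
             bcd := mark_perm h1 ?_ ?_
             flag := hf } <;>
    · intro x; simp only [Finset.mem_insert, Finset.mem_singleton, or_comm, or_left_comm]
  · refine ⟨c, d, a, fun x => by simp only [or_comm, or_left_comm], rfl, ?_⟩
    refine { toCore := h.mk_child (fun x => by simp only [or_comm, or_left_comm]) h.acd h.cd hzc.symm h.ac.symm hzd.symm
              h.ad.symm hza
             abc := mark_perm h1 ?_ ?_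
             abd := mark_perm h2 ?_ ?_
             acd := mark_perm h.child_cut1 ?_ ?_
             bcd := mark_perm h.child_cut2 ?_ ?_
             flag := hf } <;>
    · intro x; simp only [Finset.mem_insert, Finset.mem_singleton, or_comm, or_left_comm]

/-- Planarity from an explicit triple of vertices carrying the marked edges. -/
theorem Is.planar {τ : MTet} {a b c d x y z : Pt3} {m1 m2 : Finset Pt3} {f : Bool}
    (h : Is τ a b c d m1 m2 f) (h0 : ({a, b} : Finset Pt3) ⊆ {x, y, z}) (h1 : m1 ⊆ {x, y, z})
    (h2 : m2 ⊆ {x, y, z}) : τ.Planar := by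
  apply planar_sub (p := x) (q := y) (s := z)
  intro F hF hc
  rw [h.V] at hF
  rcases face_cases h.card hF hc with rfl | rfl | rfl | rfl
  · rw [h.abc]; exact h0
  · rw [h.abd]; exact h0
  · rw [h.acd]; exact h1
  · rw [h.bcd]; exact h2

/-- If the four marked edges cover all four vertices, they are not coplanar. -/
theorem Is.not_planar {τ : MTet} {a b c d : Pt3} {m1 m2 : Finset Pt3} {f : Bool}
    (h : Is τ a b c d m1 m2 f) (hc : c ∈ m1 ∨ c ∈ m2) (hd : d ∈ m1 ∨ d ∈ m2) : ¬ τ.Planar := by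
  intro hp
  have hcard : τ.V.card = 4 := by rw [h.V]; exact h.card
  refine not_coplanar h.ind hcard (hp.subset ?_)
  have key : ∀ F m : Finset Pt3, F ⊆ τ.V → F.card = 3 → τ.mark F = m → ∀ x ∈ m,
      x ∈ ⋃ F ∈ {F : Finset Pt3 | F ⊆ τ.V ∧ F.card = 3}, (τ.mark F : Set Pt3) := by
    intro F m hF hc hm x hx
    simp only [Set.mem_iUnion, Set.mem_ofPred_eq]
    exact ⟨F, ⟨hF, hc⟩, by rw [hm]; exact hx⟩
  have k1 := key {a, b, c} _ (by rw [h.V]; intro x; simp; tauto)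
    (Finset.card_eq_three.2 ⟨a, b, c, h.ab, h.ac, h.bc, rfl⟩) h.abc
  have k3 := key {a, c, d} _ (by rw [h.V]; intro x; simp; tauto)
    (Finset.card_eq_three.2 ⟨a, c, d, h.ac, h.ad, h.cd, rfl⟩) h.acd
  have k4 := key {b, c, d} _ (by rw [h.V]; intro x; simp; tauto)
    (Finset.card_eq_three.2 ⟨b, c, d, h.bc, h.bd, h.cd, rfl⟩) h.bcd
  intro x hx
  rw [h.V] at hx
  simp only [Finset.coe_insert, Finset.coe_singleton, Set.mem_insert_iff,
    Set.mem_singleton_iff] at hx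
  rcases hx with rfl | rfl | rfl | rfl
  · exact k1 _ (by simp)
  · exact k1 _ (by simp)
  · exact hc.elim (k3 _) (k4 _)
  · exact hd.elim (k3 _) (k4 _)

/-- Second bisection: the grandchild gets the flag opposite to that of the child, since the child is
planar. -/
theorem step2 {σ : MTet} {p q z s : Pt3} {f : Bool} (h : Is σ p q z s {p, s} {q, s} f) :
    Is (σ.child p) p s (mid p q) z {p, z} (if f then {mid p q, s} else {z, s}) (!f) := by
  obtain ⟨hya, hyb, hyc, hyd⟩ := h.zne
  have hp : σ.Planar := h.planar (x := p) (y := q) (z := s) (by intro x; simp only [Finset.mem_insert, Finset.mem_singleton]; rintro (h | h) <;> simp only [h, true_or, or_true])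
    (by intro x; simp only [Finset.mem_insert, Finset.mem_singleton]; rintro (h | h) <;> simp only [h, true_or, or_true]) (by intro x; simp only [Finset.mem_insert, Finset.mem_singleton]; rintro (h | h) <;> simp only [h, true_or, or_true])
  have h1 := h.child_new
  have h2 := h.child_inh
  have hi : ({p, s} ∩ {z, s} : Finset Pt3) = {s} := by
    ext x; simp only [Finset.mem_inter, Finset.mem_insert, Finset.mem_singleton]
    have := h.ac; constructor
    · rintro ⟨rfl | rfl, h | h⟩ <;> simp_all
    · rintro rfl; simp
  have h1' : (σ.child p).mark {mid p q, z, s} = if f then {mid p q, s} else {z, s} := by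
    rw [h1, h.acd, hi, h.flag]; simp [hp]
  rw [h.acd] at h2
  refine { toCore := h.mk_child (fun x => by simp only [or_comm, or_left_comm]) h.acd h.ad hya.symm h.ac hyd.symm
              h.cd.symm hyc
           abc := mark_perm h.child_cut2 ?_ ?_
           abd := mark_perm h2 ?_ ?_
           acd := mark_perm h.child_cut1 ?_ ?_
           bcd := mark_perm h1' ?_ ?_
           flag := ?_ }
  case refine_9 =>
    rw [child_flag, h.flag]; cases f <;> simp [hp]
  all_goals
    intro x
  case refine_8 => rfl
  all_goals simp only [Finset.mem_insert, Finset.mem_singleton, or_comm, or_left_comm]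

/-- Third bisection, child at `p`, the endpoint of the marked edge `pq`. The grandchild is planar
exactly when it is flagged, so both cases end unflagged. -/
theorem step3a {ρ : MTet} {p s y z : Pt3} {f : Bool}
    (h : Is ρ p s y z {p, z} (if f then {y, s} else {z, s}) (!f)) :
    Is (ρ.child p) p z (mid p s) y {p, y} (if f then {y, z} else {mid p s, z}) false := by
  obtain ⟨hya, hyb, hyc, hyd⟩ := h.zne
  have h2 := h.child_inh
  rw [h.acd] at h2
  have h1' : (ρ.child p).mark {mid p s, y, z} = (if f then {y, z} else {mid p s, z}) ∧
      (ρ.child p).flag = false := by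
    rw [h.child_new, child_flag, h.flag, h.acd]
    cases f
    · have hp : ρ.Planar := h.planar (x := p) (y := s) (z := z) (by intro x; simp; tauto)
        (by intro x; simp; tauto) (by intro x; simp; tauto)
      have hi : ({p, z} ∩ {y, z} : Finset Pt3) = {z} := by
        ext x; simp only [Finset.mem_inter, Finset.mem_insert, Finset.mem_singleton]
        have := h.ac; constructor
        · rintro ⟨rfl | rfl, h | h⟩ <;> simp_all
        · rintro rfl; simp
      simp [hp, hi]
    · have hp : ¬ ρ.Planar := h.not_planar (by simp) (by simp)
      simp [hp]
  refine { toCore := h.mk_child (fun x => by simp only [or_comm, or_left_comm]) h.acd h.ad hya.symm h.ac hyd.symm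
              h.cd.symm hyc
           abc := mark_perm h.child_cut2 ?_ ?_
           abd := mark_perm h2 ?_ ?_
           acd := mark_perm h.child_cut1 ?_ ?_
           bcd := mark_perm h1'.1 ?_ ?_
           flag := h1'.2 }
  all_goals
    intro x
  case refine_8 => rfl
  all_goals simp only [Finset.mem_insert, Finset.mem_singleton, or_comm, or_left_comm]


/-- Third bisection, child at `s`, the vertex opposite to the marked edge `pq`. -/
theorem step3b {ρ : MTet} {p s y z : Pt3} {f : Bool}
    (h : Is ρ p s y z {p, z} (if f then {y, s} else {z, s}) (!f)) :
    (ρ.child s).mark {mid p s, s, y} = {s, y} ∧ (ρ.child s).mark {mid p s, s, z} = {s, z} ∧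
    (ρ.child s).mark {s, y, z} = (if f then {y, s} else {z, s}) ∧
    (ρ.child s).mark {mid p s, y, z} = (if f then {y, z} else {mid p s, z}) ∧
    (ρ.child s).V = {mid p s, s, y, z} ∧
    (Is (ρ.child s) s y (mid p s) z {s, z} {y, z} false ∨
      Is (ρ.child s) s z (mid p s) y {s, y} {mid p s, z} false) := by
  have h' := h.swap
  have hz := h'.zne
  have h2 := h'.child_inh
  have c1 := h'.child_cut1
  have c2 := h'.child_cut2
  have hV := h'.child_V
  rw [h'.acd] at h2
  have h1' : (ρ.child s).mark {mid s p, y, z} = (if f then {y, z} else {mid s p, z}) ∧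
      (ρ.child s).flag = false := by
    rw [h'.child_new, child_flag, h.flag, h'.acd]
    cases f
    · have hp : ρ.Planar := h.planar (x := p) (y := s) (z := z) (by intro x; simp; tauto)
        (by intro x; simp; tauto) (by intro x; simp; tauto)
      have hi : ({z, s} ∩ {y, z} : Finset Pt3) = {z} := by
        ext x; simp only [Finset.mem_inter, Finset.mem_insert, Finset.mem_singleton]
        have := h.bc; constructor
        · rintro ⟨rfl | rfl, h | h⟩ <;> simp_all
        · rintro rfl; simp
      simp [hp, hi]
    · have hp : ¬ ρ.Planar := h.not_planar (by simp) (by simp)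
      simp [hp]
  have hf := h1'.2
  have h1 := h1'.1
  rw [mid_comm s p] at h1 c1 c2 hV hz
  obtain ⟨hya, hyb, hyc, hyd⟩ := hz
  refine ⟨c1, c2, h2, h1, hV, ?_⟩
  cases f
  · right
    refine { toCore := h'.mk_child (fun x => by rw [mid_comm s p]; simp only [or_comm, or_left_comm])
              (h'.acd.trans (Finset.pair_comm _ _)) h.bd hya.symm h.bc hyd.symm
              h.cd.symm hyc
             abc := mark_perm c2 ?_ ?_
             abd := mark_perm h2 ?_ ?_
             acd := mark_perm c1 ?_ ?_
             bcd := mark_perm h1 ?_ ?_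
             flag := hf }
    all_goals
      intro x
      simp only [Finset.mem_insert, Finset.mem_singleton, or_comm, or_left_comm, if_false,
        Bool.false_eq_true]
  · left
    refine { toCore := h'.mk_child (fun x => by rw [mid_comm s p]; simp only [or_comm, or_left_comm])
              (h'.acd.trans (Finset.pair_comm _ _)) h.bc hya.symm h.bd hyc.symm
              h.cd hyd
             abc := mark_perm c1 ?_ ?_
             abd := mark_perm h2 ?_ ?_
             acd := mark_perm c2 ?_ ?_
             bcd := mark_perm h1 ?_ ?_
             flag := hf }
    all_goals
      intro x
      simp only [Finset.mem_insert, Finset.mem_singleton, or_comm, or_left_comm, if_true]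

/-! ### Great-grandchildren -/

/-- `υ` is a great-grandchild of the unflagged tetrahedron `τ`. The first bisection cuts `ab` and
keeps `a`; the face `acd` has marked edge `pq` and third vertex `s`, the second bisection cuts `pq`
and keeps `p`, the third one cuts `ps` and keeps `t`. The fields record the marked edges of `υ`
and how a weight on `υ` arises from a weight on `τ`. -/
structure Out (τ υ : MTet) (a b c d p q s t : Pt3) (m2 : Finset Pt3) (f : Bool) : Prop where
  is : Is τ a b c d {p, q} m2 false
  perm : ∀ x, (x = p ∨ x = q ∨ x = s) ↔ (x = a ∨ x = c ∨ x = d)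
  pq : p ≠ q
  ps : p ≠ s
  qs : q ≠ s
  hf : f = decide τ.Planar
  ht : t = p ∨ t = s
  V : υ.V = {mid p s, t, mid p q, mid a b}
  good : Good υ
  xty : υ.mark {mid p s, t, mid p q} = {t, mid p q}
  xtz : υ.mark {mid p s, t, mid a b} = {t, mid a b}
  xyz : υ.mark {mid p s, mid p q, mid a b} =
    if f then {mid p q, mid a b} else {mid p s, mid a b}
  pyz : t = p → υ.mark {t, mid p q, mid a b} = {t, mid a b}
  syz : t = s → υ.mark {t, mid p q, mid a b} = if f then {mid p q, s} else {mid a b, s}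
  pull : ∀ w₃, Rep υ.V w₃ → ∃ w, Rep τ.V w ∧ L w = L w₃ ∧ w b ≤ w a ∧ w₃ = tri p q s (bis a b w)

/-- `τ` is nondegenerate with a refinement edge that is one of its edges. -/
def HasCore (τ : MTet) : Prop := ∃ a b c d, Core τ a b c d

theorem Good.cases {τ : MTet} (h : Good τ) {c₁ c₂ : Pt3} (h₁ : c₁ ∈ τ.ref)
    (h₂ : c₂ ∈ (τ.child c₁).ref) : ∃ b c d q s m2, c₁ ≠ b ∧ Is τ c₁ b c d {c₂, q} m2 false ∧
      (∀ x, (x = c₂ ∨ x = q ∨ x = s) ↔ (x = c₁ ∨ x = c ∨ x = d)) ∧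
      Is (τ.child c₁) c₂ q (mid c₁ b) s {c₂, s} {q, s} (decide τ.Planar) := by
  obtain ⟨a, b, c, d, m1, m2, h, hm1, hm2⟩ := h
  have : ∃ b m1 m2, Is τ c₁ b c d m1 m2 false ∧ m1 ⊆ {c₁, c, d} ∧ m1.card = 2 := by
    rw [h.ref] at h₁
    simp only [Finset.mem_insert, Finset.mem_singleton] at h₁
    rcases h₁ with rfl | rfl
    · exact ⟨b, m1, m2, h, hm1⟩
    · exact ⟨a, m2, m1, h.swap, hm2⟩
  clear h hm1 hm2
  obtain ⟨b, m1, m2, h, hm, hm'⟩ := this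
  obtain ⟨p, q, s, hperm, rfl, h'⟩ := step1 h hm hm'
  rw [h'.ref] at h₂
  simp only [Finset.mem_insert, Finset.mem_singleton] at h₂
  rcases h₂ with rfl | rfl
  · exact ⟨b, c, d, q, s, m2, h.ab, h, hperm, h'⟩
  · exact ⟨b, c, d, p, s, m2, h.ab, by rw [Finset.pair_comm]; exact h,
      fun x => by rw [← hperm]; simp only [or_left_comm], h'.swap⟩

theorem Good.hasCore {τ : MTet} (h : Good τ) : HasCore τ := by
  obtain ⟨a, b, c, d, m1, m2, h, -⟩ := h
  exact ⟨a, b, c, d, h.toCore⟩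

theorem Good.hasCore₁ {τ : MTet} (h : Good τ) {c₁ : Pt3} (h₁ : c₁ ∈ τ.ref) :
    HasCore (τ.child c₁) := by
  obtain ⟨a, b, c, d, m1, m2, h, hm1, hm2⟩ := h
  rw [h.ref] at h₁
  simp only [Finset.mem_insert, Finset.mem_singleton] at h₁
  rcases h₁ with rfl | rfl
  · obtain ⟨p, q, s, -, -, h'⟩ := step1 h hm1.1 hm1.2
    exact ⟨_, _, _, _, h'.toCore⟩
  · obtain ⟨p, q, s, -, -, h'⟩ := step1 h.swap hm2.1 hm2.2
    exact ⟨_, _, _, _, h'.toCore⟩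

theorem Good.hasCore₂ {τ : MTet} (h : Good τ) {c₁ c₂ : Pt3} (h₁ : c₁ ∈ τ.ref)
    (h₂ : c₂ ∈ (τ.child c₁).ref) : HasCore ((τ.child c₁).child c₂) := by
  obtain ⟨b, c, d, q, s, m2, -, -, -, h'⟩ := h.cases h₁ h₂
  exact ⟨_, _, _, _, (step2 h').toCore⟩

theorem pair_card {α : Type*} [DecidableEq α] {x y : α} {F : Finset α} (h : x ≠ y)
    (hx : x ∈ F) (hy : y ∈ F) : ({x, y} : Finset α) ⊆ F ∧ ({x, y} : Finset α).card = 2 :=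
  ⟨by intro u; simp only [Finset.mem_insert, Finset.mem_singleton]; rintro (rfl | rfl) <;> assumption,
    Finset.card_pair h⟩

theorem Is.good {τ : MTet} {a b c d u v u' v' : Pt3} (h : Is τ a b c d {u, v} {u', v'} false)
    (huv : u ≠ v) (hu : u ∈ ({a, c, d} : Finset Pt3)) (hv : v ∈ ({a, c, d} : Finset Pt3))
    (huv' : u' ≠ v') (hu' : u' ∈ ({b, c, d} : Finset Pt3))
    (hv' : v' ∈ ({b, c, d} : Finset Pt3)) : Good τ :=
  ⟨a, b, c, d, _, _, h, pair_card huv hu hv, pair_card huv' hu' hv'⟩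

theorem Good.out {τ : MTet} (h : Good τ) {c₁ c₂ c₃ : Pt3} (h₁ : c₁ ∈ τ.ref)
    (h₂ : c₂ ∈ (τ.child c₁).ref) (h₃ : c₃ ∈ ((τ.child c₁).child c₂).ref) :
    ∃ a b c d p q s t m2 f, Out τ (((τ.child c₁).child c₂).child c₃) a b c d p q s t m2 f := by
  obtain ⟨b, c, d, q, s, m2, hab, is₁, perm, is₂⟩ := h.cases h₁ h₂
  have is₃ := step2 is₂
  have hq : q ∈ τ.V := by
    have := (perm q).1 (by simp)
    rw [is₁.V]; simp only [Finset.mem_insert, Finset.mem_singleton]; tauto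
  have hs : s ∈ τ.V := by
    have := (perm s).1 (by simp)
    rw [is₁.V]; simp only [Finset.mem_insert, Finset.mem_singleton]; tauto
  have hp : c₂ ∈ τ.V := by
    have := (perm c₂).1 (by simp)
    rw [is₁.V]; simp only [Finset.mem_insert, Finset.mem_singleton]; tauto
  have ha : c₁ ∈ τ.V := by rw [is₁.V]; simp
  have hb : b ∈ τ.V := by rw [is₁.V]; simp
  have pull : ∀ t, (t = c₂ ∨ t = s) → ∀ υ : MTet, υ = ((τ.child c₁).child c₂).child t →
      υ.V = {mid c₂ s, t, mid c₂ q, mid c₁ b} →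
      ∀ w₃, Rep υ.V w₃ →
      ∃ w, Rep τ.V w ∧ L w = L w₃ ∧ w b ≤ w c₁ ∧ w₃ = tri c₂ q s (bis c₁ b w) := by
    intro t ht υ hυ hV w₃ hw₃
    have hq0 : w₃ q = 0 := by
      apply hw₃.2
      rw [hV]
      simp only [Finset.mem_insert, Finset.mem_singleton, not_or]
      refine ⟨(mid_ne is₁.ind hp hs hq is₃.ab).symm, ?_, (mid_ne is₁.ind hp hq hq is₂.ab).symm,
        (mid_ne is₁.ind ha hb hq hab).symm⟩
      rcases ht with rfl | rfl
      · exact is₂.ab.symm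
      · exact is₂.bd
    have : ∃ w₂, Rep ((τ.child c₁).child c₂).V w₂ ∧ L w₂ = L w₃ ∧ bis c₂ s w₂ = w₃ := by
      subst hυ
      rcases ht with rfl | rfl
      · obtain ⟨w, h1, h2, -, h3, -⟩ := is₃.step_up hw₃
        exact ⟨w, h1, h2, h3⟩
      · obtain ⟨w, h1, h2, -, h3, -⟩ := is₃.swap.step_up hw₃
        exact ⟨w, h1, h2, by rw [bis_comm]; exact h3⟩
    obtain ⟨w₂, r2, l2, e2⟩ := this
    obtain ⟨w₁, r1, l1, -, e1, -⟩ := is₂.step_up r2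
    obtain ⟨w, r, l, hle, e, -⟩ := is₁.step_up r1
    refine ⟨w, r, by rw [l, l1, l2], hle, ?_⟩
    rw [tri, e, e1, e2, bis_trivial hw₃.1 (Or.inl hq0)]
  have h₃' := h₃
  rw [is₃.ref] at h₃'
  simp only [Finset.mem_insert, Finset.mem_singleton] at h₃'
  rcases h₃' with rfl | rfl
  · have is₄ := step3a is₃
    have hV : (((τ.child c₁).child c₃).child c₃).V = {mid c₃ s, c₃, mid c₃ q, mid c₁ b} := by
      rw [is₄.V]; ext x
      simp only [Finset.mem_insert, Finset.mem_singleton, or_comm, or_left_comm]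
    refine ⟨c₁, b, c, d, c₃, q, s, c₃, m2, decide τ.Planar,
      { is := is₁, perm := perm, pq := is₂.ab, ps := is₂.ad, qs := is₂.bd, hf := rfl,
        ht := Or.inl rfl, V := hV, good := ?_,
        xty := mark_perm is₄.acd ?_ ?_, xtz := mark_perm is₄.abc ?_ ?_,
        xyz := mark_perm is₄.bcd ?_ ?_,
        pyz := fun _ => mark_perm is₄.abd ?_ ?_,
        syz := fun h => absurd h is₂.ad, pull := pull _ (Or.inl rfl) _ rfl hV }⟩
    case refine_1 =>
      have n1 := is₄.ad
      have n2 := is₄.bd.symm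
      have n3 := is₄.bc.symm
      generalize decide τ.Planar = f at is₄
      cases f
      · exact is₄.good n1 (by simp) (by simp) n3 (by simp) (by simp)
      · exact is₄.good n1 (by simp) (by simp) n2 (by simp) (by simp)
    all_goals
      intro x
    case refine_7 => rfl
    all_goals
      simp only [Finset.mem_insert, Finset.mem_singleton, or_comm, or_left_comm]
  · obtain ⟨k1, k2, k3, k4, hV, k5⟩ := step3b is₃
    refine ⟨c₁, b, c, d, c₂, q, c₃, c₃, m2, decide τ.Planar,
      { is := is₁, perm := perm, pq := is₂.ab, ps := is₂.ad, qs := is₂.bd, hf := rfl,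
        ht := Or.inr rfl, V := hV, good := ?_,
        xty := k1, xtz := k2,
        xyz := k4,
        pyz := fun h => absurd h.symm is₂.ad,
        syz := fun _ => k3, pull := pull _ (Or.inr rfl) _ rfl hV }⟩
    rcases k5 with k | k
    · exact k.good k.ad (by simp) (by simp) k.bd (by simp) (by simp)
    · exact k.good k.ad (by simp) (by simp) k.bc.symm (by simp) (by simp)

/-! ### Weights on great-grandchildren -/

theorem tri_symm {p q s : Pt3} {V : Finset Pt3} (hV : Ind V) (hp : p ∈ V) (hq : q ∈ V)
    (hs : s ∈ V) (pq : p ≠ q) (ps : p ≠ s) (qs : q ≠ s) {w : Wt} (hw : ∀ x, 0 ≤ w x) :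
    tri p q s w = tri q p s w := by
  have hn := bis_nonneg pq (mid_ne hV hp hq hp pq) (mid_ne hV hp hq hq pq) hw
  rw [tri, tri, bis_comm q p]
  -- After bisecting `pq`, one endpoint has no mass left, so one of the last two bisections is void.
  set w₁ := bis p q w with hw₁
  have h0 : w₁ p = 0 ∨ w₁ q = 0 := by
    rw [hw₁, bis_apply_left w pq (mid_ne hV hp hq hp pq), bis_apply_right w pq (mid_ne hV hp hq hq pq)]
    rcases le_total (w p) (w q) with h | h <;> simp [h]
  rcases h0 with h | h
  · have : bis q s w₁ p = 0 := by
      rw [bis_apply_ne _ pq ps (mid_ne hV hq hs hp qs).symm, h]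
    rw [bis_trivial hn (Or.inl h), bis_trivial
      (bis_nonneg qs (mid_ne hV hq hs hq qs) (mid_ne hV hq hs hs qs) hn) (Or.inl this)]
  · have : bis p s w₁ q = 0 := by
      rw [bis_apply_ne _ pq.symm qs (mid_ne hV hp hs hq ps).symm, h]
    rw [bis_trivial hn (Or.inl h), bis_trivial
      (bis_nonneg ps (mid_ne hV hp hs hp ps) (mid_ne hV hp hs hs ps) hn) (Or.inl this)]

/-- If one of three corner weights vanishes, only the opposite edge gets bisected. -/
theorem tri_zero {p q s r u v : Pt3} {V : Finset Pt3} (hV : Ind V) (hp : p ∈ V) (hq : q ∈ V)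
    (hs : s ∈ V) (pq : p ≠ q) (ps : p ≠ s) (qs : q ≠ s) (ru : r ≠ u) (rv : r ≠ v) (uv : u ≠ v)
    (e : ∀ x, (x = p ∨ x = q ∨ x = s) ↔ (x = r ∨ x = u ∨ x = v))
    {w : Wt} (hw : ∀ x, 0 ≤ w x) (h : w r = 0) : tri p q s w = bis u v w := by
  have e1 := (e r).2 (by simp)
  have eu := (e u).2 (by simp)
  have ev := (e v).2 (by simp)
  have key : ∀ x y, ((u = x ∨ u = y) ∧ (v = x ∨ v = y)) → bis x y w = bis u v w := by
    rintro x y ⟨rfl | rfl, rfl | rfl⟩ <;> first | exact absurd rfl uv | rfl | exact bis_comm _ _ _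
  rcases e1 with rfl | rfl | rfl
  · rw [tri, bis_trivial hw (Or.inl h), bis_trivial hw (Or.inl h)]
    exact key _ _ ⟨by tauto, by tauto⟩
  · rw [tri, bis_trivial hw (Or.inr h)]
    rw [bis_trivial (bis_nonneg ps (mid_ne hV hp hs hp ps) (mid_ne hV hp hs hs ps) hw)]
    · exact key _ _ ⟨by tauto, by tauto⟩
    · left; rw [bis_apply_ne _ pq.symm qs (mid_ne hV hp hs hq ps).symm, h]
  · have hn := bis_nonneg pq (mid_ne hV hp hq hp pq) (mid_ne hV hp hq hq pq) hw
    have h0 : bis p q w r = 0 := by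
      rw [bis_apply_ne _ ps.symm qs.symm (mid_ne hV hp hq hs pq).symm, h]
    rw [tri, bis_trivial hn (Or.inr h0), bis_trivial hn (Or.inr h0)]
    exact key _ _ ⟨by tauto, by tauto⟩

section
variable {τ υ : MTet} {a b c d p q s t : Pt3} {m2 : Finset Pt3} {f : Bool}

theorem Out.mem (o : Out τ υ a b c d p q s t m2 f) :
    a ∈ τ.V ∧ b ∈ τ.V ∧ c ∈ τ.V ∧ d ∈ τ.V ∧ p ∈ τ.V ∧ q ∈ τ.V ∧ s ∈ τ.V := by
  have : ∀ x, (x = p ∨ x = q ∨ x = s) → x ∈ τ.V := by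
    intro x hx
    have := (o.perm x).1 hx
    rw [o.is.V]; simp only [Finset.mem_insert, Finset.mem_singleton]; tauto
  refine ⟨?_, ?_, ?_, ?_, this p (by simp), this q (by simp), this s (by simp)⟩ <;>
    simp [o.is.V]

/-- The vertex `b` cut off by the first bisection is not in the face `pqs`. -/
theorem Out.bne (o : Out τ υ a b c d p q s t m2 f) : b ≠ p ∧ b ≠ q ∧ b ≠ s := by
  have : ∀ x, (x = p ∨ x = q ∨ x = s) → b ≠ x := by
    rintro x hx rfl
    rcases (o.perm b).1 hx with h | h | h
    · exact o.is.ab h.symm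
    · exact o.is.bc h
    · exact o.is.bd h
  exact ⟨this p (by simp), this q (by simp), this s (by simp)⟩

theorem Out.nonneg (o : Out τ υ a b c d p q s t m2 f) {w : Wt} (hw : ∀ x, 0 ≤ w x) (x : Pt3) :
    0 ≤ bis a b w x :=
  bis_nonneg o.is.ab o.is.zne.1 o.is.zne.2.1 hw x

/-- If one vertex of the face `acd` has weight zero, the last two bisections only subdivide the
opposite edge. -/
theorem Out.zero (o : Out τ υ a b c d p q s t m2 f) {r u v : Pt3}
    (ru : r ≠ u) (rv : r ≠ v) (uv : u ≠ v)
    (e : ∀ x, (x = a ∨ x = c ∨ x = d) ↔ (x = r ∨ x = u ∨ x = v))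
    {w : Wt} (hw : ∀ x, 0 ≤ w x) (h : w r = 0) : tri p q s w = bis u v w := by
  obtain ⟨ha, hb, hc, hd, hp, hq, hs⟩ := o.mem
  exact tri_zero o.is.ind hp hq hs o.pq o.ps o.qs ru rv uv (fun x => (o.perm x).trans (e x)) hw h

/-- The only vertex of `τ` that survives in the great-grandchild is `t`. -/
theorem Out.sub_corner (o : Out τ υ a b c d p q s t m2 f) {u : Pt3} (hu : u ∈ τ.V)
    (h : u ∈ υ.V) : u = t := by
  obtain ⟨ha, hb, hc, hd, hp, hq, hs⟩ := o.mem
  rw [o.V] at h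
  simp only [Finset.mem_insert, Finset.mem_singleton] at h
  rcases h with h | h | h | h
  · exact absurd h.symm (mid_ne o.is.ind hp hs hu o.ps)
  · exact h
  · exact absurd h.symm (mid_ne o.is.ind hp hq hu o.pq)
  · exact absurd h.symm (mid_ne o.is.ind ha hb hu o.is.ab)

end

theorem eq_triple {α : Type*} [DecidableEq α] {x y z : α} {F : Finset α} (hc : F.card = 3)
    (h : ∀ u ∈ F, u = x ∨ u = y ∨ u = z) :
    F = {x, y, z} ∧ x ≠ y ∧ x ≠ z ∧ y ≠ z := by
  have h1 : F = {x, y, z} := Finset.eq_of_subset_of_card_le (fun t ht => by simpa using h t ht)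
      (by rw [hc]; exact Finset.card_le_three)
  refine ⟨h1, ?_⟩
  have h2 := hc
  rw [h1] at h2
  refine ⟨?_, ?_, ?_⟩ <;> rintro rfl
  · have := Finset.card_le_two (a := x) (b := z); simp at h2; omega
  · have := Finset.card_le_two (a := x) (b := y)
    rw [Finset.pair_comm, ← Finset.insert_eq_of_mem (a := y) (s := {y, x}) (by simp)] at this
    rw [Finset.insert_comm] at h2; simp at h2; have := Finset.card_le_two (a := y) (b := x); omega
  · have := Finset.card_le_two (a := x) (b := y); simp at h2; omega

theorem pair_third {α : Type*} [DecidableEq α] {u v t a b c : α}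
    (h : ({u, v, t} : Finset α) = {a, b, c}) (h2 : ({u, v} : Finset α) = {a, b})
    (ut : u ≠ t) (vt : v ≠ t) (uv : u ≠ v) :
    ((u = a ∧ v = b) ∨ (u = b ∧ v = a)) ∧ t = c := by
  have hu : u ∈ ({a, b} : Finset α) := by rw [← h2]; simp
  have hv : v ∈ ({a, b} : Finset α) := by rw [← h2]; simp
  have ht : t ∈ ({a, b, c} : Finset α) := by rw [← h]; simp
  simp only [Finset.mem_insert, Finset.mem_singleton] at hu hv ht
  grind

theorem bis_supp {a b r : Pt3} {w : Wt} (h : bis a b w r ≠ 0) :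
    r = a ∨ r = b ∨ r = mid a b ∨ w r ≠ 0 := by
  by_cases h1 : r = a
  · exact Or.inl h1
  by_cases h2 : r = b
  · exact Or.inr (Or.inl h2)
  by_cases h3 : r = mid a b
  · exact Or.inr (Or.inr (Or.inl h3))
  rw [bis_apply_ne w h1 h2 h3] at h
  exact Or.inr (Or.inr (Or.inr h))

section
variable {τ υ : MTet} {a b c d p q s t : Pt3} {m2 : Finset Pt3} {f : Bool}

theorem Out.swap34 (o : Out τ υ a b c d p q s t m2 f) : Out τ υ a b d c p q s t m2 f where
  is := { toCore := o.is.toCore.swap34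
          abc := o.is.abd
          abd := o.is.abc
          acd := by rw [Finset.pair_comm]; exact o.is.acd
          bcd := by rw [Finset.pair_comm]; exact o.is.bcd
          flag := o.is.flag }
  perm x := (o.perm x).trans (by tauto)
  pq := o.pq
  ps := o.ps
  qs := o.qs
  hf := o.hf
  ht := o.ht
  V := o.V
  good := o.good
  xty := o.xty
  xtz := o.xtz
  xyz := o.xyz
  pyz := o.pyz
  syz := o.syz
  pull := o.pull

/-- A face of `υ` inside the triangle spanned by an edge `uv` of `acd` and the midpoint of `ab` is
marked opposite to the midpoint of `uv`. -/
theorem Out.erase_edge (o : Out τ υ a b c d p q s t m2 f) {F : Finset Pt3} {u v : Pt3}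
    (hu : u = p ∨ u = q ∨ u = s) (hv : v = p ∨ v = q ∨ v = s) (uv : u ≠ v)
    (hc : F.card = 3) (hF : F ⊆ υ.V)
    (h : ∀ r ∈ F, r = u ∨ r = v ∨ r = mid u v ∨ r = mid a b) :
    υ.mark F = F.erase (mid u v) := by
  obtain ⟨ha, hb, hc', hd, hp, hq, hs⟩ := o.mem
  have hu' : u ∈ τ.V := by rcases hu with rfl | rfl | rfl <;> assumption
  have hv' : v ∈ τ.V := by rcases hv with rfl | rfl | rfl <;> assumption
  obtain ⟨rfl, n1, n2, n3⟩ := eq_triple (x := mid u v) (y := t) (z := mid a b) hc (by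
    intro r hr
    rcases h r hr with rfl | rfl | rfl | rfl
    · exact Or.inr (Or.inl (o.sub_corner hu' (hF hr)))
    · exact Or.inr (Or.inl (o.sub_corner hv' (hF hr)))
    · exact Or.inl rfl
    · exact Or.inr (Or.inr rfl))
  rw [Finset.erase_insert (by simp [n1, n2])]
  have ht : t = u ∨ t = v := by
    rcases h t (by simp) with h | h | h | h
    · exact Or.inl h
    · exact Or.inr h
    · exact absurd h.symm n1
    · exact absurd h n3
  have hm : mid u v ∈ υ.V := hF (by simp)
  rw [o.V] at hm
  simp only [Finset.mem_insert, Finset.mem_singleton] at hm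
  rcases hm with h | h | h | h
  · rw [h]; exact o.xtz
  · exact absurd h n1
  · rw [h, Finset.insert_comm]
    refine o.pyz (o.ht.resolve_right ?_)
    rintro rfl
    rcases mid_inj o.is.ind hu' hv' hp hq h with ⟨rfl, rfl⟩ | ⟨rfl, rfl⟩
    · rcases ht with h | h
      · exact o.ps h.symm
      · exact o.qs h.symm
    · rcases ht with h | h
      · exact o.qs h.symm
      · exact o.ps h.symm
  · exact absurd h n2

/-- A face of `υ` inside the face `acd` of `τ` is marked opposite to the newest vertex. -/
theorem Out.erase_face (o : Out τ υ a b c d p q s t m2 f) {F : Finset Pt3}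
    (hc : F.card = 3) (hF : F ⊆ υ.V) (hz : mid a b ∉ F) :
    υ.mark F = F \ {mid p s, mid q s} := by
  obtain ⟨ha, hb, hc', hd, hp, hq, hs⟩ := o.mem
  obtain ⟨rfl, n1, n2, n3⟩ := eq_triple (x := mid p s) (y := t) (z := mid p q) hc (by
    intro r hr
    have := hF hr
    rw [o.V] at this
    simp only [Finset.mem_insert, Finset.mem_singleton] at this
    rcases this with h | h | h | h
    · exact Or.inl h
    · exact Or.inr (Or.inl h)
    · exact Or.inr (Or.inr h)
    · subst h; exact absurd hr hz)
  have ht : t ∈ τ.V := by rcases o.ht with h | h <;> rw [h] <;> assumption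
  have k1 : t ≠ mid q s := (mid_ne o.is.ind hq hs ht o.qs).symm
  have k2 : mid p q ≠ mid q s := by
    intro h
    rcases mid_inj o.is.ind hp hq hq hs h with h | h
    · exact o.pq h.1
    · exact o.ps h.1
  rw [o.xty]
  ext x
  simp only [Finset.mem_sdiff, Finset.mem_insert, Finset.mem_singleton, not_or]
  constructor
  · rintro (rfl | rfl)
    · exact ⟨Or.inr (Or.inl rfl), n1.symm, k1⟩
    · exact ⟨Or.inr (Or.inr rfl), n2.symm, k2⟩
  · rintro ⟨h | h, h', -⟩
    · exact absurd h h'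
    · exact h

/-- Exchanging the endpoints of the edge `u v` in the description of a marked face. -/
theorem tri_pair {V : Finset Pt3} (hV : Ind V) {u v x y r : Pt3} (hx : x ∈ V) (hy : y ∈ V)
    (hr : r ∈ V) (xy : x ≠ y) (xr : x ≠ r) (yr : y ≠ r) {w : Wt} (hw : ∀ x, 0 ≤ w x)
    (h : (u = x ∧ v = y) ∨ (u = y ∧ v = x)) :
    tri u v r w = tri x y r w ∧ ({mid u r, mid v r} : Finset Pt3) = {mid x r, mid y r} := by
  rcases h with ⟨rfl, rfl⟩ | ⟨rfl, rfl⟩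
  · exact ⟨rfl, rfl⟩
  · exact ⟨tri_symm hV hy hx hr xy.symm yr xr hw, Finset.pair_comm _ _⟩

/-- The case of `Out.face` in which the face of `τ` contains the refinement edge. -/
theorem Out.face_ref (o : Out τ υ a b c d p q s t m2 f) {w : Wt}
    (hw : Rep {a, b, c} w) (hle : w b ≤ w a) :
    tri p q s (bis a b w) = tri a b c w ∧
    ∀ F : Finset Pt3, F.card = 3 → F ⊆ υ.V → (∀ r ∈ F, tri p q s (bis a b w) r ≠ 0) →
      υ.mark F = F \ {mid a c, mid b c} := by
  obtain ⟨ha, hb, hc, hd, hp, hq, hs⟩ := o.mem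
  have hI := o.is.ind
  obtain ⟨za, zb, zc, zd⟩ := o.is.zne
  have hn := o.nonneg hw.1
  have hd0 : bis a b w d = 0 := by
    rw [bis_apply_ne _ o.is.ad.symm o.is.bd.symm zd.symm]
    exact hw.2 _ (by simp [o.is.ad.symm, o.is.bd.symm, o.is.cd.symm])
  have hb0 : bis a b w b = 0 := by
    rw [bis_apply_right _ o.is.ab zb, min_eq_right hle, sub_self]
  have ac_b := mid_ne hI ha hc hb o.is.ac
  have hb1 : bis a c (bis a b w) b = 0 := by
    rw [bis_apply_ne _ o.is.ab.symm o.is.bc ac_b.symm, hb0]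
  have e1 : tri p q s (bis a b w) = bis a c (bis a b w) :=
    o.zero (r := d) o.is.ad.symm o.is.cd.symm o.is.ac (fun x => by tauto) hn hd0
  refine ⟨?_, ?_⟩
  · rw [e1, tri, bis_trivial (a := b) _ (Or.inl hb1)]
    exact bis_nonneg o.is.ac (mid_ne hI ha hc ha o.is.ac) (mid_ne hI ha hc hc o.is.ac) hn
  · intro F hF hFV hr
    have key : ∀ r ∈ F, r = a ∨ r = c ∨ r = mid a c ∨ r = mid a b := by
      intro r hrF
      have h := hr r hrF
      rw [e1] at h
      have nb : r ≠ b := by rintro rfl; exact h hb1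
      rcases bis_supp h with h | h | h | h
      · exact Or.inl h
      · exact Or.inr (Or.inl h)
      · exact Or.inr (Or.inr (Or.inl h))
      rcases bis_supp h with h | h | h | h
      · exact Or.inl h
      · exact absurd h nb
      · exact Or.inr (Or.inr (Or.inr h))
      have h3 : r ∈ ({a, b, c} : Finset Pt3) := by
        by_contra h4; exact h (hw.2 r h4)
      simp only [Finset.mem_insert, Finset.mem_singleton] at h3
      rcases h3 with h | h | h
      · exact Or.inl h
      · exact absurd h nb
      · exact Or.inr (Or.inl h)
    rw [o.erase_edge ((o.perm a).2 (by simp)) ((o.perm c).2 (by simp)) o.is.ac hF hFV key]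
    have bc_not : mid b c ∉ F := by
      intro h
      rcases key _ h with h | h | h | h
      · exact mid_ne hI hb hc ha o.is.bc h
      · exact mid_ne hI hb hc hc o.is.bc h
      · rcases mid_inj hI hb hc ha hc h with h | h
        · exact o.is.ab h.1.symm
        · exact o.is.bc h.1
      · rcases mid_inj hI hb hc ha hb h with h | h
        · exact o.is.ab h.1.symm
        · exact o.is.ac h.2.symm
    ext x
    simp only [Finset.mem_sdiff, Finset.mem_erase, Finset.mem_insert, Finset.mem_singleton, not_or]
    constructor
    · rintro ⟨h1, h2⟩
      exact ⟨h2, h1, fun h => bc_not (h ▸ h2)⟩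
    · rintro ⟨h1, h2, -⟩
      exact ⟨h2, h1⟩

/-- Three bisections restrict on any face `uvr` of `τ` with marked edge `uv` to one and the same
subdivision, and the marked edges of the resulting small faces are determined by `u`, `v`, `r`
alone. Nothing here depends on the position of the face in `τ`. -/
theorem Out.face (o : Out τ υ a b c d p q s t m2 f) {u v r : Pt3} (uv : u ≠ v) (ur : u ≠ r)
    (vr : v ≠ r) (hI : {u, v, r} ⊆ τ.V) (hm : τ.mark {u, v, r} = {u, v}) {w : Wt}
    (hw : Rep {u, v, r} w) (hle : w b ≤ w a) :
    tri p q s (bis a b w) = tri u v r w ∧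
    ∀ F : Finset Pt3, F.card = 3 → F ⊆ υ.V → (∀ r ∈ F, tri p q s (bis a b w) r ≠ 0) →
      υ.mark F = F \ {mid u r, mid v r} := by
  obtain ⟨ha, hb, hc, hd, hp, hq, hs⟩ := o.mem
  have ind := o.is.ind
  have hcard : ({u, v, r} : Finset Pt3).card = 3 :=
    Finset.card_eq_three.2 ⟨u, v, r, uv, ur, vr, rfl⟩
  have hI' := hI
  rw [o.is.V] at hI'
  rcases face_cases o.is.card hI' hcard with e | e | e | e
  · rw [e, o.is.abc] at hm
    obtain ⟨h1, rfl⟩ := pair_third e hm.symm ur vr uv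
    obtain ⟨k1, k2⟩ := tri_pair ind ha hb hc o.is.ab o.is.ac o.is.bc hw.1 h1
    rw [k1, k2]
    rw [e] at hw
    exact o.face_ref hw hle
  · rw [e, o.is.abd] at hm
    obtain ⟨h1, rfl⟩ := pair_third e hm.symm ur vr uv
    obtain ⟨k1, k2⟩ := tri_pair ind ha hb hd o.is.ab o.is.ad o.is.bd hw.1 h1
    rw [k1, k2]
    rw [e] at hw
    exact o.swap34.face_ref hw hle
  · rw [e, o.is.acd] at hm
    have e' : ({u, v, r} : Finset Pt3) = {p, q, s} := by
      rw [e]; ext x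
      simp only [Finset.mem_insert, Finset.mem_singleton]
      exact (o.perm x).symm
    obtain ⟨h1, rfl⟩ := pair_third e' hm.symm ur vr uv
    obtain ⟨k1, k2⟩ := tri_pair ind hp hq hs o.pq o.ps o.qs hw.1 h1
    rw [k1, k2]
    rw [e'] at hw
    obtain ⟨bp, bq, bs⟩ := o.bne
    have b0 : w b = 0 := hw.2 _ (by simp [bp, bq, bs])
    rw [bis_trivial hw.1 (Or.inr b0)]
    refine ⟨rfl, fun F hF hFV hr => o.erase_face hF hFV ?_⟩
    intro hz
    refine hr _ hz ?_
    have zp := mid_ne ind ha hb hp o.is.ab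
    have zq := mid_ne ind ha hb hq o.is.ab
    have zs := mid_ne ind ha hb hs o.is.ab
    have key : ∀ {x y}, x ∈ τ.V → y ∈ τ.V → b ≠ x → b ≠ y → mid a b ≠ mid x y := by
      intro x y hx hy h1 h2 h
      rcases mid_inj ind ha hb hx hy h with h | h
      · exact h2 h.2
      · exact h1 h.2
    rw [tri, bis_apply_ne _ zq zs (key hq hs bq bs), bis_apply_ne _ zp zs (key hp hs bp bs),
      bis_apply_ne _ zp zq (key hp hq bp bq)]
    exact hw.2 _ (by simp [zp, zq, zs])
  · have a0 : w a = 0 := by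
      apply hw.2; rw [e]; simp [o.is.ab, o.is.ac, o.is.ad]
    have b0 : w b = 0 := le_antisymm (hle.trans a0.le) (hw.1 b)
    rw [bis_trivial hw.1 (Or.inr b0)]
    have e1 : tri p q s w = bis c d w :=
      o.zero (r := a) o.is.ac o.is.ad o.is.cd (fun x => Iff.rfl) hw.1 a0
    rw [e1]
    refine ⟨?_, ?_⟩
    · symm
      refine tri_zero ind (hI (by simp)) (hI (by simp)) (hI (by simp)) uv ur vr o.is.bc o.is.bd
        o.is.cd (fun x => ?_) hw.1 b0
      have := Finset.ext_iff.1 e x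
      simpa only [Finset.mem_insert, Finset.mem_singleton] using this
    · intro F hF hFV hr
      exfalso
      obtain ⟨rfl, -, -, -⟩ := eq_triple (x := c) (y := d) (z := mid c d) hF (by
        intro x hx
        rcases bis_supp (hr x hx) with h | h | h | h
        · exact Or.inl h
        · exact Or.inr (Or.inl h)
        · exact Or.inr (Or.inr h)
        have : x ∈ ({b, c, d} : Finset Pt3) := by
          rw [← e]; by_contra h4; exact h (hw.2 _ h4)
        simp only [Finset.mem_insert, Finset.mem_singleton] at this
        rcases this with rfl | h | h
        · exact absurd b0 h
        · exact Or.inl h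
        · exact Or.inr (Or.inl h))
      have h1 := o.sub_corner hc (hFV (by simp))
      have h2 := o.sub_corner hd (hFV (by simp))
      exact o.is.cd (h1.trans h2.symm)

end

/-! ### Compatibility of great-grandchildren of two tetrahedra -/

theorem Good.card {τ : MTet} (h : Good τ) : τ.V.card = 4 := by
  obtain ⟨a, b, c, d, m1, m2, h, -⟩ := h
  rw [h.V]; exact h.card

theorem Good.mark_edge {τ : MTet} (h : Good τ) {F : Finset Pt3} (hF : F ⊆ τ.V)
    (hc : F.card = 3) : τ.mark F ⊆ F ∧ (τ.mark F).card = 2 := by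
  obtain ⟨a, b, c, d, m1, m2, h, h1, h2⟩ := h
  rw [h.V] at hF
  rcases face_cases h.card hF hc with rfl | rfl | rfl | rfl
  · rw [h.abc]; exact pair_card h.ab (by simp) (by simp)
  · rw [h.abd]; exact pair_card h.ab (by simp) (by simp)
  · rw [h.acd]; exact h1
  · rw [h.bcd]; exact h2

theorem rest_eq {α : Type*} [DecidableEq α] {a b c d c' d' : α}
    (h : ({a, b, c, d} : Finset α) = {a, b, c', d'}) (ac : a ≠ c) (ad : a ≠ d) (bc : b ≠ c)
    (bd : b ≠ d) (ac' : a ≠ c') (ad' : a ≠ d') (bc' : b ≠ c') (bd' : b ≠ d') (x : α) :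
    (x = c ∨ x = d) ↔ (x = c' ∨ x = d') := by
  have := Finset.ext_iff.1 h x
  simp only [Finset.mem_insert, Finset.mem_singleton] at this
  constructor
  · intro hx
    have h1 : x ≠ a := by rcases hx with rfl | rfl <;> [exact ac.symm; exact ad.symm]
    have h2 : x ≠ b := by rcases hx with rfl | rfl <;> [exact bc.symm; exact bd.symm]
    tauto
  · intro hx
    have h1 : x ≠ a := by rcases hx with rfl | rfl <;> [exact ac'.symm; exact ad'.symm]
    have h2 : x ≠ b := by rcases hx with rfl | rfl <;> [exact bc'.symm; exact bd'.symm]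
    tauto

theorem pair_eq {α : Type*} [DecidableEq α] {a b a' b' : α}
    (h : ({a, b} : Finset α) = {a', b'}) (hab : a ≠ b) : (a = a' ∧ b = b') ∨ (a = b' ∧ b = a') := by
  have h1 : a ∈ ({a', b'} : Finset α) := by rw [← h]; simp
  have h2 : b ∈ ({a', b'} : Finset α) := by rw [← h]; simp
  simp only [Finset.mem_insert, Finset.mem_singleton] at h1 h2
  grind

section
variable {τ υ σ υ' : MTet} {a b c d p q s t a' b' c' d' p' q' s' t' : Pt3}
  {m2 m2' : Finset Pt3} {f f' : Bool}

/-- Faces shared by two great-grandchildren inside the same grandchild are marked alike. -/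
theorem Out.mark_same (o : Out τ υ a b c d p q s t m2 f) (o' : Out τ υ' a b c' d' p q s t' m2' f)
    {F : Finset Pt3} (hc : F.card = 3) (hF : F ⊆ υ.V) (hF' : F ⊆ υ'.V) :
    υ.mark F = υ'.mark F := by
  obtain ⟨ha, hb, -, -, hp, hq, hs⟩ := o.mem
  have ht : t ∈ τ.V := by rcases o.ht with h | h <;> rw [h] <;> assumption
  by_cases htt : t = t'
  · subst htt
    have hF2 := hF
    have hcard := o.good.card
    rw [o.V] at hF2 hcard
    rcases face_cases hcard hF2 hc with rfl | rfl | rfl | rfl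
    · rw [o.xty, o'.xty]
    · rw [o.xtz, o'.xtz]
    · rw [o.xyz, o'.xyz]
    · rcases o.ht with h | h
      · rw [o.pyz h, o'.pyz h]
      · rw [o.syz h, o'.syz h]
  · obtain ⟨rfl, -⟩ := eq_triple (x := mid p s) (y := mid p q) (z := mid a b) hc (by
      intro r hr
      have := hF hr
      rw [o.V] at this
      simp only [Finset.mem_insert, Finset.mem_singleton] at this
      rcases this with h | h | h | h
      · exact Or.inl h
      · subst h; exact absurd (o'.sub_corner ht (hF' hr)) htt
      · exact Or.inr (Or.inl h)
      · exact Or.inr (Or.inr h))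
    rw [o.xyz, o'.xyz]

/-- Faces shared by great-grandchildren inside the two different children of one child are marked
alike. -/
theorem Out.mark_swap (o : Out τ υ a b c d p q s t m2 f) (o' : Out τ υ' a b c' d' q p s t' m2' f)
    {F : Finset Pt3} (hc : F.card = 3) (hF : F ⊆ υ.V) (hF' : F ⊆ υ'.V) :
    υ.mark F = υ'.mark F := by
  obtain ⟨ha, hb, -, -, hp, hq, hs⟩ := o.mem
  obtain ⟨bp, bq, bs⟩ := o.bne
  have ind := o.is.ind
  have ht : t ∈ τ.V := by rcases o.ht with h | h <;> rw [h] <;> assumption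
  have ht' : t' ∈ τ.V := by rcases o'.ht with h | h <;> rw [h] <;> assumption
  have hx : mid p s ∉ υ'.V := by
    rw [o'.V]
    simp only [Finset.mem_insert, Finset.mem_singleton, not_or]
    refine ⟨fun h => ?_, mid_ne ind hp hs ht' o.ps, fun h => ?_, fun h => ?_⟩
    · rcases mid_inj ind hp hs hq hs h with h | h
      · exact o.pq h.1
      · exact o.ps h.1
    · rcases mid_inj ind hp hs hq hp h with h | h
      · exact o.pq h.1
      · exact o.qs h.2.symm
    · rcases mid_inj ind hp hs ha hb h with h | h
      · exact bs h.2.symm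
      · exact bp h.1.symm
  obtain ⟨rfl, -⟩ := eq_triple (x := t) (y := mid p q) (z := mid a b) hc (by
    intro r hr
    have := hF hr
    rw [o.V] at this
    simp only [Finset.mem_insert, Finset.mem_singleton] at this
    rcases this with h | h
    · subst h; exact absurd (hF' hr) hx
    · exact h)
  have htt := o'.sub_corner ht (hF' (by simp))
  subst htt
  have hts : t = s := by
    rcases o.ht with h | h
    · rcases o'.ht with h' | h'
      · exact absurd (h.symm.trans h') o.pq
      · exact h'
    · exact h
  have h1 := o'.syz hts
  rw [mid_comm q p] at h1
  rw [o.syz hts, h1]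

/-- Compatibility of two great-grandchildren of the same tetrahedron. If they keep different
endpoints of the refinement edge, a common weight has equal masses at both endpoints, so that
after the first bisection only the edge `cd` remains. -/
theorem Out.same (o : Out τ υ a b c d p q s t m2 f) (o' : Out τ υ' a' b' c' d' p' q' s' t' m2' f')
    {w : Wt} (hw : ∀ x, 0 ≤ w x) (hle : w b ≤ w a) (hle' : w b' ≤ w a') :
    tri p q s (bis a b w) = tri p' q' s' (bis a' b' w) ∧
    ∀ F : Finset Pt3, F.card = 3 → F ⊆ υ.V → F ⊆ υ'.V →
      (∀ r ∈ F, tri p q s (bis a b w) r ≠ 0) → (∀ p ∉ τ.V, w p = 0) → υ.mark F = υ'.mark F := by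
  have ff : f = f' := o.hf.trans o'.hf.symm
  subst ff
  obtain ⟨ha, hb, hc, hd, hp, hq, hs⟩ := o.mem
  have ind := o.is.ind
  have hV := o.is.V.symm.trans o'.is.V
  rcases pair_eq (o.is.ref.symm.trans o'.is.ref) o.is.ab with ⟨rfl, rfl⟩ | ⟨rfl, rfl⟩
  · have hcd := rest_eq hV o.is.ac o.is.ad o.is.bc o.is.bd o'.is.ac o'.is.ad o'.is.bc o'.is.bd
    have e1 : ({a, c, d} : Finset Pt3) = {a, c', d'} := by
      ext x; simp only [Finset.mem_insert, Finset.mem_singleton, hcd x]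
    have e2 : ({p, q} : Finset Pt3) = {p', q'} := by
      rw [← o.is.acd, ← o'.is.acd, e1]
    have e3 : ({p, q, s} : Finset Pt3) = {p', q', s'} := by
      ext x; simp only [Finset.mem_insert, Finset.mem_singleton, o.perm x, o'.perm x, hcd x]
    obtain ⟨h1, rfl⟩ := pair_third e3 e2 o.ps o.qs o.pq
    rcases h1 with ⟨rfl, rfl⟩ | ⟨rfl, rfl⟩
    · exact ⟨rfl, fun F h1 h2 h3 _ _ => o.mark_same o' h1 h2 h3⟩
    · exact ⟨tri_symm ind hp hq hs o.pq o.ps o.qs (o.nonneg hw),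
        fun F h1 h2 h3 _ _ => o.mark_swap o' h1 h2 h3⟩
  · rw [Finset.insert_comm b a] at hV
    have hcd := rest_eq hV o.is.ac o.is.ad o.is.bc o.is.bd o'.is.bc o'.is.bd o'.is.ac o'.is.ad
    have hab : w a = w b := le_antisymm hle' hle
    obtain ⟨za, zb, zc, zd⟩ := o.is.zne
    have a0 : bis a b w a = 0 := by rw [bis_apply_left _ o.is.ab za, hab]; simp
    have b0 : bis a b w b = 0 := by rw [bis_apply_right _ o.is.ab zb, hab]; simp
    have e1 : tri p q s (bis a b w) = bis c d (bis a b w) :=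
      o.zero (r := a) o.is.ac o.is.ad o.is.cd (fun x => Iff.rfl) (o.nonneg hw) a0
    have e2 : tri p' q' s' (bis a b w) = bis c d (bis a b w) :=
      o'.zero (r := b) o.is.bc o.is.bd o.is.cd (fun x => or_congr Iff.rfl (hcd x).symm)
        (o.nonneg hw) b0
    rw [bis_comm b a, e1, e2]
    refine ⟨rfl, fun F hF hFV hFV' hr hsupp => ?_⟩
    have key : ∀ r ∈ F, r = c ∨ r = d ∨ r = mid c d ∨ r = mid a b := by
      intro r hrF
      have h := hr r hrF
      rcases bis_supp h with h | h | h | h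
      · exact Or.inl h
      · exact Or.inr (Or.inl h)
      · exact Or.inr (Or.inr (Or.inl h))
      have na : r ≠ a := by rintro rfl; exact h a0
      have nb : r ≠ b := by rintro rfl; exact h b0
      rcases bis_supp h with h | h | h | h
      · exact absurd h na
      · exact absurd h nb
      · exact Or.inr (Or.inr (Or.inr h))
      have h3 : r ∈ τ.V := by
        by_contra h4; exact h (hsupp r h4)
      rw [o.is.V] at h3
      simp only [Finset.mem_insert, Finset.mem_singleton] at h3
      rcases h3 with h | h | h | h
      · exact absurd h na
      · exact absurd h nb
      · exact Or.inl h
      · exact Or.inr (Or.inl h)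
    have hc' : c = p' ∨ c = q' ∨ c = s' := (o'.perm c).2 (Or.inr ((hcd c).1 (by simp)))
    have hd' : d = p' ∨ d = q' ∨ d = s' := (o'.perm d).2 (Or.inr ((hcd d).1 (by simp)))
    rw [o.erase_edge ((o.perm c).2 (by simp)) ((o.perm d).2 (by simp)) o.is.cd hF hFV key,
      o'.erase_edge hc' hd' o.is.cd hF hFV' (by rw [mid_comm b a]; exact key)]

/-- On an edge `uv` of `τ`, three bisections amount to one bisection of that edge. Each edge lies in a
face, where `Out.face` applies whatever its marked edge is. -/
theorem Out.line (o : Out τ υ a b c d p q s t m2 f) (g : Good τ) {u v : Pt3} (uv : u ≠ v)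
    (hu : u ∈ τ.V) (hv : v ∈ τ.V) {w : Wt} (hw : Rep {u, v} w) (hle : w b ≤ w a) :
    tri p q s (bis a b w) = bis u v w := by
  obtain ⟨r, hr, hruv⟩ : ∃ r ∈ τ.V, r ∉ ({u, v} : Finset Pt3) := by
    apply Finset.exists_mem_notMem_of_card_lt_card
    rw [g.card, Finset.card_pair uv]; norm_num
  have hr0 : w r = 0 := hw.2 _ hruv
  simp only [Finset.mem_insert, Finset.mem_singleton, not_or] at hruv
  obtain ⟨ru, rv⟩ := hruv
  have hI : ({u, v, r} : Finset Pt3) ⊆ τ.V := by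
    intro x hx
    simp only [Finset.mem_insert, Finset.mem_singleton] at hx
    rcases hx with rfl | rfl | rfl <;> assumption
  obtain ⟨h1, h2⟩ := g.mark_edge hI
    (Finset.card_eq_three.2 ⟨u, v, r, uv, Ne.symm ru, Ne.symm rv, rfl⟩)
  have key : ∀ x y z, x ≠ y → x ≠ z → y ≠ z → ({u, v, r} : Finset Pt3) = {x, y, z} →
      τ.mark {u, v, r} = {x, y} → tri p q s (bis a b w) = bis u v w := by
    intro x y z xy xz yz e hm
    have e' : ∀ i, (i = u ∨ i = v ∨ i = r) ↔ (i = x ∨ i = y ∨ i = z) := by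
      intro i
      have := Finset.ext_iff.1 e i
      simpa only [Finset.mem_insert, Finset.mem_singleton] using this
    have hw' : Rep {u, v, r} w := ⟨hw.1, fun i hi => hw.2 i (by
      simp only [Finset.mem_insert, Finset.mem_singleton, not_or] at hi ⊢
      exact ⟨hi.1, hi.2.1⟩)⟩
    rw [e] at hI hm hw'
    rw [(o.face xy xz yz hI hm hw' hle).1]
    exact tri_zero o.is.ind (hI (by simp)) (hI (by simp)) (hI (by simp)) xy xz yz ru rv uv
      (fun i => (e' i).symm.trans (by tauto)) hw.1 hr0
  rcases edge_cases uv (Ne.symm ru) (Ne.symm rv) h1 h2 with h | h | h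
  · exact key u v r uv (Ne.symm ru) (Ne.symm rv) rfl h
  · exact key u r v (Ne.symm ru) uv rv (by rw [Finset.pair_comm]) h
  · exact key v r u (Ne.symm rv) (Ne.symm uv) ru
      (by ext i; simp only [Finset.mem_insert, Finset.mem_singleton, or_comm, or_left_comm]) h

/-- A weight at a single vertex is not changed by bisections. -/
theorem Out.point (o : Out τ υ a b c d p q s t m2 f) (g : Good τ) {I : Finset Pt3}
    (hI : I ⊆ τ.V) (hc : I.card ≤ 1) {w : Wt} (hw : Rep I w) (hle : w b ≤ w a) :
    tri p q s (bis a b w) = w := by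
  obtain ⟨u, hu, hIu⟩ : ∃ u ∈ τ.V, I ⊆ {u} := by
    rcases I.eq_empty_or_nonempty with rfl | ⟨u, hu⟩
    · exact ⟨a, o.mem.1, by simp⟩
    · exact ⟨u, hI hu, fun x hx => by simpa using Finset.card_le_one.1 hc x hx u hu⟩
  obtain ⟨v, hv, hvu⟩ : ∃ r ∈ τ.V, r ∉ ({u} : Finset Pt3) := by
    apply Finset.exists_mem_notMem_of_card_lt_card
    rw [g.card, Finset.card_singleton]; norm_num
  have hv0 : w v = 0 := hw.2 _ fun h => hvu (hIu h)
  rw [o.line g (u := u) (v := v) (fun h => hvu (by simp [h])) hu hv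
    ⟨hw.1, fun i hi => hw.2 i fun h => hi (by have := hIu h; simp only [Finset.mem_singleton] at this; simp [this])⟩ hle]
  exact bis_trivial hw.1 (Or.inr hv0)

/-- If `τ` and `σ` share a weight `w`, the weights obtained from it on great-grandchildren of `τ` and
of `σ` agree, and so do the markings of a common face on which this weight is nonzero. The support
of `w` lies in the set of common vertices, and its size decides which of the preceding lemmas
applies. -/
theorem Out.match (o : Out τ υ a b c d p q s t m2 f) (o' : Out σ υ' a' b' c' d' p' q' s' t' m2' f')
    (g : Good τ) (g' : Good σ)
    (hK : ∀ F : Finset Pt3, F.card = 3 → F ⊆ τ.V → F ⊆ σ.V → τ.mark F = σ.mark F)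
    (hD : τ.V = σ.V → τ = σ) {w : Wt} (hw : Rep τ.V w) (hw' : Rep σ.V w)
    (hle : w b ≤ w a) (hle' : w b' ≤ w a') :
    tri p q s (bis a b w) = tri p' q' s' (bis a' b' w) ∧
    ∀ F : Finset Pt3, F.card = 3 → F ⊆ υ.V → F ⊆ υ'.V →
      (∀ r ∈ F, tri p q s (bis a b w) r ≠ 0) → υ.mark F = υ'.mark F := by
  have hI : Rep (τ.V ∩ σ.V) w := ⟨hw.1, fun x hx => by
    by_cases h : x ∈ τ.V
    · exact hw'.2 x fun h' => hx (Finset.mem_inter.2 ⟨h, h'⟩)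
    · exact hw.2 x h⟩
  have hsub : τ.V ∩ σ.V ⊆ τ.V := Finset.inter_subset_left
  have hsub' : τ.V ∩ σ.V ⊆ σ.V := Finset.inter_subset_right
  have hcard := Finset.card_le_card hsub
  rw [g.card] at hcard
  generalize hIdef : τ.V ∩ σ.V = I at *
  have h01 : I.card ≤ 1 ∨ I.card = 2 ∨ I.card = 3 ∨ I.card = 4 := by omega
  rcases h01 with h | h | h | h
  · rw [o.point g hsub h hI hle, o'.point g' hsub' h hI hle']
    refine ⟨rfl, fun F hF _ _ hr => ?_⟩
    have : F ⊆ I := fun r hrF => by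
      by_contra h'; exact hr r hrF (hI.2 r h')
    have := Finset.card_le_card this
    omega
  · obtain ⟨u, v, uv, rfl⟩ := Finset.card_eq_two.1 h
    have hu := hsub (Finset.mem_insert_self u {v})
    have hv := hsub (show v ∈ ({u, v} : Finset Pt3) by simp)
    rw [o.line g uv hu hv hI hle, o'.line g' uv (hsub' (by simp)) (hsub' (by simp)) hI hle']
    refine ⟨rfl, fun F hF hFV _ hr => ?_⟩
    exfalso
    obtain ⟨rfl, -⟩ := eq_triple (x := u) (y := v) (z := mid u v) hF (by
      intro x hx
      rcases bis_supp (hr x hx) with h | h | h | h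
      · exact Or.inl h
      · exact Or.inr (Or.inl h)
      · exact Or.inr (Or.inr h)
      have : x ∈ ({u, v} : Finset Pt3) := by
        by_contra h4; exact h (hI.2 _ h4)
      simp only [Finset.mem_insert, Finset.mem_singleton] at this
      rcases this with h | h
      · exact Or.inl h
      · exact Or.inr (Or.inl h))
    exact uv ((o.sub_corner hu (hFV (by simp))).trans (o.sub_corner hv (hFV (by simp))).symm)
  · obtain ⟨h1, h2⟩ := g.mark_edge hsub h
    obtain ⟨u, v, uv, hm⟩ := Finset.card_eq_two.1 h2
    obtain ⟨r, hr, hrm⟩ := Finset.exists_mem_notMem_of_card_lt_card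
      (show (τ.mark I).card < I.card by omega)
    rw [hm] at h1 hrm
    simp only [Finset.mem_insert, Finset.mem_singleton, not_or] at hrm
    have hu : u ∈ I := h1 (by simp)
    have hv : v ∈ I := h1 (by simp)
    have e : ({u, v, r} : Finset Pt3) = I := by
      apply Finset.eq_of_subset_of_card_le
      · intro x hx
        simp only [Finset.mem_insert, Finset.mem_singleton] at hx
        rcases hx with rfl | rfl | rfl <;> assumption
      · rw [h, Finset.card_eq_three.2 ⟨u, v, r, uv, Ne.symm hrm.1, Ne.symm hrm.2, rfl⟩]
    have hm' : σ.mark I = {u, v} := by rw [← hm]; exact (hK I h hsub hsub').symm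
    rw [← e] at hm hm' hsub hsub' hI
    obtain ⟨k1, k2⟩ := o.face uv (Ne.symm hrm.1) (Ne.symm hrm.2) hsub hm hI hle
    obtain ⟨k1', k2'⟩ := o'.face uv (Ne.symm hrm.1) (Ne.symm hrm.2) hsub' hm' hI hle'
    refine ⟨k1.trans k1'.symm, fun F hF hFV hFV' hr => ?_⟩
    rw [k2 F hF hFV hr, k2' F hF hFV' (by rw [k1', ← k1]; exact hr)]
  · have e1 : I = τ.V := Finset.eq_of_subset_of_card_le hsub (by rw [g.card, h])
    have e2 : I = σ.V := Finset.eq_of_subset_of_card_le hsub' (by rw [g'.card, h])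
    have := hD (e1.symm.trans e2)
    subst this
    obtain ⟨k1, k2⟩ := o.same o' hw.1 hle hle'
    exact ⟨k1, fun F h1 h2 h3 h4 => k2 F h1 h2 h3 h4 hw.2⟩
end

/-! ### The invariant of uniform refinements -/

/-- Uniform bisection of all tetrahedra of a mesh. -/
def nxt (A : Set MTet) : Set MTet := {υ | ∃ τ ∈ A, ∃ c ∈ τ.ref, υ = τ.child c}

/-- Two tetrahedra of `A` that share an interior point are equal. -/
def Disj (A : Set MTet) : Prop := ∀ τ ∈ A, ∀ σ ∈ A, ∀ w w' : Wt, Rep τ.V w → Rep σ.V w' →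
  (∀ p ∈ τ.V, 0 < w p) → (∀ p ∈ σ.V, 0 < w' p) → L w = L w' → τ = σ

/-- Unflagged conformingly-marked collections of tetrahedra, phrased with weights: `uniq` says that a
common point of two tetrahedra has the same barycentric coordinates in both, which is conformity. -/
structure Inv (A : Set MTet) : Prop where
  good : ∀ τ ∈ A, Good τ
  uniq : ∀ τ ∈ A, ∀ σ ∈ A, ∀ w w' : Wt, Rep τ.V w → Rep σ.V w' → L w = L w' → w = w'
  disj : Disj A
  mark : ∀ τ ∈ A, ∀ σ ∈ A, ∀ F : Finset Pt3, F.card = 3 → F ⊆ τ.V → F ⊆ σ.V →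
    τ.mark F = σ.mark F

theorem HasCore.of_mem {τ : MTet} (h : HasCore τ) {a : Pt3} (ha : a ∈ τ.ref) :
    ∃ b c d, Core τ a b c d := by
  obtain ⟨a', b, c, d, h⟩ := h
  rw [h.ref] at ha
  simp only [Finset.mem_insert, Finset.mem_singleton] at ha
  rcases ha with rfl | rfl
  · exact ⟨_, _, _, h⟩
  · exact ⟨_, _, _, h.swap⟩

/-- The strict inequality in `Core.step_up` tells the two children of a tetrahedron apart. -/
theorem Disj.nxt {A : Set MTet} (hA : ∀ τ ∈ A, HasCore τ) (h : Disj A) : Disj (nxt A) := by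
  rintro _ ⟨τ, hτ, a, ha, rfl⟩ _ ⟨σ, hσ, a', ha', rfl⟩ w w' hw hw' hp hp' e
  obtain ⟨b, c, d, hc⟩ := (hA τ hτ).of_mem ha
  obtain ⟨b', c', d', hc'⟩ := (hA σ hσ).of_mem ha'
  obtain ⟨v, r, l, -, -, k⟩ := hc.step_up hw
  obtain ⟨v', r', l', -, -, k'⟩ := hc'.step_up hw'
  obtain ⟨k1, k2⟩ := k hp
  obtain ⟨k1', k2'⟩ := k' hp'
  have hl : L v = L v' := by rw [l, l', e]
  have := h τ hτ σ hσ v v' r r' k1 k1' hl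
  subst this
  have := hc.ind.unique r.2 r'.2 hl
  subst this
  rcases pair_eq (hc.ref.symm.trans hc'.ref) hc.ab with ⟨rfl, rfl⟩ | ⟨rfl, rfl⟩
  · rfl
  · exact absurd k2 (not_lt.2 k2'.le)

theorem exists_uniform {F : Finset Pt3} :
    ∃ w : Wt, (∀ x ∈ F, w x = 1) ∧ ∀ V : Finset Pt3, F ⊆ V → Rep V w := by
  refine ⟨Finsupp.indicator F fun _ _ => 1, fun x hx => Finsupp.indicator_of_mem hx _,
    fun V hV => ⟨fun x => ?_, fun x hx => Finsupp.indicator_of_notMem (fun h => hx (hV h)) _⟩⟩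
  by_cases hx : x ∈ F
  · rw [Finsupp.indicator_of_mem hx]; exact zero_le_one
  · rw [Finsupp.indicator_of_notMem hx]

theorem Inv.eq_of_V {A : Set MTet} (h : Inv A) {τ σ : MTet} (hτ : τ ∈ A) (hσ : σ ∈ A)
    (e : τ.V = σ.V) : τ = σ := by
  obtain ⟨w, hw1, hw⟩ := exists_uniform (F := τ.V)
  have hp : ∀ p ∈ τ.V, 0 < w p := fun p hp => by rw [hw1 p hp]; exact one_pos
  exact h.disj τ hτ σ hσ w w (hw _ subset_rfl) (hw _ e.le) hp (e ▸ hp) rfl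

theorem Inv.core {A : Set MTet} (h : Inv A) : (∀ τ ∈ A, HasCore τ) ∧ (∀ τ ∈ nxt A, HasCore τ) ∧
    ∀ τ ∈ nxt (nxt A), HasCore τ := by
  refine ⟨fun τ hτ => (h.good τ hτ).hasCore, ?_, ?_⟩
  · rintro _ ⟨τ, hτ, a, ha, rfl⟩
    exact (h.good τ hτ).hasCore₁ ha
  · rintro _ ⟨_, ⟨τ, hτ, a, ha, rfl⟩, a', ha', rfl⟩
    exact (h.good τ hτ).hasCore₂ ha ha'

/-- Three uniform bisections preserve the invariant. -/
theorem Inv.step {A : Set MTet} (h : Inv A) : Inv (nxt (nxt (nxt A))) where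
  good := by
    rintro _ ⟨_, ⟨_, ⟨τ, hτ, c₁, h₁, rfl⟩, c₂, h₂, rfl⟩, c₃, h₃, rfl⟩
    obtain ⟨a, b, c, d, p, q, s, t, m2, f, o⟩ := (h.good τ hτ).out h₁ h₂ h₃
    exact o.good
  uniq := by
    rintro _ ⟨_, ⟨_, ⟨τ, hτ, c₁, h₁, rfl⟩, c₂, h₂, rfl⟩, c₃, h₃, rfl⟩
      _ ⟨_, ⟨_, ⟨σ, hσ, c₁', h₁', rfl⟩, c₂', h₂', rfl⟩, c₃', h₃', rfl⟩ w w' hw hw' e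
    obtain ⟨a, b, c, d, p, q, s, t, m2, f, o⟩ := (h.good τ hτ).out h₁ h₂ h₃
    obtain ⟨a', b', c', d', p', q', s', t', m2', f', o'⟩ := (h.good σ hσ).out h₁' h₂' h₃'
    obtain ⟨v, r, l, hle, rfl⟩ := o.pull w hw
    obtain ⟨v', r', l', hle', rfl⟩ := o'.pull w' hw'
    have := h.uniq τ hτ σ hσ v v' r r' (by rw [l, l', e])
    subst this
    exact (o.match o' (h.good τ hτ) (h.good σ hσ) (h.mark τ hτ σ hσ) (h.eq_of_V hτ hσ)
      r r' hle hle').1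
  disj := by
    obtain ⟨h1, h2, h3⟩ := h.core
    exact ((h.disj.nxt h1).nxt h2).nxt h3
  mark := by
    rintro _ ⟨_, ⟨_, ⟨τ, hτ, c₁, h₁, rfl⟩, c₂, h₂, rfl⟩, c₃, h₃, rfl⟩
      _ ⟨_, ⟨_, ⟨σ, hσ, c₁', h₁', rfl⟩, c₂', h₂', rfl⟩, c₃', h₃', rfl⟩ F hF hFV hFV'
    obtain ⟨a, b, c, d, p, q, s, t, m2, f, o⟩ := (h.good τ hτ).out h₁ h₂ h₃
    obtain ⟨a', b', c', d', p', q', s', t', m2', f', o'⟩ := (h.good σ hσ).out h₁' h₂' h₃'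
    -- The uniform weight on `F` is a common weight of both descendants that is nonzero on `F`.
    obtain ⟨w, hw1, hw⟩ := exists_uniform (F := F)
    obtain ⟨v, r, l, hle, e⟩ := o.pull w (hw _ hFV)
    obtain ⟨v', r', l', hle', -⟩ := o'.pull w (hw _ hFV')
    have := h.uniq τ hτ σ hσ v v' r r' (by rw [l, l'])
    subst this
    refine (o.match o' (h.good τ hτ) (h.good σ hσ) (h.mark τ hτ σ hσ) (h.eq_of_V hτ hσ)
      r r' hle hle').2 F hF hFV hFV' fun x hx => ?_
    rw [← e, hw1 x hx]
    exact one_ne_zero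

theorem L_eq {V : Finset Pt3} {w : Wt} (hw : ∀ p ∉ V, w p = 0) :
    L w = (∑ p ∈ V, w p, ∑ p ∈ V, w p • p) := by
  have hs : w.support ⊆ V := by
    intro p hp
    by_contra hpV
    exact (Finsupp.mem_support_iff.1 hp) (hw p hpV)
  rw [L, Finsupp.linearCombination_apply, Finsupp.sum_of_support_subset _ hs _ (by simp)]
  ext1 <;> simp [Prod.fst_sum, Prod.snd_sum]

theorem mem_hull {V : Finset Pt3} {x : Pt3} :
    x ∈ convexHull ℝ (V : Set Pt3) ↔ ∃ w, Rep V w ∧ L w = (1, x) := by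
  rw [Finset.mem_convexHull']
  constructor
  · rintro ⟨w, h0, h1, h2⟩
    have hw : ∀ p ∉ V, Finsupp.indicator V (fun p _ => w p) p = 0 :=
      fun p hp => Finsupp.indicator_of_notMem hp _
    have e : ∀ p ∈ V, Finsupp.indicator V (fun p _ => w p) p = w p :=
      fun p hp => Finsupp.indicator_of_mem hp _
    refine ⟨Finsupp.indicator V fun p _ => w p, ⟨fun p => ?_, hw⟩, ?_⟩
    · by_cases hp : p ∈ V
      · rw [e p hp]; exact h0 p hp
      · rw [hw p hp]
    · rw [L_eq hw, Finset.sum_congr rfl e, h1,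
        Finset.sum_congr rfl (fun p hp => by rw [e p hp]), h2]
  · rintro ⟨w, hw, e⟩
    rw [L_eq hw.2, Prod.mk.injEq] at e
    exact ⟨w, fun p _ => hw.1 p, e.1, e.2⟩

theorem Rep.smul {V : Finset Pt3} {w : Wt} (h : Rep V w) {r : ℝ} (hr : 0 ≤ r) : Rep V (r • w) :=
  ⟨fun p => by simpa using mul_nonneg hr (h.1 p), fun p hp => by simp [h.2 p hp]⟩

theorem Rep.mono {V W : Finset Pt3} (hVW : V ⊆ W) {w : Wt} (h : Rep V w) : Rep W w :=
  ⟨h.1, fun p hp => h.2 p fun h' => hp (hVW h')⟩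

theorem Rep.eq_zero {V : Finset Pt3} {w : Wt} (h : Rep V w) (e : (L w).1 = 0) : w = 0 := by
  rw [L_eq h.2] at e
  rw [Finset.sum_eq_zero_iff_of_nonneg fun p _ => h.1 p] at e
  ext p
  by_cases hp : p ∈ V
  · exact e p hp
  · exact h.2 p hp

/-- In a conforming mesh, a point common to two tetrahedra has the same barycentric coordinates in
both, supported on a common face, edge or vertex. -/
theorem conforming_common {A : Set MTet} (h : Conforming A) (hi : ∀ τ ∈ A, Ind τ.V) {τ σ : MTet}
    (hτ : τ ∈ A) (hσ : σ ∈ A) (hne : τ ≠ σ) {w w' : Wt} (hw : Rep τ.V w) (hw' : Rep σ.V w')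
    (e : L w = L w') : w = w' ∧ ∃ F : Finset Pt3, F.card ≤ 3 ∧ F ⊆ τ.V ∧ Rep F w := by
  have hs0 : 0 ≤ (L w).1 := by
    rw [L_eq hw.2]; exact Finset.sum_nonneg fun p _ => hw.1 p
  -- A weight of total mass zero vanishes; otherwise it is rescaled to barycentric coordinates.
  rcases hs0.eq_or_lt with hs | hs
  · have h1 := hw.eq_zero hs.symm
    have h2 := hw'.eq_zero (by rw [← e, ← hs])
    exact ⟨by rw [h1, h2], ∅, by simp, by simp, by rw [h1]; exact ⟨by simp, by simp⟩⟩
  have body : ∀ {V : Finset Pt3} {v : Wt}, Rep V v → L v = L w →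
      (L w).1⁻¹ • (L w).2 ∈ convexHull ℝ (V : Set Pt3) := by
    intro V v hv hvw
    refine mem_hull.2 ⟨(L w).1⁻¹ • v, hv.smul (inv_nonneg.2 hs.le), ?_⟩
    rw [map_smul, hvw]
    ext1
    · simp [hs.ne']
    · simp
  have hx : (L w).1⁻¹ • (L w).2 ∈ τ.body ∩ σ.body := ⟨body hw rfl, body hw' e.symm⟩
  have key : ∃ F : Finset Pt3, F.card ≤ 3 ∧ F ⊆ τ.V ∧ F ⊆ σ.V ∧
      (L w).1⁻¹ • (L w).2 ∈ convexHull ℝ (F : Set Pt3) := by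
    rcases h τ hτ σ hσ hne with h | ⟨v, h1, h2, h⟩ | ⟨F, h0, h1, h2, h⟩ | ⟨F, h0, h1, h2, h⟩
    · rw [h] at hx; exact absurd hx (Set.notMem_empty _)
    · exact ⟨{v}, by simp, by simpa using h1, by simpa using h2, by
        rw [h] at hx; simpa [convexHull_singleton] using hx⟩
    · exact ⟨F, by omega, h1, h2, by rw [h] at hx; exact hx⟩
    · exact ⟨F, by omega, h1, h2, by rw [h] at hx; exact hx⟩
  obtain ⟨F, hF, h1, h2, hxF⟩ := key
  obtain ⟨v, hv, hL⟩ := mem_hull.1 hxF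
  have hv' := hv.smul hs.le
  have hL' : L ((L w).1 • v) = L w := by
    rw [map_smul, hL]
    ext1
    · simp
    · simp [smul_smul, hs.ne']
  have e1 := (hi τ hτ).unique hw.2 (hv'.mono h1).2 hL'.symm
  have e2 := (hi σ hσ).unique hw'.2 (hv'.mono h2).2 (by rw [hL', e])
  exact ⟨e1.trans e2.symm, F, hF, h1, e1 ▸ hv'⟩

theorem good_of_valid {τ : MTet} (h : τ.Valid) (hf : τ.flag = false) : Good τ := by
  obtain ⟨hc, hi, hr, hr2, hm⟩ := h
  obtain ⟨a, b, ab, href⟩ := Finset.card_eq_two.1 hr2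
  have hsd : (τ.V \ τ.ref).card = 2 := by rw [Finset.card_sdiff_of_subset hr]; omega
  obtain ⟨c, d, cd, hcd⟩ := Finset.card_eq_two.1 hsd
  have hV : τ.V = {a, b, c, d} := by
    rw [← Finset.sdiff_union_of_subset hr, hcd, href]
    ext x
    simp only [Finset.mem_union, Finset.mem_insert, Finset.mem_singleton]
    tauto
  have hc' : c ∉ τ.ref := (Finset.mem_sdiff.1 (hcd ▸ Finset.mem_insert_self c {d})).2
  have hd' : d ∉ τ.ref := (Finset.mem_sdiff.1 (hcd ▸ (by simp : d ∈ ({c, d} : Finset Pt3)))).2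
  rw [href] at hc' hd'
  simp only [Finset.mem_insert, Finset.mem_singleton, not_or] at hc' hd'
  have hcore : Core τ a b c d :=
    { ind := ind_affine.2 hi, V := hV, ref := href, ab := ab, ac := Ne.symm hc'.1,
      ad := Ne.symm hd'.1, bc := Ne.symm hc'.2, bd := Ne.symm hd'.2, cd := cd }
  have hm' : ∀ x y z : Pt3, x ≠ y → x ≠ z → y ≠ z → x ∈ τ.V → y ∈ τ.V → z ∈ τ.V →
      τ.mark {x, y, z} ⊆ {x, y, z} ∧ (τ.mark {x, y, z}).card = 2 ∧
      (τ.ref ⊆ {x, y, z} → τ.mark {x, y, z} = τ.ref) := by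
    intro x y z xy xz yz hx hy hz
    refine hm {x, y, z} ?_ (Finset.card_eq_three.2 ⟨x, y, z, xy, xz, yz, rfl⟩)
    intro u hu
    simp only [Finset.mem_insert, Finset.mem_singleton] at hu
    rcases hu with rfl | rfl | rfl <;> assumption
  have ha : a ∈ τ.V := by simp [hV]
  have hb : b ∈ τ.V := by simp [hV]
  have hcV : c ∈ τ.V := by simp [hV]
  have hdV : d ∈ τ.V := by simp [hV]
  obtain ⟨h1, h2, -⟩ := hm' a c d hcore.ac hcore.ad cd ha hcV hdV
  obtain ⟨h3, h4, -⟩ := hm' b c d hcore.bc hcore.bd cd hb hcV hdV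
  refine ⟨a, b, c, d, _, _,
    { toCore := hcore, abc := ?_, abd := ?_, acd := rfl, bcd := rfl, flag := hf },
    ⟨h1, h2⟩, h3, h4⟩
  · rw [(hm' a b c ab hcore.ac hcore.bc ha hb hcV).2.2 (by rw [href]; intro x; simp; tauto), href]
  · rw [(hm' a b d ab hcore.ad hcore.bd ha hb hdV).2.2 (by rw [href]; intro x; simp; tauto), href]

theorem inv_zero {A : Set MTet} (h : ConforminglyMarked A) (hf : ∀ τ ∈ A, τ.flag = false) :
    Inv A := by
  obtain ⟨⟨-, hv, -⟩, hc, hm⟩ := h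
  have hi : ∀ τ ∈ A, Ind τ.V := fun τ hτ => ind_affine.2 (hv τ hτ).2.1
  refine ⟨fun τ hτ => good_of_valid (hv τ hτ) (hf τ hτ), ?_, ?_, hm⟩
  · intro τ hτ σ hσ w w' hw hw' e
    by_cases hne : τ = σ
    · subst hne
      exact (hi τ hτ).unique hw.2 hw'.2 e
    · exact (conforming_common hc hi hτ hσ hne hw hw' e).1
  · intro τ hτ σ hσ w w' hw hw' hp _ e
    by_contra hne
    obtain ⟨-, F, hF, -, hwF⟩ := conforming_common hc hi hτ hσ hne hw hw' e
    obtain ⟨p, hpV, hpF⟩ := Finset.exists_mem_notMem_of_card_lt_card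
      (show F.card < τ.V.card by rw [(hv τ hτ).1]; omega)
    have := hp p hpV
    rw [hwF.2 p hpF] at this
    exact lt_irrefl _ this

/-! ### Local refinement -/

/-- The `n`-fold uniform bisection of `A`. -/
def Q (A : Set MTet) : ℕ → Set MTet
  | 0 => A
  | n + 1 => nxt (Q A n)

section
variable {A : Set MTet}

theorem Q_inv (h : Inv A) (k : ℕ) : Inv (Q A (3 * k)) := by
  induction k with
  | zero => exact h
  | succ k ih => exact ih.step

theorem Q_core (h : Inv A) (n : ℕ) : ∀ τ ∈ Q A n, HasCore τ := by
  obtain ⟨h0, h1, h2⟩ := (Q_inv h (n / 3)).core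
  have hn : n = 3 * (n / 3) ∨ n = 3 * (n / 3) + 1 ∨ n = 3 * (n / 3) + 2 := by omega
  rcases hn with hn | hn | hn <;> rw [hn]
  · exact h0
  · exact h1
  · exact h2

theorem Q_vertex (h : Inv A) {n m : ℕ} (hnm : n ≤ m) {σ : MTet} (hσ : σ ∈ Q A n) {ν : Pt3}
    (hν : ν ∈ σ.V) : ∃ υ ∈ Q A m, ν ∈ υ.V := by
  induction m, hnm using Nat.le_induction with
  | base => exact ⟨σ, hσ, hν⟩
  | succ m _ ih =>
    obtain ⟨υ, hυ, hv⟩ := ih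
    obtain ⟨a, b, c, d, hc⟩ := Q_core h m υ hυ
    by_cases hb : ν = b
    · exact ⟨υ.child b, ⟨υ, hυ, b, by simp [hc.ref], rfl⟩, by rw [hc.swap.child_V]; simp [hb]⟩
    · refine ⟨υ.child a, ⟨υ, hυ, a, by simp [hc.ref], rfl⟩, ?_⟩
      rw [hc.V] at hv
      rw [hc.child_V]
      simp only [Finset.mem_insert, Finset.mem_singleton] at hv ⊢
      rcases hv with h | h | h | h
      · exact Or.inr (Or.inl h)
      · exact absurd h hb
      · exact Or.inr (Or.inr (Or.inl h))
      · exact Or.inr (Or.inr (Or.inr h))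

theorem Q_gen (hg : ∀ τ ∈ A, τ.gen = 0) (n : ℕ) : ∀ τ ∈ Q A n, τ.gen = n := by
  induction n with
  | zero => exact hg
  | succ n ih =>
    rintro _ ⟨τ, hτ, a, -, rfl⟩
    rw [child_gen, ih τ hτ]

/-- The `3k`-fold uniform bisection is conforming, and vertices persist under bisection; so no vertex
of generation at most `3k` hangs on a tetrahedron of generation `3k`. -/
theorem not_hanging (h : Inv A) {k n : ℕ} {τ σ : MTet} (hτ : τ ∈ Q A (3 * k)) (hn : n ≤ 3 * k)
    (hσ : σ ∈ Q A n) {ν : Pt3} (hν : ν ∈ σ.V) (hb : ν ∈ τ.body) : ν ∈ τ.V := by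
  obtain ⟨υ, hυ, hv⟩ := Q_vertex h hn hσ hν
  obtain ⟨w, hw, hL⟩ := mem_hull.1 hb
  have hr : Rep υ.V (Finsupp.single ν 1) := by
    refine ⟨fun p => ?_, fun p hp => ?_⟩
    · by_cases hp : ν = p
      · simp [hp]
      · simp [hp]
    · have : ν ≠ p := fun h => hp (h ▸ hv)
      simp [this]
  have e := (Q_inv h k).uniq τ hτ υ hυ w _ hw hr (by rw [hL, L_single, one_smul])
  by_contra hp
  have := hw.2 ν hp
  rw [e] at this
  simp at this

/-- All tetrahedra of `T` arise from `A` by at most `k` bisections. -/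
def Upto (A : Set MTet) (k : ℕ) (T : Set MTet) : Prop := ∀ τ ∈ T, ∃ n ≤ k, τ ∈ Q A n

theorem Upto.bisect {k : ℕ} {T S : Set MTet} (h : Upto A k T) (hS : S ⊆ T) :
    Upto A (k + 1) (bisectTets T S) := by
  rintro τ (⟨hτ, -⟩ | hτ)
  · obtain ⟨n, hn, h⟩ := h τ hτ
    exact ⟨n, by omega, h⟩
  · simp only [Set.mem_iUnion] at hτ
    obtain ⟨σ, hσ, c, hc, rfl⟩ := hτ
    obtain ⟨n, hn, h⟩ := h σ (hS hσ)
    exact ⟨n + 1, by omega, σ, h, c, hc, rfl⟩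

theorem Upto.conformStep (hA : Inv A) {k : ℕ} {T : Set MTet} (h : Upto A (3 * k) T) :
    Upto A (3 * k) (conformStep T) := by
  rintro τ (⟨hτ, -⟩ | hτ)
  · exact h τ hτ
  · simp only [Set.mem_iUnion] at hτ
    obtain ⟨σ, ⟨hσ, ρ, hρ, ν, hν, hb, hnot⟩, c, hc, rfl⟩ := hτ
    obtain ⟨n, hn, h'⟩ := h σ hσ
    -- Only a tetrahedron of generation less than `3k` can have a hanging node.
    rcases hn.lt_or_eq with hlt | rfl
    · exact ⟨n + 1, hlt, σ, h', c, hc, rfl⟩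
    · obtain ⟨m, hm, h''⟩ := h ρ hρ
      exact absurd (not_hanging hA h' hm h'' hν hb) hnot

theorem Upto.refine (hA : Inv A) {k : ℕ} {T : Set MTet} (h : Upto A (3 * k) T) :
    Upto A (3 * k) (refineToConformity T) := by
  have key : ∀ N, Upto A (3 * k) (_root_.conformStep^[N] T) := by
    intro N
    induction N with
    | zero => exact h
    | succ N ih => rw [Function.iterate_succ_apply']; exact ih.conformStep hA
  unfold refineToConformity
  split_ifs with hN
  · exact key _
  · exact h

theorem Upto.localRefine (hA : Inv A) {k : ℕ} {T S : Set MTet} (h : Upto A (3 * k) T)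
    (hS : S ⊆ T) : Upto A (3 * (k + 1)) (localRefine T S) := by
  refine Upto.refine hA fun τ hτ => ?_
  obtain ⟨n, hn, h'⟩ := h.bisect hS τ hτ
  exact ⟨n, by omega, h'⟩

end

end Bisection

/-- Let `T₀` be a conformingly-marked tetrahedral mesh with no flagged
tetrahedron and all generations `0`, and let `T_{k+1} = LocalRefine(T_k, S_k)` for arbitrary
`S_k ⊆ T_k`.  Then for each `k`, every tetrahedron of `T_k` has generation at most `3k`. -/
theorem localRefine_generation_bound
    (T S : ℕ → Set MTet)
    (h0 : ConforminglyMarked (T 0))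
    (hflag : ∀ τ ∈ T 0, τ.flag = false)
    (hgen : ∀ τ ∈ T 0, τ.gen = 0)
    (hS : ∀ k, S k ⊆ T k)
    (hT : ∀ k, T (k + 1) = localRefine (T k) (S k)) :
    ∀ k, ∀ τ ∈ T k, τ.gen ≤ 3 * k := by
  have hA := Bisection.inv_zero h0 hflag
  have key : ∀ k, Bisection.Upto (T 0) (3 * k) (T k) := by
    intro k
    induction k with
    | zero => exact fun τ hτ => ⟨0, le_rfl, hτ⟩
    | succ k ih => rw [hT k]; exact ih.localRefine hA (hS k)
  intro k τ hτ
  obtain ⟨n, hn, h⟩ := key k τ hτ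
  rw [Bisection.Q_gen hgen n τ h]
  exact hn
end
end

section
/- Let T₀ be a conformingly-marked tetrahedral mesh in which no tetrahedron is flagged, and for k = 0, 1, 2, …, let S_k ⊆ T_k be arbitrary and set T_{k+1} = LocalRefine(T_k, S_k). If for some integer m the maximum generation of a tetrahedron in T_k is less than 3m, then the maximum generation of a tetrahedron in T_{k+1} is at most 3m. -/
/-!
The heart of the matter is that `3 m` rounds of uniform bisection of the initial mesh produce a
family of tetrahedra without hanging nodes. Granting this, consider a mesh all of whose members have
generation at most `3 m`. Each member is a descendant of an initial tetrahedron, so each of its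
vertices is also a vertex of the uniform refinement of level `3 m`. A member of generation exactly
`3 m` belongs to that refinement, so it has no hanging node and `RefineToConformity` never bisects
it (`conform_gen`). Bisecting tetrahedra of generation less than `3 m` gives generation at most
`3 m`, and the bound persists.

For the uniform refinement, call two tetrahedra compatible at a common point `x` (`Agree`) if the
barycentric coordinates of `x` coincide as weights on points of space, and the carrier of `x`
receives the same mark from both when it is a face, and determines the tetrahedron when it is
three-dimensional. For a conformingly-marked mesh this holds at all common points
(`Coherent.base`), and it rules out hanging nodes (`Coherent.vertex`). It is preserved by three
successive uniform bisections of unflagged tetrahedra (`Coherent.next_three`), for the following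
reason.

During such a round, call a vertex old if it was present at the start. Every refinement edge joins
two old vertices and each bisection removes one of the four (`J`), so after the third only one old
vertex remains. Follow the local data of a point (`st`): its coordinates, the old vertices of its
carrier, and the mark on the carrier or the tetrahedron itself. A bisection either changes nothing,
namely when the point lies in the inherited face, or performs a step that is determined by the
local data alone (`Step.det`). Local data with at most one old vertex allow no further step.
Therefore two compatible tetrahedra, whose bisections may take effect at the point at different
stages, reach the same final data (`Step.confluent`), and their descendants are again compatible.

Flags return to unset after three bisections (`block`). This and the agreement of the marks on a
new face (`Bis.new_eq`) rest on the fact that a flagged tetrahedron has an apex, a vertex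
opposite to the marked edge in each face through it (`Good`, `Apex`).
-/

noncomputable section
open scoped Classical

/-! ### Barycentric coordinates in a simplex and in its two halves -/

section Barycentric
variable {E : Type*} [AddCommGroup E] [Module ℝ E]

/-- The sum of the coefficients of a formal combination of points. -/
def mass : (E →₀ ℝ) →ₗ[ℝ] ℝ :=
  Finsupp.linearCombination ℝ (fun _ => (1 : ℝ))

/-- The point of `E` represented by a formal combination of points. -/
def bary : (E →₀ ℝ) →ₗ[ℝ] E := Finsupp.linearCombination ℝ id

theorem mass_single (v : E) (r : ℝ) : mass (Finsupp.single v r) = r := by simp [mass]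

theorem bary_single (v : E) (r : ℝ) : bary (Finsupp.single v r) = r • v := by simp [bary]

/-- Affine independence of a finite set of points, phrased with finitely supported coefficients on
all of `E`, so that coordinates with respect to different simplices can be compared directly. -/
def AI (V : Finset E) : Prop :=
  ∀ w : E →₀ ℝ, w.support ⊆ V → mass w = 0 → bary w = 0 → w = 0

/-- `w` is the vector of barycentric coordinates of `x` in the simplex with vertex set `V`,
extended by zero outside `V`. -/
structure BRep (V : Finset E) (w : E →₀ ℝ) (x : E) : Prop where
  supp : w.support ⊆ V
  nonneg : ∀ v, 0 ≤ w v
  mass_eq : mass w = 1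
  bary_eq : bary w = x

theorem BRep.unique {V : Finset E} (hV : AI V) {w w' : E →₀ ℝ} {x : E}
    (h : BRep V w x) (h' : BRep V w' x) : w = w' := by
  refine sub_eq_zero.1 (hV (w - w') ?_ ?_ ?_)
  · intro v hv
    by_contra hvV
    have h1 : w v = 0 := by by_contra h0; exact hvV (h.supp (Finsupp.mem_support_iff.2 h0))
    have h2 : w' v = 0 := by by_contra h0; exact hvV (h'.supp (Finsupp.mem_support_iff.2 h0))
    simp [h1, h2] at hv
  · rw [map_sub, h.mass_eq, h'.mass_eq, sub_self]
  · rw [map_sub, h.bary_eq, h'.bary_eq, sub_self]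

theorem mem_hull_iff {V : Finset E} {x : E} :
    x ∈ convexHull ℝ (V : Set E) ↔ ∃ w, BRep V w x := by
  rw [Finset.mem_convexHull']
  constructor
  · rintro ⟨w, h0, h1, h2⟩
    have hs : ∀ v, (Finsupp.onFinset V (fun v => if v ∈ V then w v else 0)
      (by intro a ha; by_contra h; simp [h] at ha)) v = if v ∈ V then w v else 0 := fun v => rfl
    have hsub : (Finsupp.onFinset V (fun v => if v ∈ V then w v else 0)
      (by intro a ha; by_contra h; simp [h] at ha)).support ⊆ V := Finsupp.support_onFinset_subset
    refine ⟨_, hsub, ?_, ?_, ?_⟩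
    · intro v
      rw [hs]
      split_ifs with hv
      · exact h0 v hv
      · exact le_rfl
    · rw [mass, Finsupp.linearCombination_apply, Finsupp.sum_of_support_subset _ hsub _ (by simp)]
      refine Eq.trans ?_ h1
      exact Finset.sum_congr rfl fun v hv => by rw [hs]; simp [hv]
    · rw [bary, Finsupp.linearCombination_apply, Finsupp.sum_of_support_subset _ hsub _ (by simp)]
      refine Eq.trans ?_ h2
      exact Finset.sum_congr rfl fun v hv => by rw [hs]; simp [hv]
  · rintro ⟨w, hs, h0, h1, h2⟩
    refine ⟨w, fun v _ => h0 v, ?_, ?_⟩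
    · rw [mass, Finsupp.linearCombination_apply, Finsupp.sum_of_support_subset _ hs _ (by simp)] at h1
      simpa using h1
    · rw [bary, Finsupp.linearCombination_apply, Finsupp.sum_of_support_subset _ hs _ (by simp)] at h2
      simpa using h2

theorem bary_mid (c d : E) : midpoint ℝ c d = (1/2 : ℝ) • c + (1/2 : ℝ) • d := by
  rw [midpoint_eq_smul_add, smul_add]; simp

theorem mid_notMem [DecidableEq E] {V : Finset E} (hV : AI V) {c d : E} (hc : c ∈ V) (hd : d ∈ V)
    (hcd : c ≠ d) : midpoint ℝ c d ∉ V := by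
  intro hz
  have h := hV (Finsupp.single c (1/2) + Finsupp.single d (1/2)
    - Finsupp.single (midpoint ℝ c d) 1) ?_ ?_ ?_
  · have h1 := DFunLike.congr_fun h c
    have h2 := DFunLike.congr_fun h d
    simp only [Finsupp.coe_sub, Finsupp.coe_add, Pi.sub_apply, Pi.add_apply,
      Finsupp.single_apply, Finsupp.coe_zero, Pi.zero_apply] at h1 h2
    grind
  · intro v hv
    by_contra hvV
    apply Finsupp.mem_support_iff.1 hv
    simp only [Finsupp.coe_sub, Finsupp.coe_add, Pi.sub_apply, Pi.add_apply,
      Finsupp.single_apply]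
    grind
  · simp only [map_sub, map_add, mass_single]; norm_num
  · simp only [map_sub, map_add, bary_single, bary_mid]; simp

/-- The barycentric coordinates after bisecting the edge `{c, d}`, expressed through the old ones:
the smaller of the weights of `c` and `d` is removed from both and moved, doubled, to the midpoint.
The formula is symmetric in `c` and `d`, hence the same for the two children. -/
def split (c d : E) (w : E →₀ ℝ) : E →₀ ℝ :=
  w + min (w c) (w d) • (Finsupp.single (midpoint ℝ c d) 2 - Finsupp.single c 1
    - Finsupp.single d 1)

theorem split_comm (c d : E) (w : E →₀ ℝ) : split c d w = split d c w := by
  rw [split, split, min_comm, midpoint_comm, sub_right_comm]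

/-- Rewrites a combination involving the midpoint of `{c, d}` as one that does not, sharing its
weight equally between `c` and `d`; this passes from the coordinates in a child to those in its
parent. -/
def elim (c d : E) (w : E →₀ ℝ) : E →₀ ℝ :=
  w + w (midpoint ℝ c d) • (Finsupp.single c (1/2) + Finsupp.single d (1/2)
    - Finsupp.single (midpoint ℝ c d) 1)

theorem mass_elim (c d : E) (w : E →₀ ℝ) : mass (elim c d w) = mass w := by
  simp only [elim, map_add, map_sub, map_smul, mass_single]; norm_num

theorem bary_elim (c d : E) (w : E →₀ ℝ) : bary (elim c d w) = bary w := by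
  simp only [elim, map_add, map_sub, map_smul, bary_single, bary_mid]; simp

theorem elim_apply [DecidableEq E] (c d : E) (w : E →₀ ℝ) (v : E) :
    elim c d w v = w v + w (midpoint ℝ c d) * ((if c = v then 1/2 else 0)
      + (if d = v then 1/2 else 0) - (if midpoint ℝ c d = v then 1 else 0)) := by
  simp [elim, Finsupp.single_apply]

theorem split_apply [DecidableEq E] (c d : E) (w : E →₀ ℝ) (v : E) :
    split c d w v = w v + min (w c) (w d) * ((if midpoint ℝ c d = v then 2 else 0)
      - (if c = v then 1 else 0) - (if d = v then 1 else 0)) := by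
  simp [split, Finsupp.single_apply]

/-- The vertex set of the half containing `c` when the simplex on `V` is bisected at the midpoint
of `{c, d}`. -/
def half [DecidableEq E] (V : Finset E) (c d : E) : Finset E :=
  insert (midpoint ℝ c d) (insert c (V \ {c, d}))

theorem supp_elim [DecidableEq E] {V : Finset E} (hV : AI V) {c d : E} (hc : c ∈ V) (hd : d ∈ V)
    (hcd : c ≠ d) {w : E →₀ ℝ} (hw : w.support ⊆ half V c d) : (elim c d w).support ⊆ V := by
  have hz := mid_notMem hV hc hd hcd
  intro v hv
  by_contra hvV
  apply Finsupp.mem_support_iff.1 hv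
  have h1 : v ∉ half V c d ∨ v = midpoint ℝ c d := by
    simp only [half, Finset.mem_insert, Finset.mem_sdiff]; grind
  rw [elim_apply]
  rcases h1 with h1 | rfl
  · have h2 : w v = 0 := by by_contra h0; exact h1 (hw (Finsupp.mem_support_iff.2 h0))
    have : midpoint ℝ c d ≠ v := by rintro rfl; exact h1 (by simp [half])
    grind
  · grind

theorem ai_half [DecidableEq E] {V : Finset E} (hV : AI V) {c d : E} (hc : c ∈ V) (hd : d ∈ V)
    (hcd : c ≠ d) : AI (half V c d) := by
  have hz := mid_notMem hV hc hd hcd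
  intro w hw h0 h1
  have h := hV _ (supp_elim hV hc hd hcd hw) ((mass_elim c d w).trans h0)
    ((bary_elim c d w).trans h1)
  have hwd : w d = 0 := by
    by_contra h0
    have := hw (Finsupp.mem_support_iff.2 h0)
    simp only [half, Finset.mem_insert, Finset.mem_sdiff] at this; grind
  have hd0 := DFunLike.congr_fun h d
  rw [elim_apply] at hd0
  have hz0 : w (midpoint ℝ c d) = 0 := by
    simp only [Finsupp.coe_zero, Pi.zero_apply] at hd0; grind
  rw [elim, hz0] at h
  simpa using h

theorem hull_half_subset [DecidableEq E] {V : Finset E} {c d : E} (hc : c ∈ V) (hd : d ∈ V) :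
    convexHull ℝ (half V c d : Set E) ⊆ convexHull ℝ (V : Set E) := by
  refine convexHull_min ?_ (convex_convexHull ℝ _)
  intro v hv
  simp only [half, Finset.coe_insert, Set.mem_insert_iff, Finset.mem_coe, Finset.mem_sdiff] at hv
  rcases hv with rfl | rfl | hv
  · exact (convex_convexHull ℝ _).midpoint_mem (subset_convexHull ℝ _ (by simpa using hc))
      (subset_convexHull ℝ _ (by simpa using hd))
  · exact subset_convexHull ℝ _ (by simpa using hc)
  · exact subset_convexHull ℝ _ (by simpa using hv.1)

/-- A point of the half containing `c` has at least as much weight at `c` as at `d`, and its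
coordinates in the half are given by `split`. -/
theorem rep_half [DecidableEq E] {V : Finset E} (hV : AI V) {c d : E} (hc : c ∈ V) (hd : d ∈ V)
    (hcd : c ≠ d) {w : E →₀ ℝ} {x : E} (hw : BRep V w x)
    (hx : x ∈ convexHull ℝ (half V c d : Set E)) :
    w d ≤ w c ∧ BRep (half V c d) (split c d w) x := by
  have hz := mid_notMem hV hc hd hcd
  obtain ⟨u, hu⟩ := mem_hull_iff.1 hx
  have hud : u d = 0 := by
    by_contra h0
    have := hu.supp (Finsupp.mem_support_iff.2 h0)
    simp only [half, Finset.mem_insert, Finset.mem_sdiff] at this; grind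
  have hu0 := hu.nonneg
  have hE : BRep V (elim c d u) x := by
    refine ⟨supp_elim hV hc hd hcd hu.supp, ?_, (mass_elim c d u).trans hu.mass_eq,
      (bary_elim c d u).trans hu.bary_eq⟩
    intro v
    have := hu0 v
    have := hu0 (midpoint ℝ c d)
    rw [elim_apply]
    split_ifs <;> subst_vars <;> first | linarith | grind
  have hEw : w = elim c d u := hw.unique hV hE
  have hwc : w c = u c + u (midpoint ℝ c d) / 2 := by rw [hEw, elim_apply]; grind
  have hwd : w d = u (midpoint ℝ c d) / 2 := by rw [hEw, elim_apply]; grind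
  have hle : w d ≤ w c := by have := hu0 c; linarith
  refine ⟨hle, ?_⟩
  have : split c d w = u := by
    ext v
    rw [split_apply, min_eq_right hle, hwd, hEw, elim_apply]
    grind
  rwa [this]

end Barycentric

theorem ai_iff {V : Finset Pt3} :
    AI V ↔ AffineIndependent ℝ (fun p : (V : Set Pt3) => (p : Pt3)) := by
  rw [affineIndependent_iff]
  constructor
  · intro h s w h0 h1 e he
    set u : Pt3 →₀ ℝ := ∑ e ∈ s, Finsupp.single (e : Pt3) (w e) with hu
    have hval : ∀ e ∈ s, u e = w e := by
      intro e he
      rw [hu, Finsupp.finsetSum_apply, Finset.sum_eq_single e]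
      · simp
      · intro b _ hb
        rw [Finsupp.single_apply, if_neg]
        exact fun h => hb (Subtype.ext h)
      · exact fun h => absurd he h
    have := h u ?_ ?_ ?_
    · rw [← hval e he, this]; rfl
    · intro v hv
      by_contra hvV
      apply Finsupp.mem_support_iff.1 hv
      rw [hu, Finsupp.finsetSum_apply]
      refine Finset.sum_eq_zero fun b _ => ?_
      rw [Finsupp.single_apply, if_neg]
      rintro rfl
      exact hvV (by simp)
    · rw [hu, map_sum]; simpa [mass_single] using h0
    · rw [hu, map_sum]; simpa [bary_single] using h1
  · intro h w hs h0 h1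
    have := h (Finset.univ : Finset (V : Set Pt3)) (fun e => w e) ?_ ?_
    · ext v
      by_cases hv : v ∈ V
      · exact this ⟨v, by simpa using hv⟩ (Finset.mem_univ _)
      · by_contra h0; exact hv (hs (Finsupp.mem_support_iff.2 h0))
    · rw [mass, Finsupp.linearCombination_apply, Finsupp.sum_of_support_subset _ hs _ (by simp)] at h0
      rw [← h0]
      exact (Finset.sum_coe_sort V (fun x => w x • (1 : ℝ))).symm ▸ by simp
    · rw [bary, Finsupp.linearCombination_apply, Finsupp.sum_of_support_subset _ hs _ (by simp)] at h1
      rw [← h1]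
      exact (Finset.sum_coe_sort V (fun x => w x • x)).symm ▸ by simp

/-! ### Bisection of a well-formed marked tetrahedron -/

theorem inh_eq {α : Type*} [DecidableEq α] {V : Finset α} {c d : α} (hc : c ∈ V) (hcd : c ≠ d) :
    insert c (V \ {c, d}) = V.erase d := by grind

theorem half_eq {V : Finset Pt3} {c d : Pt3} (hc : c ∈ V) (hcd : c ≠ d) :
    half V c d = insert (midpoint ℝ c d) (V.erase d) := by
  rw [half, inh_eq hc hcd]

theorem card_opp {α : Type*} [DecidableEq α] {V : Finset α} {c d : α} (hV : V.card = 4)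
    (hc : c ∈ V) (hd : d ∈ V) (hcd : c ≠ d) : (V \ {c, d}).card = 2 := by
  have h : ({c, d} : Finset α) ⊆ V := by grind
  rw [Finset.card_sdiff_of_subset h, hV, Finset.card_pair hcd]

/-- The faces of a child: the inherited face, the cut faces, the new face. -/
theorem face_cases {α : Type*} [DecidableEq α] {V G : Finset α} {c d z : α} (hV : V.card = 4)
    (hc : c ∈ V) (hd : d ∈ V) (hcd : c ≠ d) (hz : z ∉ V)
    (hG : G ⊆ insert z (V.erase d)) (h3 : G.card = 3) :
    G = V.erase d ∨ (z ∈ G ∧ c ∈ G) ∨ G = insert z (V \ {c, d}) := by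
  have h2 := card_opp hV hc hd hcd
  by_cases hzG : z ∈ G
  · by_cases hcG : c ∈ G
    · exact Or.inr (Or.inl ⟨hzG, hcG⟩)
    · right; right
      apply Finset.eq_of_subset_of_card_le
      · grind
      · rw [Finset.card_insert_of_notMem (by grind), h2, h3]
  · left
    apply Finset.eq_of_subset_of_card_le
    · grind
    · rw [Finset.card_erase_of_mem hd, hV, h3]

theorem erase_newF {α : Type*} [DecidableEq α] {V : Finset α} {c d z : α} (hz : z ∉ V) :
    (insert z (V \ {c, d})).erase z = V \ {c, d} := by grind

/-- A vertex `a` such that every face through `a` is marked with its edge opposite `a`. All four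
marked edges then lie in the face opposite `a`. -/
def Apex (τ : MTet) (a : Pt3) : Prop :=
  a ∈ τ.V ∧ ∀ G ⊆ τ.V, G.card = 3 → a ∈ G → τ.mark G = G.erase a

/-- A valid marked tetrahedron which, if flagged, has an apex. This class is preserved by
bisection; the apex of a flagged tetrahedron is the midpoint created when its parent was
bisected. -/
structure Good (τ : MTet) : Prop where
  card : τ.V.card = 4
  ai : AI τ.V
  ref_sub : τ.ref ⊆ τ.V
  ref_card : τ.ref.card = 2
  mark_sub : ∀ G ⊆ τ.V, G.card = 3 → τ.mark G ⊆ G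
  mark_card : ∀ G ⊆ τ.V, G.card = 3 → (τ.mark G).card = 2
  mark_ref : ∀ G ⊆ τ.V, G.card = 3 → τ.ref ⊆ G → τ.mark G = τ.ref
  apex : τ.flag = true → ∃ a, Apex τ a

/-- The setting of one bisection: `τ` is well formed with refinement edge from `c` to `d`, so that
`τ.child c` contains `c` but not `d`. -/
structure Bis (τ : MTet) (c d : Pt3) : Prop where
  good : Good τ
  ref_eq : τ.ref = {c, d}
  ne : c ≠ d

theorem Good.exists_bis {τ : MTet} (h : Good τ) {c : Pt3} (hc : c ∈ τ.ref) : ∃ d, Bis τ c d := by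
  obtain ⟨a, b, hab, hr⟩ := Finset.card_eq_two.1 h.ref_card
  rw [hr, Finset.mem_insert, Finset.mem_singleton] at hc
  rcases hc with rfl | rfl
  · exact ⟨b, h, hr, hab⟩
  · exact ⟨a, h, hr.trans (Finset.pair_comm _ _), hab.symm⟩

theorem centroid_pair_eq (c d : Pt3) : Finset.centroid ℝ {c, d} id = midpoint ℝ c d := by
  rw [Finset.centroid_pair, bary_mid]
  simp only [id, vsub_eq_sub, vadd_eq_add]
  module

namespace Bis
variable {τ : MTet} {c d : Pt3} (h : Bis τ c d)
include h

theorem symm : Bis τ d c := ⟨h.good, h.ref_eq.trans (Finset.pair_comm _ _), h.ne.symm⟩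
theorem hc : c ∈ τ.V := h.good.ref_sub (by rw [h.ref_eq]; simp)
theorem hd : d ∈ τ.V := h.symm.hc
theorem hz : midpoint ℝ c d ∉ τ.V := mid_notMem h.good.ai h.hc h.hd h.ne

theorem child_V : (τ.child c).V = insert (midpoint ℝ c d) (τ.V.erase d) := by
  simp only [MTet.child, centroid_pair_eq, h.ref_eq, inh_eq h.hc h.ne]

theorem child_V_half : (τ.child c).V = half τ.V c d := by
  rw [h.child_V, half_eq h.hc h.ne]

theorem child_ref : (τ.child c).ref = τ.mark (τ.V.erase d) := by
  simp only [MTet.child, h.ref_eq, inh_eq h.hc h.ne]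

theorem child_mark (G : Finset Pt3) : (τ.child c).mark G =
    if G = τ.V.erase d then τ.mark (τ.V.erase d)
    else if G = insert (midpoint ℝ c d) (τ.V \ {c, d}) then
      if τ.Planar ∧ τ.flag = true then
        insert (midpoint ℝ c d) (τ.mark (τ.V.erase d) ∩ (τ.V \ {c, d})) else τ.V \ {c, d}
    else G.erase (midpoint ℝ c d) := by
  simp only [MTet.child, centroid_pair_eq, h.ref_eq, inh_eq h.hc h.ne]

theorem mark_inh : (τ.child c).mark (τ.V.erase d) = τ.mark (τ.V.erase d) := by
  rw [h.child_mark, if_pos rfl]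

theorem mark_cut {G : Finset Pt3} (hzG : midpoint ℝ c d ∈ G) (hcG : c ∈ G) :
    (τ.child c).mark G = G.erase (midpoint ℝ c d) := by
  have hz := h.hz
  rw [h.child_mark, if_neg, if_neg]
  · rintro rfl
    have := h.hc
    rw [Finset.mem_insert] at hcG
    rcases hcG with hcG | hcG
    · exact hz (hcG ▸ h.hc)
    · simp at hcG
  · rintro rfl
    exact hz (Finset.mem_of_mem_erase hzG)

theorem mark_new : (τ.child c).mark (insert (midpoint ℝ c d) (τ.V \ {c, d})) =
      if τ.Planar ∧ τ.flag = true then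
        insert (midpoint ℝ c d) (τ.mark (τ.V.erase d) ∩ (τ.V \ {c, d})) else τ.V \ {c, d} := by
  rw [h.child_mark, if_neg, if_pos rfl]
  intro he
  exact h.hz (Finset.mem_of_mem_erase (he ▸ Finset.mem_insert_self _ _))

/-- A face of the child is the inherited face, or a cut face (it contains the midpoint and `c`; the
third vertex is one of the remaining two), or the new face. -/
theorem cases {G : Finset Pt3} (hG : G ⊆ (τ.child c).V) (h3 : G.card = 3) :
    G = τ.V.erase d ∨ (midpoint ℝ c d ∈ G ∧ c ∈ G) ∨
      G = insert (midpoint ℝ c d) (τ.V \ {c, d}) :=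
  face_cases h.good.card h.hc h.hd h.ne h.hz (h.child_V ▸ hG) h3

theorem card_inh : (τ.V.erase d).card = 3 := by
  rw [Finset.card_erase_of_mem h.hd, h.good.card]

/-- Unless `τ` is planar and flagged, the midpoint is an apex of the child. -/
theorem apex_child (hf : ¬ (τ.Planar ∧ τ.flag = true)) : Apex (τ.child c) (midpoint ℝ c d) := by
  refine ⟨by rw [h.child_V]; simp, fun G hG h3 hz => ?_⟩
  rcases h.cases hG h3 with rfl | h1 | rfl
  · exact absurd (Finset.mem_of_mem_erase hz) h.hz
  · exact h.mark_cut h1.1 h1.2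
  · rw [h.mark_new, if_neg hf, erase_newF h.hz]

end Bis

theorem apex_aux {α : Type*} [DecidableEq α] {V : Finset α} {a c d : α} :
    ((V.erase d).erase a) ∩ (V \ {c, d}) = (V \ {c, d}).erase a := by grind

theorem Apex.planar {τ : MTet} (h : Good τ) {a : Pt3} (ha : Apex τ a) : τ.Planar := by
  have hc : (τ.V.erase a).card = 3 := by rw [Finset.card_erase_of_mem ha.1, h.card]
  obtain ⟨x, y, z, -, -, -, hV⟩ := Finset.card_eq_three.1 hc
  refine Coplanar.subset ?_ (coplanar_triple ℝ x y z)
  intro v hv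
  simp only [Set.mem_iUnion, Set.mem_ofPred_eq] at hv
  obtain ⟨G, ⟨hG, h3⟩, hvG⟩ := hv
  have hv' : v ∈ τ.V.erase a := by
    have hvV : v ∈ G := h.mark_sub G hG h3 hvG
    refine Finset.mem_erase.2 ⟨?_, hG hvV⟩
    rintro rfl
    rw [ha.2 G hG h3 hvV] at hvG
    simp at hvG
  rw [hV] at hv'
  simpa using hv'

theorem not_coplanar {V : Finset Pt3} (hV : AI V) (h4 : V.card = 4) :
    ¬ Coplanar ℝ (V : Set Pt3) := by
  intro h
  have h1 := (ai_iff.1 hV).finrank_vectorSpan (n := 3) (by simpa using h4)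
  rw [Subtype.range_coe] at h1
  rw [coplanar_iff_finrank_le_two] at h
  omega

theorem child_flag {τ : MTet} {c : Pt3} :
    (τ.child c).flag = true ↔ τ.Planar ∧ τ.flag = false := by
  simp [MTet.child]

namespace Bis
variable {τ : MTet} {c d : Pt3} (h : Bis τ c d)
include h

theorem c_mem_inh : c ∈ τ.V.erase d := Finset.mem_erase.2 ⟨h.ne, h.hc⟩

/-- If `τ` is flagged, its apex `a` is not on the refinement edge, the child's refinement edge is
the edge of the inherited face opposite `a`, and the new face is marked with its edge opposite `a`,
which is the edge from the midpoint to the fourth vertex. -/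
theorem apex_new {a : Pt3} (ha : Apex τ a) (hf : τ.flag = true) :
    a ∈ τ.V \ {c, d} ∧ τ.mark (τ.V.erase d) = (τ.V.erase d).erase a ∧
    (τ.child c).mark (insert (midpoint ℝ c d) (τ.V \ {c, d})) =
      insert (midpoint ℝ c d) ((τ.V \ {c, d}).erase a) := by
  have hpl := ha.planar h.good
  have h1 : a ∉ ({c, d} : Finset Pt3) := by
    intro hacd
    obtain ⟨e, he⟩ : (τ.V \ {c, d}).Nonempty := by
      rw [← Finset.card_pos, card_opp h.good.card h.hc h.hd h.ne]; norm_num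
    rw [Finset.mem_sdiff] at he
    have hs : insert e ({c, d} : Finset Pt3) ⊆ τ.V := by
      rw [← h.ref_eq]
      exact Finset.insert_subset he.1 h.good.ref_sub
    have h3 : (insert e ({c, d} : Finset Pt3)).card = 3 := by
      rw [Finset.card_insert_of_notMem he.2, Finset.card_pair h.ne]
    have e1 := ha.2 _ hs h3 (Finset.mem_insert_of_mem hacd)
    rw [h.good.mark_ref _ hs h3 (h.ref_eq ▸ Finset.subset_insert _ _), h.ref_eq] at e1
    rw [e1] at hacd
    simp at hacd
  have h2 : a ∈ τ.V \ {c, d} := Finset.mem_sdiff.2 ⟨ha.1, h1⟩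
  have had : a ≠ d := by rintro rfl; simp at h1
  have h4 := ha.2 _ (Finset.erase_subset d _) h.card_inh (Finset.mem_erase.2 ⟨had, ha.1⟩)
  refine ⟨h2, h4, ?_⟩
  rw [h.mark_new, if_pos ⟨hpl, hf⟩, h4, apex_aux]

theorem good_child : Good (τ.child c) := by
  have hz := h.hz
  have hopp := card_opp h.good.card h.hc h.hd h.ne
  have hnew : midpoint ℝ c d ∉ τ.V \ {c, d} := fun h1 => hz (Finset.mem_sdiff.1 h1).1
  have hrefz : midpoint ℝ c d ∉ (τ.child c).ref := by
    rw [h.child_ref]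
    exact fun h1 => hz (Finset.mem_of_mem_erase
      (h.good.mark_sub _ (Finset.erase_subset d _) h.card_inh h1))
  have hrefc : (τ.child c).ref.card = 2 := by
    rw [h.child_ref]; exact h.good.mark_card _ (Finset.erase_subset d _) h.card_inh
  have hsub : ∀ G : Finset Pt3, midpoint ℝ c d ∈ G → G.card = 3 → (τ.child c).ref ⊆ G →
      G.erase (midpoint ℝ c d) = (τ.child c).ref := by
    intro G hzG h3 hG
    symm
    apply Finset.eq_of_subset_of_card_le
    · exact Finset.subset_erase.2 ⟨hG, hrefz⟩
    · rw [Finset.card_erase_of_mem hzG, h3, hrefc]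
  have hPF : τ.Planar ∧ τ.flag = true → ∃ a, Apex τ a ∧ a ∈ τ.V \ {c, d} ∧
      τ.mark (τ.V.erase d) = (τ.V.erase d).erase a ∧
      (τ.child c).mark (insert (midpoint ℝ c d) (τ.V \ {c, d})) =
        insert (midpoint ℝ c d) ((τ.V \ {c, d}).erase a) := by
    intro hf
    obtain ⟨a, ha⟩ := h.good.apex hf.2
    exact ⟨a, ha, h.apex_new ha hf.2⟩
  refine ⟨?_, ?_, ?_, hrefc, ?_, ?_, ?_, ?_⟩
  · rw [h.child_V, Finset.card_insert_of_notMem (fun h1 => hz (Finset.mem_of_mem_erase h1)),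
      h.card_inh]
  · rw [h.child_V_half]
    exact ai_half h.good.ai h.hc h.hd h.ne
  · rw [h.child_ref, h.child_V]
    exact (h.good.mark_sub _ (Finset.erase_subset d _) h.card_inh).trans (Finset.subset_insert _ _)
  · intro G hG h3
    rcases h.cases hG h3 with rfl | h1 | rfl
    · rw [h.mark_inh]
      exact h.good.mark_sub _ (Finset.erase_subset d _) h.card_inh
    · rw [h.mark_cut h1.1 h1.2]
      exact Finset.erase_subset _ _
    · by_cases hf : τ.Planar ∧ τ.flag = true
      · obtain ⟨a, -, -, -, h4⟩ := hPF hf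
        rw [h4]
        exact Finset.insert_subset_insert _ (Finset.erase_subset _ _)
      · rw [h.mark_new, if_neg hf]
        exact Finset.subset_insert _ _
  · intro G hG h3
    rcases h.cases hG h3 with rfl | h1 | rfl
    · rw [h.mark_inh]
      exact h.good.mark_card _ (Finset.erase_subset d _) h.card_inh
    · rw [h.mark_cut h1.1 h1.2, Finset.card_erase_of_mem h1.1, h3]
    · by_cases hf : τ.Planar ∧ τ.flag = true
      · obtain ⟨a, -, ha, -, h4⟩ := hPF hf
        rw [h4, Finset.card_insert_of_notMem (fun h1 => hnew (Finset.mem_of_mem_erase h1)),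
          Finset.card_erase_of_mem ha, hopp]
      · rw [h.mark_new, if_neg hf, hopp]
  · intro G hG h3 hr
    rcases h.cases hG h3 with rfl | h1 | rfl
    · rw [h.mark_inh, h.child_ref]
    · rw [h.mark_cut h1.1 h1.2]
      exact hsub G h1.1 h3 hr
    · by_cases hf : τ.Planar ∧ τ.flag = true
      · obtain ⟨a, -, ha, h2, -⟩ := hPF hf
        exfalso
        have hca : c ≠ a := by rintro rfl; simp at ha
        have := hr (h.child_ref ▸ h2 ▸ Finset.mem_erase.2 ⟨hca, h.c_mem_inh⟩)
        rw [Finset.mem_insert] at this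
        rcases this with h5 | h5
        · exact hz (h5 ▸ h.hc)
        · simp at h5
      · rw [h.mark_new, if_neg hf, ← hsub _ (Finset.mem_insert_self _ _) h3 hr, erase_newF hz]
  · intro hf
    refine ⟨_, h.apex_child ?_⟩
    rintro ⟨-, h2⟩
    rw [child_flag, h2] at hf
    simp at hf

/-- The two children mark their common face alike: in the planar flagged case both marks are the
edge opposite the apex. -/
theorem new_eq : (τ.child c).mark (insert (midpoint ℝ c d) (τ.V \ {c, d})) =
    (τ.child d).mark (insert (midpoint ℝ c d) (τ.V \ {c, d})) := by
  have e : insert (midpoint ℝ c d) (τ.V \ {c, d}) = insert (midpoint ℝ d c) (τ.V \ {d, c}) := by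
    rw [midpoint_comm, Finset.pair_comm]
  by_cases hf : τ.Planar ∧ τ.flag = true
  · obtain ⟨a, ha⟩ := h.good.apex hf.2
    rw [(h.apex_new ha hf.2).2.2, e, (h.symm.apex_new ha hf.2).2.2, midpoint_comm,
      Finset.pair_comm]
  · rw [h.mark_new, e, h.symm.mark_new, if_neg hf, if_neg hf, Finset.pair_comm]

/-- The marked edges of a child of a flagged tetrahedron contain all four of its vertices. -/
theorem not_planar_child (hf : τ.flag = true) : ¬ (τ.child c).Planar := by
  intro hpl
  obtain ⟨a, ha⟩ := h.good.apex hf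
  obtain ⟨h1, h2, h3⟩ := h.apex_new ha hf
  have hG := h.good_child
  refine not_coplanar hG.ai hG.card (Coplanar.subset ?_ hpl)
  have hopp := card_opp h.good.card h.hc h.hd h.ne
  obtain ⟨p, hp⟩ : ∃ p, (τ.V \ {c, d}).erase a = {p} :=
    Finset.card_eq_one.1 (by rw [Finset.card_erase_of_mem h1, hopp])
  have hca : c ≠ a := by rintro rfl; simp at h1
  have hz := h.hz
  have hzc : midpoint ℝ c d ≠ c := fun e => hz (by rw [e]; exact h.hc)
  have hza : midpoint ℝ c d ≠ a := fun e => hz (e ▸ ha.1)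
  have key : ∀ G ⊆ (τ.child c).V, G.card = 3 → ∀ v ∈ (τ.child c).mark G,
      v ∈ ⋃ F ∈ {F : Finset Pt3 | F ⊆ (τ.child c).V ∧ F.card = 3},
        ((τ.child c).mark F : Set Pt3) := by
    intro G hG h3 v hv
    simp only [Set.mem_iUnion, Set.mem_ofPred_eq]
    exact ⟨G, ⟨hG, h3⟩, hv⟩
  -- The new face contributes the midpoint and `p`, the cut face through `a` contributes `c` and `a`.
  have s1 : insert (midpoint ℝ c d) (τ.V \ {c, d}) ⊆ (τ.child c).V := by
    rw [h.child_V, ← inh_eq h.hc h.ne]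
    exact Finset.insert_subset_insert _ (Finset.subset_insert _ _)
  have c1 : (insert (midpoint ℝ c d) (τ.V \ {c, d})).card = 3 := by
    rw [Finset.card_insert_of_notMem (fun e => hz (Finset.mem_sdiff.1 e).1), hopp]
  have s2 : ({midpoint ℝ c d, c, a} : Finset Pt3) ⊆ (τ.child c).V := by
    intro v hv
    rw [h.child_V]
    simp only [Finset.mem_insert, Finset.mem_singleton] at hv
    rcases hv with hv | hv | hv
    · simp [hv]
    · exact Finset.mem_insert_of_mem (hv.symm ▸ h.c_mem_inh)
    · rw [hv]
      refine Finset.mem_insert_of_mem (Finset.mem_erase.2 ⟨?_, ha.1⟩)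
      rintro rfl; simp at h1
  have c2 : ({midpoint ℝ c d, c, a} : Finset Pt3).card = 3 :=
    Finset.card_eq_three.2 ⟨_, _, _, hzc, hza, hca, rfl⟩
  have m2 := h.mark_cut (G := {midpoint ℝ c d, c, a}) (by simp) (by simp)
  intro v hv
  rw [Finset.mem_coe, h.child_V, ← inh_eq h.hc h.ne, Finset.mem_insert, Finset.mem_insert] at hv
  rcases hv with hv | hv | hv
  · rw [hv]; exact key _ s1 c1 _ (by rw [h3]; simp)
  · rw [hv]; exact key _ s2 c2 _ (by rw [m2]; simp [hzc.symm])
  · by_cases hva : v = a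
    · subst hva
      exact key _ s2 c2 _ (by rw [m2]; simp [hza.symm])
    · exact key _ s1 c1 _ (by
        rw [h3]; exact Finset.mem_insert_of_mem (Finset.mem_erase.2 ⟨hva, hv⟩))

end Bis

/-! ### Old vertices during three successive bisections -/

/-- The invariant of a round of three bisections that starts from an unflagged tetrahedron. `O` is
the set of vertices of `τ` that were already vertices at the start of the round. While two old
vertices remain, the refinement edge joins old vertices, and so does the marked edge of every face
with two old vertices. Each bisection removes exactly one old vertex, so a round lasts three
steps. -/
structure J (τ : MTet) (O : Finset Pt3) : Prop where
  sub : O ⊆ τ.V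
  ref : 2 ≤ O.card → τ.ref ⊆ O
  mark : ∀ G ⊆ τ.V, G.card = 3 → 2 ≤ (G ∩ O).card → τ.mark G ⊆ O
  flag : τ.flag = true → O.card ≤ 3

theorem J.start {τ : MTet} (h : Good τ) (hf : τ.flag = false) : J τ τ.V :=
  ⟨subset_rfl, fun _ => h.ref_sub, fun G hG h3 _ => (h.mark_sub G hG h3).trans hG,
    fun h1 => by simp [hf] at h1⟩

theorem erase_inter_of_subset {α : Type*} [DecidableEq α] {V O : Finset α} {d : α} (h : O ⊆ V) :
    V.erase d ∩ O = O.erase d := by grind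

theorem erase_subset_of_inter {α : Type*} [DecidableEq α] {G O : Finset α} {z : α}
    (hz : z ∉ O) (hzG : z ∈ G) (h3 : G.card = 3) (h2 : 2 ≤ (G ∩ O).card) : G.erase z ⊆ O := by
  have h1 : G ∩ O ⊆ G.erase z := by grind
  have h4 := Finset.eq_of_subset_of_card_le h1 (by rw [Finset.card_erase_of_mem hzG, h3]; exact h2)
  rw [← h4]
  exact Finset.inter_subset_right

theorem insert_inter_subset {α : Type*} [DecidableEq α] {V O : Finset α} {c d z : α} (hz : z ∉ O) :
    insert z (V \ {c, d}) ∩ O.erase d ⊆ O \ {c, d} := by grind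

theorem pair_subset {α : Type*} [DecidableEq α] {c d : α} {O : Finset α} (hc : c ∈ O)
    (hd : d ∈ O) : {c, d} ⊆ O := by grind

theorem J.mem {τ : MTet} {O : Finset Pt3} {c d : Pt3} (hJ : J τ O) (h : Bis τ c d)
    (h2 : 2 ≤ O.card) : c ∈ O ∧ d ∈ O := by
  have h1 := hJ.ref h2
  rw [h.ref_eq] at h1
  exact ⟨h1 (by simp), h1 (by simp)⟩

theorem J.child {τ : MTet} {O : Finset Pt3} {c d : Pt3} (hJ : J τ O) (h : Bis τ c d)
    (h2 : 2 ≤ O.card) : J (τ.child c) (O.erase d) := by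
  obtain ⟨hcO, hdO⟩ := hJ.mem h h2
  have hz : midpoint ℝ c d ∉ O := fun h1 => h.hz (hJ.sub h1)
  have hz' : midpoint ℝ c d ∉ O.erase d := fun h1 => hz (Finset.mem_of_mem_erase h1)
  have hinh : 2 ≤ (O.erase d).card → τ.mark (τ.V.erase d) ⊆ O.erase d := by
    intro h3 v hv
    have h4 := hJ.mark _ (Finset.erase_subset d _) h.card_inh
      (by rwa [erase_inter_of_subset hJ.sub]) hv
    exact Finset.mem_erase.2 ⟨(Finset.mem_erase.1
      (h.good.mark_sub _ (Finset.erase_subset d _) h.card_inh hv)).1, h4⟩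
  refine ⟨?_, ?_, ?_, ?_⟩
  · rw [h.child_V]
    exact (Finset.erase_subset_erase d hJ.sub).trans (Finset.subset_insert _ _)
  · rw [h.child_ref]; exact hinh
  · intro G hG h3 hGO
    rcases h.cases hG h3 with rfl | h1 | rfl
    · rw [h.mark_inh]
      exact hinh (hGO.trans (Finset.card_le_card Finset.inter_subset_right))
    · rw [h.mark_cut h1.1 h1.2]
      exact erase_subset_of_inter hz' h1.1 h3 hGO
    · rw [h.mark_new]
      split_ifs with hf
      -- A flagged tetrahedron has at most three old vertices, so at most one of them is opposite
      -- the refinement edge, and the hypothesis `hGO` on the new face fails.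
      · exfalso
        have h4 := hJ.flag hf.2
        have h5 := hGO.trans (Finset.card_le_card (insert_inter_subset hz))
        rw [Finset.card_sdiff_of_subset (pair_subset hcO hdO), Finset.card_pair h.ne] at h5
        omega
      · have := erase_subset_of_inter hz' (Finset.mem_insert_self _ _) h3 hGO
        rwa [erase_newF h.hz] at this
  · intro _
    have := Finset.card_le_card hJ.sub
    rw [h.good.card] at this
    rw [Finset.card_erase_of_mem hdO]
    omega

/-! ### A deterministic rewriting of local data at a point -/

section generic
variable {E : Type*} [AddCommGroup E] [Module ℝ E] [DecidableEq E]

theorem support_split_lt {c d : E} {w : E →₀ ℝ} (h0 : ∀ v, 0 ≤ w v) (hlt : w d < w c)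
    (hd : 0 < w d) (hcd : c ≠ d) (hzc : midpoint ℝ c d ≠ c) (hzd : midpoint ℝ c d ≠ d) :
    (split c d w).support = insert (midpoint ℝ c d) (w.support.erase d) := by
  ext v
  simp only [Finsupp.mem_support_iff, split_apply, min_eq_right hlt.le, Finset.mem_insert,
    Finset.mem_erase]
  have := h0 v
  by_cases h1 : midpoint ℝ c d = v
  · subst h1
    have : w (midpoint ℝ c d) + w d * 2 ≠ 0 := by positivity
    simp [hzc.symm, hzd.symm, this]
  by_cases h2 : c = v
  · subst h2
    simp [hzc, hcd, hcd.symm]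
    constructor <;> intro <;> linarith
  by_cases h3 : d = v
  · subst h3
    simp [hzd, hcd, hzd.symm]
  simp [h1, h2, h3, Ne.symm h1, Ne.symm h3]

theorem support_split_eq {c d : E} {w : E →₀ ℝ} (h0 : ∀ v, 0 ≤ w v) (heq : w c = w d)
    (hd : 0 < w d) (hcd : c ≠ d) (hzc : midpoint ℝ c d ≠ c) (hzd : midpoint ℝ c d ≠ d) :
    (split c d w).support = insert (midpoint ℝ c d) (w.support \ {c, d}) := by
  ext v
  simp only [Finsupp.mem_support_iff, split_apply, min_eq_right heq.ge, Finset.mem_insert,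
    Finset.mem_sdiff, Finset.mem_singleton]
  have := h0 v
  by_cases h1 : midpoint ℝ c d = v
  · subst h1
    have : w (midpoint ℝ c d) + w d * 2 ≠ 0 := by positivity
    simp [hzc.symm, hzd.symm, this]
  by_cases h2 : c = v
  · subst h2
    simp [hzc, hcd, hcd.symm, heq, hzc.symm]
  by_cases h3 : d = v
  · subst h3
    simp [hzd, hcd, hzd.symm]
  simp [h1, h2, h3, Ne.symm h1, Ne.symm h3, Ne.symm h2]

end generic

/-- The type of local data at a point of a marked tetrahedron; see `st`. -/
abbrev BState := (Pt3 →₀ ℝ) × Finset Pt3 × Option (Finset Pt3) × Option MTet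

/-- The local data of `τ` at the point with barycentric coordinates `w`, relative to the set `O` of
old vertices: the coordinates, the old vertices of the carrier (the smallest subsimplex containing
the point), the marked edge of the carrier if that is a face, and `τ` itself if the carrier is
three-dimensional. Two tetrahedra compatible near a common point have the same local data there. -/
def st (τ : MTet) (O : Finset Pt3) (w : Pt3 →₀ ℝ) : BState :=
  (w, w.support ∩ O, if w.support.card = 3 then some (τ.mark w.support) else none,
    if w.support.card = 4 then some τ else none)

/-- The effect on local data of a bisection whose refinement edge lies in the carrier and joins old
vertices. The side conditions say that the point lies in the child containing `c`. -/
inductive Step : BState → BState → Prop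
  | mk (τ : MTet) (O : Finset Pt3) (c d : Pt3) (w : Pt3 →₀ ℝ) (h : Bis τ c d) (hO : O ⊆ τ.V)
      (hw : w.support ⊆ τ.V) (h0 : ∀ v, 0 ≤ w v) (hle : w d ≤ w c) (hd : 0 < w d)
      (hcO : c ∈ O) (hdO : d ∈ O) :
      Step (st τ O w) (st (τ.child c) (O.erase d) (split c d w))

theorem st_eq_iff {τ σ : MTet} {O P : Finset Pt3} {w u : Pt3 →₀ ℝ} :
    st τ O w = st σ P u ↔ w = u ∧ w.support ∩ O = w.support ∩ P ∧
      (w.support.card = 3 → τ.mark w.support = σ.mark w.support) ∧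
      (w.support.card = 4 → τ = σ) := by
  constructor
  · intro h
    simp only [st, Prod.mk.injEq] at h
    obtain ⟨rfl, h2, h3, h4⟩ := h
    refine ⟨rfl, h2, fun h => ?_, fun h => ?_⟩
    · simpa [h] using h3
    · simpa [h] using h4
  · rintro ⟨rfl, h2, h3, h4⟩
    simp only [st, Prod.mk.injEq]
    refine ⟨trivial, h2, ?_, ?_⟩
    · split_ifs with h
      · rw [h3 h]
      · rfl
    · split_ifs with h
      · rw [h4 h]
      · rfl

/-- A description of the old vertices of the new carrier that is symmetric in `c` and `d`. -/
theorem old_generic {α : Type*} [DecidableEq α] {s' s O : Finset α} {z c d : α} (hz : z ∉ O)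
    (hdO : d ∈ O)
    (h : s' = insert z (s.erase d) ∨ s' = insert z (s \ {c, d})) :
    s' ∩ O.erase d = s' ∩ (s ∩ O) := by
  rcases h with rfl | rfl <;> grind

theorem pair_eq_of_card_two {α : Type*} [DecidableEq α] {s : Finset α} {c d : α} (hc : c ∈ s)
    (hd : d ∈ s) (hcd : c ≠ d) (h2 : s.card = 2) : s = {c, d} := by
  symm
  apply Finset.eq_of_subset_of_card_le (pair_subset hc hd)
  rw [h2, Finset.card_pair hcd]

theorem pair_cases {α : Type*} [DecidableEq α] {a b c d : α} (h : ({a, b} : Finset α) = {c, d})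
    (hab : a ≠ b) : (c = a ∧ d = b) ∨ (c = b ∧ d = a) := by
  have h1 : a ∈ ({c, d} : Finset α) := h ▸ by simp
  have h2 : b ∈ ({c, d} : Finset α) := h ▸ by simp
  simp only [Finset.mem_insert, Finset.mem_singleton] at h1 h2
  grind

/-- The refinement edge, once it lies in the carrier, can be read off the local data: it is the
carrier, its marked edge, or the refinement edge of the tetrahedron, according to the dimension. -/
theorem Bis.pair_det {τ σ : MTet} {c d a b : Pt3} {w : Pt3 →₀ ℝ} (h : Bis τ c d) (k : Bis σ a b)
    (hw : w.support ⊆ τ.V) (kw : w.support ⊆ σ.V) (hc : c ∈ w.support) (hd : d ∈ w.support)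
    (ha : a ∈ w.support) (hb : b ∈ w.support)
    (h3 : w.support.card = 3 → τ.mark w.support = σ.mark w.support)
    (h4 : w.support.card = 4 → τ = σ) : ({c, d} : Finset Pt3) = {a, b} := by
  have l2 := Finset.card_le_card (pair_subset hc hd)
  have l4 := Finset.card_le_card hw
  rw [Finset.card_pair h.ne] at l2
  rw [h.good.card] at l4
  obtain e | e | e : w.support.card = 2 ∨ w.support.card = 3 ∨ w.support.card = 4 := by omega
  · rw [← pair_eq_of_card_two hc hd h.ne e, ← pair_eq_of_card_two ha hb k.ne e]
  · rw [← h.ref_eq, ← k.ref_eq, ← h.good.mark_ref _ hw e (h.ref_eq ▸ pair_subset hc hd),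
      ← k.good.mark_ref _ kw e (k.ref_eq ▸ pair_subset ha hb), h3 e]
  · rw [← h.ref_eq, ← k.ref_eq, h4 e]

theorem card_insert_erase_le {α : Type*} [DecidableEq α] {s : Finset α} {z d : α} (hd : d ∈ s) :
    (insert z (s.erase d)).card ≤ s.card := by
  have := Finset.card_insert_le z (s.erase d)
  rw [Finset.card_erase_of_mem hd] at this
  have := Finset.card_pos.2 ⟨d, hd⟩
  omega

theorem card_insert_sdiff_lt {α : Type*} [DecidableEq α] {s : Finset α} {z c d : α} (hc : c ∈ s)
    (hd : d ∈ s) (hcd : c ≠ d) : (insert z (s \ {c, d})).card < s.card := by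
  have h1 := Finset.card_insert_le z (s \ {c, d})
  rw [Finset.card_sdiff_of_subset (pair_subset hc hd), Finset.card_pair hcd] at h1
  have h2 := Finset.card_le_card (pair_subset hc hd)
  rw [Finset.card_pair hcd] at h2
  omega

/-- A step is determined by the local data. When the two bisections keep different endpoints of
the same refinement edge, the point has equal weights at both, so that it lies in the new face,
which both children mark alike. -/
theorem Step.det {a b a' b' : BState} (h : Step a b) (h' : Step a' b') (e : a = a') : b = b' := by
  obtain ⟨τ, O, c, d, w, h, hO, hw, h0, hle, hd, hcO, hdO⟩ := h
  obtain ⟨σ, P, c', d', u, k, kP, kw, k0, kle, kd, kcP, kdP⟩ := h'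
  obtain ⟨rfl, e2, e3, e4⟩ := st_eq_iff.1 e
  have mem : ∀ v, 0 < w v → v ∈ w.support := fun v hv => Finsupp.mem_support_iff.2 hv.ne'
  have hds := mem d hd
  have hcs := mem c (hd.trans_le hle)
  have hzc : midpoint ℝ c d ≠ c := fun e => h.hz (by rw [e]; exact h.hc)
  have hzd : midpoint ℝ c d ≠ d := fun e => h.hz (by rw [e]; exact h.hd)
  have hsupp : w d < w c ∧ (split c d w).support = insert (midpoint ℝ c d) (w.support.erase d) ∨
      w c = w d ∧ (split c d w).support = insert (midpoint ℝ c d) (w.support \ {c, d}) := by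
    rcases hle.lt_or_eq with hlt | heq
    · exact Or.inl ⟨hlt, support_split_lt h0 hlt hd h.ne hzc hzd⟩
    · exact Or.inr ⟨heq.symm, support_split_eq h0 heq.symm hd h.ne hzc hzd⟩
  have hO' := old_generic (c := c) (fun h1 => h.hz (hO h1)) hdO (hsupp.imp (·.2) (·.2))
  have hpair := h.pair_det k hw kw hcs hds (mem c' (kd.trans_le kle)) (mem d' kd) e3 e4
  rcases pair_cases hpair h.ne with ⟨rfl, rfl⟩ | ⟨rfl, rfl⟩
  · refine st_eq_iff.2 ⟨rfl, ?_, ?_, ?_⟩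
    · rw [hO', e2, old_generic (c := c') (fun h1 => k.hz (kP h1)) kdP (hsupp.imp (·.2) (·.2))]
    · intro hs3
      rcases hsupp with ⟨hlt, hs⟩ | ⟨heq, hs⟩
      · have hz : midpoint ℝ c' d' ∈ (split c' d' w).support := by rw [hs]; simp
        have hc : c' ∈ (split c' d' w).support := by
          rw [hs]; exact Finset.mem_insert_of_mem (Finset.mem_erase.2 ⟨h.ne, hcs⟩)
        rw [h.mark_cut hz hc, k.mark_cut hz hc]
      · have h5 := card_insert_sdiff_lt (z := midpoint ℝ c' d') hcs hds h.ne
        rw [← hs, hs3] at h5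
        have l4 := Finset.card_le_card hw
        rw [h.good.card] at l4
        rw [e4 (by omega)]
    · intro hs4
      have h5 : 4 ≤ w.support.card := by
        rcases hsupp with ⟨-, hs⟩ | ⟨-, hs⟩
        · have := card_insert_erase_le (z := midpoint ℝ c' d') hds
          rwa [← hs, hs4] at this
        · have := (card_insert_sdiff_lt (z := midpoint ℝ c' d') hcs hds h.ne).le
          rwa [← hs, hs4] at this
      have l4 := Finset.card_le_card hw
      rw [h.good.card] at l4
      rw [e4 (by omega)]
  -- Opposite endpoints are kept: the point lies in the common face of the two children.
  · have heq : w d' = w c' := le_antisymm kle hle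
    rcases hsupp with ⟨hlt, -⟩ | ⟨-, hs⟩
    · exact absurd heq hlt.ne'
    have h5 := card_insert_sdiff_lt (z := midpoint ℝ d' c') hcs hds h.ne
    rw [← hs] at h5
    have l4 := Finset.card_le_card hw
    rw [h.good.card] at l4
    have hsc := split_comm d' c' w
    refine st_eq_iff.2 ⟨hsc, ?_, ?_, fun hs4 => absurd h5 (by omega)⟩
    · rw [hO', e2]
      have hs' : (split d' c' w).support = insert (midpoint ℝ c' d') (w.support \ {c', d'}) := by
        rw [hs, midpoint_comm, Finset.pair_comm]
      rw [old_generic (s := w.support) (c := c') (fun h1 => k.hz (kP h1)) kdP (Or.inr hs')]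
    · intro hs3
      have h6 : w.support.card = 4 := by omega
      have hV : w.support = τ.V := Finset.eq_of_subset_of_card_le hw (by rw [h6, h.good.card])
      rw [← e4 h6, hs, hV, h.new_eq]

/-- A step needs two old vertices in the carrier. -/
theorem Step.two_le {a b : BState} (h : Step a b) : 2 ≤ a.2.1.card := by
  obtain ⟨τ, O, c, d, w, h, hO, hw, h0, hle, hd, hcO, hdO⟩ := h
  have mem : ∀ v, 0 < w v → v ∈ w.support := fun v hv => Finsupp.mem_support_iff.2 hv.ne'
  have := Finset.card_le_card (pair_subset (Finset.mem_inter.2 ⟨mem c (hd.trans_le hle), hcO⟩)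
    (Finset.mem_inter.2 ⟨mem d hd, hdO⟩))
  rwa [Finset.card_pair h.ne] at this

open Relation in
/-- States with at most one old vertex are final, and a deterministic relation leads to at most one
final state. -/
theorem Step.confluent {a b b' : BState} (h : ReflTransGen Step a b) (h' : ReflTransGen Step a b')
    (hb : b.2.1.card ≤ 1) (hb' : b'.2.1.card ≤ 1) : b = b' := by
  have hn : ∀ {b b' : BState}, b.2.1.card ≤ 1 → ReflTransGen Step b b' → b = b' := by
    intro b b' hb h
    rcases h.cases_head with h | ⟨c, hc, -⟩
    · exact h
    · have := hc.two_le
      omega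
  rcases ReflTransGen.total_of_right_unique (fun _ _ _ h h' => h.det h' rfl) h h' with h | h
  · exact hn hb h
  · exact (hn hb' h).symm

open Relation in
/-- A bisection performs a step on the local data at each point of a child, or leaves them
unchanged. -/
theorem Bis.chain {τ : MTet} {c d : Pt3} (h : Bis τ c d) {O : Finset Pt3} (hJ : J τ O)
    (h2 : 2 ≤ O.card) {w : Pt3 →₀ ℝ} {x : Pt3} (hw : BRep τ.V w x) (hx : x ∈ (τ.child c).body) :
    BRep (τ.child c).V (split c d w) x ∧
      ReflTransGen Step (st τ O w) (st (τ.child c) (O.erase d) (split c d w)) := by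
  obtain ⟨hcO, hdO⟩ := hJ.mem h h2
  rw [MTet.body, h.child_V_half] at hx
  obtain ⟨hle, hrep⟩ := rep_half h.good.ai h.hc h.hd h.ne hw hx
  rw [h.child_V_half]
  refine ⟨hrep, ?_⟩
  rcases (hw.nonneg d).lt_or_eq with hd | hd
  · exact ReflTransGen.single ⟨τ, O, c, d, w, h, hJ.sub, hw.supp, hw.nonneg, hle, hd, hcO, hdO⟩
  -- If the weight of `d` vanishes, the carrier lies in the inherited face.
  · have hs : split c d w = w := by
      rw [split, min_eq_right hle, ← hd, zero_smul, add_zero]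
    have hdw : d ∉ w.support := fun h1 => Finsupp.mem_support_iff.1 h1 hd.symm
    have hsub : w.support ⊆ τ.V.erase d := Finset.subset_erase.2 ⟨hw.supp, hdw⟩
    rw [hs]
    have e : st τ O w = st (τ.child c) (O.erase d) w := by
      refine st_eq_iff.2 ⟨rfl, ?_, ?_, ?_⟩
      · rw [Finset.inter_erase, Finset.erase_eq_of_notMem]
        exact fun h1 => hdw (Finset.mem_of_mem_inter_left h1)
      · intro h3
        rw [Finset.eq_of_subset_of_card_le hsub (by rw [h.card_inh, h3]), h.mark_inh]
      · intro h4
        have := Finset.card_le_card hsub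
        rw [h4, h.card_inh] at this
        omega
    rw [e]

theorem Bis.body_child {τ : MTet} {c d : Pt3} (h : Bis τ c d) : (τ.child c).body ⊆ τ.body := by
  rw [MTet.body, h.child_V_half]
  exact hull_half_subset h.hc h.hd

open Relation in
/-- Three successive bisections of an unflagged tetrahedron lead to an unflagged one, and rewrite
local data to a final state. -/
theorem block {τ : MTet} (h : Good τ) (hf : τ.flag = false) {c₁ c₂ c₃ : Pt3} (h1 : c₁ ∈ τ.ref)
    (h2 : c₂ ∈ (τ.child c₁).ref) (h3 : c₃ ∈ ((τ.child c₁).child c₂).ref) :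
    Good (((τ.child c₁).child c₂).child c₃) ∧
    (((τ.child c₁).child c₂).child c₃).flag = false ∧
    (((τ.child c₁).child c₂).child c₃).body ⊆ τ.body ∧
    ∀ w x, BRep τ.V w x → x ∈ (((τ.child c₁).child c₂).child c₃).body →
      ∃ w' O', O'.card ≤ 1 ∧ BRep (((τ.child c₁).child c₂).child c₃).V w' x ∧
        ReflTransGen Step (st τ τ.V w) (st (((τ.child c₁).child c₂).child c₃) O' w') := by
  obtain ⟨d₁, b₁⟩ := h.exists_bis h1
  have g₁ := b₁.good_child
  obtain ⟨d₂, b₂⟩ := g₁.exists_bis h2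
  have g₂ := b₂.good_child
  obtain ⟨d₃, b₃⟩ := g₂.exists_bis h3
  have g₃ := b₃.good_child
  have j₀ := J.start h hf
  have k₀ : τ.V.card = 4 := h.card
  have j₁ := j₀.child b₁ (by omega)
  have k₁ := Finset.card_erase_of_mem (j₀.mem b₁ (by omega)).2
  have j₂ := j₁.child b₂ (by omega)
  have k₂ := Finset.card_erase_of_mem (j₁.mem b₂ (by omega)).2
  have k₃ := Finset.card_erase_of_mem (j₂.mem b₃ (by omega)).2
  refine ⟨g₃, ?_, b₃.body_child.trans (b₂.body_child.trans b₁.body_child), ?_⟩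
  · have a₁ := b₁.apex_child (by simp [hf])
    have p₁ := a₁.planar g₁
    rw [← Bool.not_eq_true, child_flag]
    -- The first child has an apex, hence is planar. If it is unflagged, the second is flagged; if it
    -- is flagged, the second is not planar. In neither case is the third flagged.
    rintro ⟨p₂, f₂⟩
    have n₂ : ¬ (τ.child c₁).flag = false := by
      intro f₁
      have := (child_flag (c := c₂)).2 ⟨p₁, f₁⟩
      rw [f₂] at this
      simp at this
    exact b₂.not_planar_child (by simpa using n₂) p₂
  · intro w x hw hx
    obtain ⟨r₁, s₁⟩ := b₁.chain j₀ (by omega) hw (b₂.body_child (b₃.body_child hx))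
    obtain ⟨r₂, s₂⟩ := b₂.chain j₁ (by omega) r₁ (b₃.body_child hx)
    obtain ⟨r₃, s₃⟩ := b₃.chain j₂ (by omega) r₂ hx
    exact ⟨_, _, by omega, r₃, (s₁.trans s₂).trans s₃⟩

/-! ### Uniform refinement -/

/-- `τ` and `σ` are compatible at `x`: the barycentric coordinates of `x` coincide, if the carrier
of `x` is a face then both mark it alike, and if it is three-dimensional then `τ = σ`. -/
def Agree (τ σ : MTet) (x : Pt3) : Prop :=
  ∃ w, BRep τ.V w x ∧ BRep σ.V w x ∧
    (w.support.card = 3 → τ.mark w.support = σ.mark w.support) ∧ (w.support.card = 4 → τ = σ)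

/-- The marked form of conformity that survives three uniform bisections. -/
structure Coherent (T : Set MTet) : Prop where
  good : ∀ τ ∈ T, Good τ
  flag : ∀ τ ∈ T, τ.flag = false
  agree : ∀ τ ∈ T, ∀ σ ∈ T, ∀ x, x ∈ τ.body → x ∈ σ.body → Agree τ σ x

/-- The set of all children of members of `T`. -/
def next (T : Set MTet) : Set MTet := {σ | ∃ τ ∈ T, ∃ c ∈ τ.ref, σ = τ.child c}

theorem Coherent.next_three {T : Set MTet} (h : Coherent T) : Coherent (next (next (next T))) := by
  refine ⟨?_, ?_, ?_⟩
  · rintro _ ⟨_, ⟨_, ⟨τ, hτ, c₁, h1, rfl⟩, c₂, h2, rfl⟩, c₃, h3, rfl⟩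
    exact (block (h.good τ hτ) (h.flag τ hτ) h1 h2 h3).1
  · rintro _ ⟨_, ⟨_, ⟨τ, hτ, c₁, h1, rfl⟩, c₂, h2, rfl⟩, c₃, h3, rfl⟩
    exact (block (h.good τ hτ) (h.flag τ hτ) h1 h2 h3).2.1
  · rintro _ ⟨_, ⟨_, ⟨τ, hτ, c₁, h1, rfl⟩, c₂, h2, rfl⟩, c₃, h3, rfl⟩
      _ ⟨_, ⟨_, ⟨σ, hσ, e₁, k1, rfl⟩, e₂, k2, rfl⟩, e₃, k3, rfl⟩ x hx kx
    obtain ⟨-, -, hsub, hch⟩ := block (h.good τ hτ) (h.flag τ hτ) h1 h2 h3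
    obtain ⟨-, -, ksub, kch⟩ := block (h.good σ hσ) (h.flag σ hσ) k1 k2 k3
    obtain ⟨w, hw, kw, m3, m4⟩ := h.agree τ hτ σ hσ x (hsub hx) (ksub kx)
    obtain ⟨w', O', hO', hw', hs⟩ := hch w x hw hx
    obtain ⟨u', P', hP', ku', ks⟩ := kch w x kw kx
    have e : st τ τ.V w = st σ σ.V w := by
      refine st_eq_iff.2 ⟨rfl, ?_, m3, m4⟩
      rw [Finset.inter_eq_left.2 hw.supp, Finset.inter_eq_left.2 kw.supp]
    rw [← e] at ks
    have key := Step.confluent hs ks ((Finset.card_le_card Finset.inter_subset_right).trans hO')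
      ((Finset.card_le_card Finset.inter_subset_right).trans hP')
    obtain ⟨rfl, -, m3', m4'⟩ := st_eq_iff.1 key
    exact ⟨w', hw', ku', m3', m4'⟩

theorem bRep_vertex {V : Finset Pt3} {v : Pt3} (hv : v ∈ V) : BRep V (Finsupp.single v 1) v := by
  refine ⟨?_, ?_, ?_, ?_⟩
  · exact Finsupp.support_single_subset.trans (Finset.singleton_subset_iff.2 hv)
  · intro u
    rw [Finsupp.single_apply]
    split_ifs <;> norm_num
  · rw [mass_single]
  · rw [bary_single, one_smul]

/-- A coherent family has no hanging nodes: the carrier of a vertex of `σ` is that vertex alone, and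
it is also the carrier with respect to `τ`. -/
theorem Coherent.vertex {T : Set MTet} (h : Coherent T) {τ σ : MTet} (hτ : τ ∈ T) (hσ : σ ∈ T) {v : Pt3}
    (hv : v ∈ σ.V) (hb : v ∈ τ.body) : v ∈ τ.V := by
  obtain ⟨w, hw, kw, -, -⟩ := h.agree τ hτ σ hσ v hb (subset_convexHull ℝ _ hv)
  have := kw.unique (h.good σ hσ).ai (bRep_vertex hv)
  subst this
  exact hw.supp (by simp)

theorem Coherent.base {T : Set MTet} (h : ConforminglyMarked T) (hf : ∀ τ ∈ T, τ.flag = false) :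
    Coherent T := by
  obtain ⟨⟨-, hval, -⟩, hconf, hmark⟩ := h
  have hgood : ∀ τ ∈ T, Good τ := by
    intro τ hτ
    obtain ⟨h1, h2, h3, h4, h5⟩ := hval τ hτ
    exact ⟨h1, ai_iff.2 h2, h3, h4, fun G hG h => (h5 G hG h).1, fun G hG h => (h5 G hG h).2.1,
      fun G hG h => (h5 G hG h).2.2, fun h => by simp [hf τ hτ] at h⟩
  refine ⟨hgood, hf, ?_⟩
  intro τ hτ σ hσ x hx kx
  by_cases e : τ = σ
  · subst e
    obtain ⟨w, hw⟩ := mem_hull_iff.1 hx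
    exact ⟨w, hw, hw, fun _ => rfl, fun _ => rfl⟩
  · obtain ⟨f, hf3, hfτ, hfσ, hxf⟩ : ∃ f : Finset Pt3, f.card ≤ 3 ∧ f ⊆ τ.V ∧ f ⊆ σ.V ∧
        x ∈ convexHull ℝ (f : Set Pt3) := by
      have hx2 : x ∈ τ.body ∩ σ.body := ⟨hx, kx⟩
      rcases hconf τ hτ σ hσ e with h | ⟨v, h1, h2, h⟩ | ⟨f, h0, h1, h2, h⟩ | ⟨f, h0, h1, h2, h⟩
      · rw [h] at hx2; exact hx2.elim
      · rw [h] at hx2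
        refine ⟨{v}, by simp, Finset.singleton_subset_iff.2 h1, Finset.singleton_subset_iff.2 h2, ?_⟩
        rw [Finset.coe_singleton, convexHull_singleton]
        exact hx2
      · exact ⟨f, by omega, h1, h2, h ▸ hx2⟩
      · exact ⟨f, by omega, h1, h2, h ▸ hx2⟩
    obtain ⟨w, hw⟩ := mem_hull_iff.1 hxf
    refine ⟨w, ⟨hw.supp.trans hfτ, hw.nonneg, hw.mass_eq, hw.bary_eq⟩,
      ⟨hw.supp.trans hfσ, hw.nonneg, hw.mass_eq, hw.bary_eq⟩,
      fun h3 => hmark τ hτ σ hσ _ h3 (hw.supp.trans hfτ) (hw.supp.trans hfσ), fun h4 => ?_⟩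
    have := Finset.card_le_card hw.supp
    omega

/-- The `n`-fold uniform refinement of `T₀`. -/
def level (T₀ : Set MTet) (n : ℕ) : Set MTet := next^[n] T₀

theorem level_succ (T₀ : Set MTet) (n : ℕ) : level T₀ (n + 1) = next (level T₀ n) :=
  Function.iterate_succ_apply' _ _ _

section levels
variable {T₀ : Set MTet} (h : Coherent T₀)
include h

theorem level_inv (m : ℕ) : Coherent (level T₀ (3 * m)) := by
  induction m with
  | zero => exact h
  | succ m ih =>
    rw [show 3 * (m + 1) = 3 * m + 1 + 1 + 1 by ring, level_succ, level_succ, level_succ]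
    exact ih.next_three

theorem level_good (n : ℕ) : ∀ τ ∈ level T₀ n, Good τ := by
  induction n with
  | zero => exact h.good
  | succ n ih =>
    rw [level_succ]
    rintro _ ⟨τ, hτ, c, hc, rfl⟩
    obtain ⟨d, b⟩ := (ih τ hτ).exists_bis hc
    exact b.good_child

/-- Vertices persist under uniform refinement. -/
theorem level_vertex {n N : ℕ} (hn : n ≤ N) : ∀ τ ∈ level T₀ n, ∀ v ∈ τ.V,
    ∃ σ ∈ level T₀ N, v ∈ σ.V := by
  induction hn with
  | refl => exact fun τ hτ v hv => ⟨τ, hτ, hv⟩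
  | @step N _ ih =>
    intro τ hτ v hv
    obtain ⟨σ, hσ, hvσ⟩ := ih τ hτ v hv
    have g := level_good h N σ hσ
    obtain ⟨c, hc⟩ : σ.ref.Nonempty := by rw [← Finset.card_pos, g.ref_card]; norm_num
    obtain ⟨d, b⟩ := g.exists_bis hc
    rw [level_succ]
    by_cases hvd : v = d
    · refine ⟨σ.child d, ⟨σ, hσ, d, by rw [b.ref_eq]; simp, rfl⟩, ?_⟩
      rw [b.symm.child_V, hvd]
      exact Finset.mem_insert_of_mem (Finset.mem_erase.2 ⟨b.ne.symm, b.hd⟩)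
    · refine ⟨σ.child c, ⟨σ, hσ, c, hc, rfl⟩, ?_⟩
      rw [b.child_V]
      exact Finset.mem_insert_of_mem (Finset.mem_erase.2 ⟨hvd, hvσ⟩)

end levels

/-! ### Local refinement -/

/-- Every member of `X` is a descendant of `T₀` by as many bisections as its generation says. -/
def Lev (T₀ X : Set MTet) : Prop := ∀ τ ∈ X, τ ∈ level T₀ τ.gen

theorem mem_bisect {T S : Set MTet} {σ : MTet} : σ ∈ bisectTets T S ↔
    (σ ∈ T ∧ σ ∉ S) ∨ ∃ τ ∈ S, ∃ c ∈ τ.ref, σ = τ.child c := by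
  simp [bisectTets]

theorem Lev.bisect {T₀ X S : Set MTet} (h : Lev T₀ X) (hS : S ⊆ X) : Lev T₀ (bisectTets X S) := by
  intro σ hσ
  rcases mem_bisect.1 hσ with h1 | ⟨τ, hτ, c, hc, rfl⟩
  · exact h σ h1.1
  · change _ ∈ level T₀ (τ.gen + 1)
    rw [level_succ]
    exact ⟨τ, h τ (hS hτ), c, hc, rfl⟩

theorem Lev.iterate {T₀ X : Set MTet} (h : Lev T₀ X) (n : ℕ) : Lev T₀ (conformStep^[n] X) := by
  induction n with
  | zero => exact h
  | succ n ih =>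
    rw [Function.iterate_succ_apply']
    exact ih.bisect (Set.sep_subset _ _)

/-- Also in the junk case of `refineToConformity` its value is an iterate of `conformStep`. -/
theorem refine_eq (X : Set MTet) : ∃ n, refineToConformity X = conformStep^[n] X := by
  unfold refineToConformity
  split_ifs with h
  · exact ⟨_, rfl⟩
  · exact ⟨0, rfl⟩

/-- A tetrahedron of generation `3 * m` has no hanging node in a mesh of generations at most
`3 * m`: all vertices of that mesh are vertices of the uniform refinement of level `3 * m`, to which
the tetrahedron belongs and which has no hanging nodes. -/
theorem conform_gen {T₀ X : Set MTet} (h0 : Coherent T₀) (h : Lev T₀ X) {m : ℕ}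
    (hX : ∀ τ ∈ X, τ.gen ≤ 3 * m) : ∀ τ ∈ conformStep X, τ.gen ≤ 3 * m := by
  intro σ hσ
  rcases mem_bisect.1 hσ with h1 | ⟨τ, ⟨hτ, ρ, hρ, v, hv, hvb, hvτ⟩, c, hc, rfl⟩
  · exact hX σ h1.1
  · change τ.gen + 1 ≤ 3 * m
    by_contra hlt
    have hg : τ.gen = 3 * m := by have := hX τ hτ; omega
    obtain ⟨π, hπ, hvπ⟩ := level_vertex h0 (hX ρ hρ) ρ (h ρ hρ) v hv
    exact hvτ ((level_inv h0 m).vertex (hg ▸ h τ hτ) hπ hvπ hvb)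

theorem iterate_gen {T₀ X : Set MTet} (h0 : Coherent T₀) (h : Lev T₀ X) {m : ℕ}
    (hX : ∀ τ ∈ X, τ.gen ≤ 3 * m) (n : ℕ) : ∀ τ ∈ conformStep^[n] X, τ.gen ≤ 3 * m := by
  induction n with
  | zero => exact hX
  | succ n ih =>
    rw [Function.iterate_succ_apply']
    exact conform_gen h0 (h.iterate n) ih

/-- Let `T₀` be a conformingly-marked tetrahedral mesh with no flagged
tetrahedron and all generations `0`, and let `T_{k+1} = LocalRefine(T_k, S_k)` for arbitrary
`S_k ⊆ T_k`.  If for some integer `m` the maximum generation of a tetrahedron in `T_k` is less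
than `3m`, then the maximum generation of a tetrahedron in `T_{k+1}` is at most `3m`. -/
theorem localRefine_generation_increment_bound
    (T S : ℕ → Set MTet)
    (h0 : ConforminglyMarked (T 0))
    (hflag : ∀ τ ∈ T 0, τ.flag = false)
    (hgen : ∀ τ ∈ T 0, τ.gen = 0)
    (hS : ∀ k, S k ⊆ T k)
    (hT : ∀ k, T (k + 1) = localRefine (T k) (S k)) :
    ∀ k m : ℕ, (∀ τ ∈ T k, τ.gen < 3 * m) → ∀ τ ∈ T (k + 1), τ.gen ≤ 3 * m := by
  have hinv : Coherent (T 0) := Coherent.base h0 hflag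
  have hlev : ∀ k, Lev (T 0) (T k) := by
    intro k
    induction k with
    | zero => exact fun τ hτ => by rw [hgen τ hτ]; exact hτ
    | succ k ih =>
      obtain ⟨n, hn⟩ := refine_eq (bisectTets (T k) (S k))
      rw [hT, localRefine, hn]
      exact (ih.bisect (hS k)).iterate n
  intro k m hm
  obtain ⟨n, hn⟩ := refine_eq (bisectTets (T k) (S k))
  rw [hT, localRefine, hn]
  refine iterate_gen hinv ((hlev k).bisect (hS k)) ?_ n
  intro σ hσ
  rcases mem_bisect.1 hσ with h1 | ⟨τ, hτ, c, -, rfl⟩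
  · exact (hm σ h1.1).le
  · exact hm τ (hS k hτ)
end
end

section
/- A tetrahedral mesh without hanging nodes need not be conforming: there exists a finite set of tetrahedra in ℝ³ with pairwise disjoint interiors such that no vertex of any tetrahedron of the set is a hanging node of another tetrahedron of the set, and yet the mesh is not conforming, i.e., some two distinct tetrahedra of the set intersect in a set which is not a common face, a common edge, a common vertex, or empty. -/
/-!
Take two tetrahedra on opposite sides of the plane `z = 0`, each meeting that plane in exactly one
edge, and let these two edges cross at the origin, which is the midpoint of both. The plane
separates the interiors. The tetrahedra share no vertex, and since the planar edge of one contains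
no endpoint of the other there is no hanging node; but the intersection contains the origin, so it
is nonempty, while every other case of conformity would need a common vertex. The containments
`|y| ≤ z` on the upper tetrahedron (`upper_bounds`) and `|x| ≤ -z` on the lower one
(`lower_bounds`) carry both the separation and the absence of hanging nodes.
-/

noncomputable section

/-- An unmarked mesh is conforming if the intersection of any two distinct tetrahedra is either
empty, a common vertex, a common edge, or a common face. -/
def TetConforming (T : Set (Finset Pt3)) : Prop :=
  ∀ V ∈ T, ∀ W ∈ T, V ≠ W →
    convexHull ℝ (V : Set Pt3) ∩ convexHull ℝ (W : Set Pt3) = ∅ ∨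
    (∃ v : Pt3, v ∈ V ∧ v ∈ W ∧
      convexHull ℝ (V : Set Pt3) ∩ convexHull ℝ (W : Set Pt3) = {v}) ∨
    (∃ e : Finset Pt3, e.card = 2 ∧ e ⊆ V ∧ e ⊆ W ∧
      convexHull ℝ (V : Set Pt3) ∩ convexHull ℝ (W : Set Pt3) = convexHull ℝ (e : Set Pt3)) ∨
    (∃ f : Finset Pt3, f.card = 3 ∧ f ⊆ V ∧ f ⊆ W ∧
      convexHull ℝ (V : Set Pt3) ∩ convexHull ℝ (W : Set Pt3) = convexHull ℝ (f : Set Pt3))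

/-- The vertices of the tetrahedron above the plane `z = 0`; the first two span its edge in that
plane, along the `x`-axis. -/
def upperVertex : Fin 4 → Pt3 :=
  ![!₂[1, 0, 0], !₂[-1, 0, 0], !₂[0, 1, 1], !₂[0, -1, 1]]

/-- The vertices of the tetrahedron below the plane `z = 0`; the first two span its edge in that
plane, along the `y`-axis. -/
def lowerVertex : Fin 4 → Pt3 :=
  ![!₂[0, 1, 0], !₂[0, -1, 0], !₂[1, 0, -1], !₂[-1, 0, -1]]

lemma affineIndependent_upperVertex : AffineIndependent ℝ upperVertex := by
  rw [affineIndependent_iff_of_fintype]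
  intro w hw h
  rw [Finset.weightedVSub_eq_linear_combination _ hw] at h
  have h0 := congrArg (fun v : Pt3 => v 0) h
  have h1 := congrArg (fun v : Pt3 => v 1) h
  have h2 := congrArg (fun v : Pt3 => v 2) h
  simp [Fin.sum_univ_four, upperVertex] at hw h0 h1 h2
  intro i
  fin_cases i <;> simp <;> linarith

lemma affineIndependent_lowerVertex : AffineIndependent ℝ lowerVertex := by
  rw [affineIndependent_iff_of_fintype]
  intro w hw h
  rw [Finset.weightedVSub_eq_linear_combination _ hw] at h
  have h0 := congrArg (fun v : Pt3 => v 0) h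
  have h1 := congrArg (fun v : Pt3 => v 1) h
  have h2 := congrArg (fun v : Pt3 => v 2) h
  simp [Fin.sum_univ_four, lowerVertex] at hw h0 h1 h2
  intro i
  fin_cases i <;> simp <;> linarith

/-- The vertex set of the upper tetrahedron. -/
def upperTet : Finset Pt3 := Finset.univ.map ⟨_, affineIndependent_upperVertex.injective⟩

/-- The vertex set of the lower tetrahedron. -/
def lowerTet : Finset Pt3 := Finset.univ.map ⟨_, affineIndependent_lowerVertex.injective⟩

lemma coe_upperTet : (upperTet : Set Pt3) = Set.range upperVertex := by
  simp [upperTet]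

lemma coe_lowerTet : (lowerTet : Set Pt3) = Set.range lowerVertex := by
  simp [lowerTet]

lemma upper_bounds {x : Pt3} (hx : x ∈ convexHull ℝ (upperTet : Set Pt3)) :
    x 1 ≤ x 2 ∧ -x 1 ≤ x 2 := by
  have hc : Convex ℝ {x : Pt3 | x 1 ≤ x 2 ∧ -x 1 ≤ x 2} := by
    rintro x ⟨hx1, hx2⟩ y ⟨hy1, hy2⟩ a b ha hb -
    simp only [Set.mem_ofPred_eq, PiLp.add_apply, PiLp.smul_apply, smul_eq_mul]
    constructor <;> nlinarith
  refine convexHull_min ?_ hc hx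
  rw [coe_upperTet]
  rintro _ ⟨i, rfl⟩
  fin_cases i <;> simp [upperVertex]

lemma lower_bounds {x : Pt3} (hx : x ∈ convexHull ℝ (lowerTet : Set Pt3)) :
    x 0 ≤ -x 2 ∧ -x 0 ≤ -x 2 := by
  have hc : Convex ℝ {x : Pt3 | x 0 ≤ -x 2 ∧ -x 0 ≤ -x 2} := by
    rintro x ⟨hx1, hx2⟩ y ⟨hy1, hy2⟩ a b ha hb -
    simp only [Set.mem_ofPred_eq, PiLp.add_apply, PiLp.smul_apply, smul_eq_mul]
    constructor <;> nlinarith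
  refine convexHull_min ?_ hc hx
  rw [coe_lowerTet]
  rintro _ ⟨i, rfl⟩
  fin_cases i <;> simp [lowerVertex]

lemma zero_mem_upper : (0 : Pt3) ∈ convexHull ℝ (upperTet : Set Pt3) := by
  have h := (convex_convexHull ℝ (upperTet : Set Pt3)).midpoint_mem
    (subset_convexHull ℝ _ (coe_upperTet ▸ Set.mem_range_self 0))
    (subset_convexHull ℝ _ (coe_upperTet ▸ Set.mem_range_self 1))
  convert h
  ext i
  fin_cases i <;> simp [upperVertex, midpoint_eq_smul_add]

lemma zero_mem_lower : (0 : Pt3) ∈ convexHull ℝ (lowerTet : Set Pt3) := by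
  have h := (convex_convexHull ℝ (lowerTet : Set Pt3)).midpoint_mem
    (subset_convexHull ℝ _ (coe_lowerTet ▸ Set.mem_range_self 0))
    (subset_convexHull ℝ _ (coe_lowerTet ▸ Set.mem_range_self 1))
  convert h
  ext i
  fin_cases i <;> simp [lowerVertex, midpoint_eq_smul_add]

lemma lowerVertex_notMem_upper {x : Pt3} (hx : x ∈ lowerTet) :
    x ∉ convexHull ℝ (upperTet : Set Pt3) := by
  intro h
  have hb := upper_bounds h
  rw [← Finset.mem_coe, coe_lowerTet] at hx
  obtain ⟨i, rfl⟩ := hx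
  fin_cases i <;> simp [lowerVertex] at hb <;> linarith

lemma upperVertex_notMem_lower {x : Pt3} (hx : x ∈ upperTet) :
    x ∉ convexHull ℝ (lowerTet : Set Pt3) := by
  intro h
  have hb := lower_bounds h
  rw [← Finset.mem_coe, coe_upperTet] at hx
  obtain ⟨i, rfl⟩ := hx
  fin_cases i <;> simp [upperVertex] at hb <;> linarith

lemma notMem_upper_of_mem_lower {x : Pt3} (hx : x ∈ lowerTet) : x ∉ upperTet :=
  fun h => lowerVertex_notMem_upper hx (subset_convexHull ℝ _ h)

lemma interior_inter_interior :
    interior (convexHull ℝ (upperTet : Set Pt3)) ∩ interior (convexHull ℝ (lowerTet : Set Pt3))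
      = ∅ := by
  have hU : convexHull ℝ (upperTet : Set Pt3) ⊆ {x : Pt3 | 0 ≤ x 2} := fun x hx => by
    have := upper_bounds hx
    simp only [Set.mem_ofPred_eq]
    linarith
  have hL : convexHull ℝ (lowerTet : Set Pt3) ⊆ {x : Pt3 | x 2 ≤ 0} := fun x hx => by
    have := lower_bounds hx
    simp only [Set.mem_ofPred_eq]
    linarith
  rw [Set.eq_empty_iff_forall_notMem]
  rintro x ⟨hxU, hxL⟩
  have h1 := interior_mono hU hxU
  rw [interior_halfSpace, Set.mem_ofPred_eq] at h1
  have h2 : x 2 ≤ 0 := hL (interior_subset hxL)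
  exact absurd h1 h2.not_gt

/-- A tetrahedral mesh without hanging nodes need not be conforming: there is a
finite set of tetrahedra in `ℝ³` (given by 4-element affinely independent vertex sets) with
pairwise disjoint interiors, such that no vertex of any tetrahedron of the set is a hanging node
of another tetrahedron of the set (every vertex of a tetrahedron of the set lying in a
tetrahedron of the set is a vertex of the latter), and yet the mesh is not conforming. -/
theorem exists_nonconforming_mesh_without_hanging_nodes :
    ∃ T : Set (Finset Pt3), T.Finite ∧
      (∀ V ∈ T, V.card = 4 ∧ AffineIndependent ℝ (fun p : (V : Set Pt3) => (p : Pt3))) ∧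
      (∀ V ∈ T, ∀ W ∈ T, V ≠ W →
        interior (convexHull ℝ (V : Set Pt3)) ∩ interior (convexHull ℝ (W : Set Pt3)) = ∅) ∧
      (∀ V ∈ T, ∀ W ∈ T, ∀ ν ∈ W, ν ∈ convexHull ℝ (V : Set Pt3) → ν ∈ V) ∧
      ¬ TetConforming T := by
  refine ⟨{upperTet, lowerTet}, by simp, ?_, ?_, ?_, ?_⟩
  · rintro V (rfl | rfl)
    · refine ⟨by simp [upperTet], ?_⟩
      rw [coe_upperTet]
      exact affineIndependent_upperVertex.range
    · refine ⟨by simp [lowerTet], ?_⟩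
      rw [coe_lowerTet]
      exact affineIndependent_lowerVertex.range
  · rintro V (rfl | rfl) W (rfl | rfl) hne
    · exact absurd rfl hne
    · exact interior_inter_interior
    · rw [Set.inter_comm]
      exact interior_inter_interior
    · exact absurd rfl hne
  · rintro V (rfl | rfl) W (rfl | rfl) ν hν h
    · exact hν
    · exact absurd h (lowerVertex_notMem_upper hν)
    · exact absurd h (upperVertex_notMem_lower hν)
    · exact hν
  · intro hconf
    have hne : upperTet ≠ lowerTet := by
      intro h
      have hmem : lowerVertex 0 ∈ lowerTet := by
        rw [← Finset.mem_coe, coe_lowerTet]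
        exact Set.mem_range_self 0
      exact notMem_upper_of_mem_lower hmem (h ▸ hmem)
    rcases hconf upperTet (by simp) lowerTet (by simp) hne with
      h | ⟨v, hvU, hvL, -⟩ | ⟨e, he, heU, heL, -⟩ | ⟨f, hf, hfU, hfL, -⟩
    · exact Set.eq_empty_iff_forall_notMem.mp h 0 ⟨zero_mem_upper, zero_mem_lower⟩
    · exact notMem_upper_of_mem_lower hvL hvU
    · obtain ⟨v, hv⟩ : e.Nonempty := Finset.card_pos.mp (by omega)
      exact notMem_upper_of_mem_lower (heL hv) (heU hv)
    · obtain ⟨v, hv⟩ : f.Nonempty := Finset.card_pos.mp (by omega)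
      exact notMem_upper_of_mem_lower (hfL hv) (hfU hv)
end
end
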